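/- Under Assumptions A1, A2 and A3, with probability one, for every ε > 0 and every x ∈ ℝ^d, limsup_{n→∞} sup_{y ∈ B(x,ε)} g_n(y) ≤ sup_{y ∈ B(x,ε)} f(y). -/

import Mathlib

open MeasureTheory Filter Metric
open scoped Topology ENNReal NNReal

noncomputable def kb {d : ℕ} (K : EuclideanSpace ℝ (Fin d) → ℝ) (b : ℝ)
    (x : EuclideanSpace ℝ (Fin d)) : ℝ :=
  (b ^ d)⁻¹ * K (b⁻¹ • x)

def natFilt {Ω : Type*} {d : ℕ} (X : ℕ → Ω → EuclideanSpace ℝ (Fin d)) (n : ℕ) :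
    MeasurableSpace Ω :=
  ⨆ i ∈ Finset.Icc 1 n, MeasurableSpace.comap (X i) inferInstance

namespace Midas

abbrev EE (d : ℕ) := EuclideanSpace ℝ (Fin d)

/-- variance factor -/
noncomputable def Vf (η : ℝ) (d : ℕ) (lam b : ℕ → ℝ) (n : ℕ) : ℝ :=
  if 1/2 ≤ η then lam n ^ (-(2*η-1)) * (b n ^ d)⁻¹ else b n ^ (-(2*(d:ℝ)*(1-η)))

structure Par (d : ℕ) (η : ℝ) (f q0 K : EE d → ℝ) (γ b lam : ℕ → ℝ) where
  F : ℝ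
  Q : ℝ
  Km : ℝ
  L : ℝ
  rK : ℝ
  CK : ℝ
  Cg : ℝ
  c : ℝ
  N : ℕ
  hd : 1 ≤ d
  hη : 0 < η
  hη1 : η < 1
  f0 : ∀ x, 0 ≤ f x
  fint : (∫ x, f x) = 1
  fInt : Integrable f
  fF : ∀ x, f x ≤ F
  fcont : Continuous f
  q00 : ∀ x, 0 ≤ q0 x
  q0int : (∫ x, q0 x) = 1
  q0Int : Integrable q0
  q0Q : ∀ x, q0 x ≤ Q
  q0cont : Continuous q0
  hc : 0 < c
  hfq : ∀ x, c * f x ≤ q0 x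
  K0 : ∀ x, 0 ≤ K x
  Kint : (∫ x, K x) = 1
  KKm : ∀ x, K x ≤ Km
  L0 : 0 ≤ L
  Klip : ∀ x y, |K x - K y| ≤ L * ‖x - y‖
  Kpos : 0 < K 0
  rKpos : 0 < rK
  CKpos : 0 < CK
  Ktail : ∀ x, (1 + ‖x‖ ^ ((d : ℝ) + rK)) * K x ≤ CK
  γpos : ∀ n, 0 < γ n
  bpos : ∀ n, 0 < b n
  lpos : ∀ n, 0 < lam n
  γanti : Antitone γ
  γ0 : Tendsto γ atTop (𝓝 0)
  banti : Antitone b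
  b0 : Tendsto b atTop (𝓝 0)
  lanti : Antitone lam
  l0 : Tendsto lam atTop (𝓝 0)
  N1 : 1 ≤ N
  γN : ∀ n, N ≤ n → γ n ≤ 1/2
  lN : ∀ n, N ≤ n → lam n ≤ 1/2
  bN : ∀ n, N ≤ n → b n ≤ 1
  γstep : ∀ n, N ≤ n → γ n * (1 - γ (n+1)) ≤ γ (n+1)
  Cgpos : 0 < Cg
  hCg : ∀ n : ℕ, 1 ≤ n → ((n : ℝ))⁻¹ ≤ Cg * γ n
  rateB : Tendsto (fun n : ℕ => γ n * Real.log n / (lam n * b n ^ d)) atTop (𝓝 0)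
  rateV : Tendsto (fun n : ℕ => (n:ℝ) * γ n ^ 2 * Real.log n * Vf η d lam b n
      / lam n ^ (2 * (1 - η))) atTop (𝓝 0)

section kbl
variable {d : ℕ} {η : ℝ} {f q0 K : EE d → ℝ} {γ b lam : ℕ → ℝ}

lemma Par.Kcont (P : Par d η f q0 K γ b lam) : Continuous K := by
  have : LipschitzWith (Real.toNNReal P.L) K := by
    apply LipschitzWith.of_dist_le_mul
    intro x y
    rw [Real.dist_eq, dist_eq_norm, Real.coe_toNNReal _ P.L0]
    exact P.Klip x y
  exact this.continuous

lemma Par.KInt (P : Par d η f q0 K γ b lam) : Integrable K := by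
  by_contra h
  have := P.Kint
  rw [integral_undef h] at this
  norm_num at this

lemma Par.Kmpos (P : Par d η f q0 K γ b lam) : 0 < P.Km := lt_of_lt_of_le P.Kpos (P.KKm 0)

lemma kb_nonneg (P : Par d η f q0 K γ b lam) {β : ℝ} (hβ : 0 < β) (x : EE d) : 0 ≤ kb K β x :=
  mul_nonneg (by positivity) (P.K0 _)

lemma kb_le (P : Par d η f q0 K γ b lam) {β : ℝ} (hβ : 0 < β) (x : EE d) :
    kb K β x ≤ P.Km / β ^ d := by
  rw [kb, div_eq_inv_mul]
  gcongr
  exact P.KKm _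

lemma kb_cont (P : Par d η f q0 K γ b lam) (β : ℝ) : Continuous (kb K β) := by
  have := P.Kcont
  unfold kb
  fun_prop

lemma kb_int (P : Par d η f q0 K γ b lam) {β : ℝ} (hβ : 0 < β) : ∫ x, kb K β x = 1 := by
  unfold kb
  rw [integral_const_mul, Measure.integral_comp_inv_smul]
  simp only [finrank_euclideanSpace, Fintype.card_fin, P.Kint, smul_eq_mul, mul_one]
  rw [abs_of_pos (by positivity)]
  field_simp

lemma kb_Int (P : Par d η f q0 K γ b lam) {β : ℝ} (hβ : 0 < β) : Integrable (kb K β) := by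
  by_contra h
  have := kb_int P hβ
  rw [integral_undef h] at this
  norm_num at this

lemma kb_int_sub (P : Par d η f q0 K γ b lam) {β : ℝ} (hβ : 0 < β) (x : EE d) :
    ∫ y, kb K β (x - y) = 1 := by
  rw [integral_sub_left_eq_self (fun y => kb K β y) volume x]
  exact kb_int P hβ

lemma kb_int_sub' (P : Par d η f q0 K γ b lam) {β : ℝ} (hβ : 0 < β) (x : EE d) :
    ∫ y, kb K β (y - x) = 1 := by
  rw [integral_sub_right_eq_self (fun y => kb K β y)]
  exact kb_int P hβ

lemma kb_Int_sub (P : Par d η f q0 K γ b lam) {β : ℝ} (hβ : 0 < β) (x : EE d) :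
    Integrable (fun y => kb K β (x - y)) := (kb_Int P hβ).comp_sub_left x

lemma kb_Int_sub' (P : Par d η f q0 K γ b lam) {β : ℝ} (hβ : 0 < β) (x : EE d) :
    Integrable (fun y => kb K β (y - x)) := (kb_Int P hβ).comp_sub_right x

lemma kb_lip (P : Par d η f q0 K γ b lam) {β : ℝ} (hβ : 0 < β) (x y : EE d) :
    |kb K β x - kb K β y| ≤ P.L / β ^ (d+1) * ‖x - y‖ := by
  unfold kb
  rw [← mul_sub, abs_mul, abs_of_pos (by positivity : 0 < (β^d)⁻¹)]
  have := P.Klip (β⁻¹ • x) (β⁻¹ • y)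
  rw [← smul_sub, norm_smul, Real.norm_of_nonneg (by positivity)] at this
  calc _ ≤ (β^d)⁻¹ * (P.L * (β⁻¹ * ‖x - y‖)) := by gcongr
    _ = _ := by field_simp; ring

lemma kb_tail (P : Par d η f q0 K γ b lam) {β δ : ℝ} (hβ : 0 < β) (hδ : 0 < δ) (x : EE d)
    (hx : δ ≤ ‖x‖) : kb K β x ≤ P.CK * β ^ P.rK / δ ^ ((d:ℝ) + P.rK) := by
  have h1 := P.Ktail (β⁻¹ • x)
  rw [norm_smul, Real.norm_of_nonneg (by positivity)] at h1
  have h2 : (β⁻¹ * δ) ^ ((d:ℝ) + P.rK) ≤ (β⁻¹ * ‖x‖) ^ ((d:ℝ) + P.rK) := by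
    have := P.rKpos
    gcongr
  have h3 : (β⁻¹ * δ) ^ ((d:ℝ) + P.rK) * K (β⁻¹ • x) ≤ P.CK := by
    refine le_trans ?_ h1
    apply mul_le_mul_of_nonneg_right _ (P.K0 _)
    linarith
  rw [Real.mul_rpow (by positivity) hδ.le, Real.inv_rpow hβ.le, Real.rpow_add hβ, Real.rpow_natCast] at h3
  rw [le_div_iff₀ (by positivity), kb]
  have hb : 0 < β ^ P.rK := by positivity
  calc _ = β ^ P.rK * ((β ^ d * β ^ P.rK)⁻¹ * δ ^ ((d:ℝ) + P.rK) * K (β⁻¹ • x)) := by field_simp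
    _ ≤ β ^ P.rK * P.CK := by gcongr
    _ = _ := by ring

lemma kb_ball (P : Par d η f q0 K γ b lam) {δ θ : ℝ} (hδ : 0 < δ) (hθ : 0 < θ) :
    ∃ β0 > 0, ∀ β, 0 < β → β < β0 → ∀ x : EE d, 1 - θ ≤ ∫ y in ball x δ, kb K β (x - y) := by
  have h1 : Tendsto (fun n : ℕ => ∫ x in ball (0:EE d) n, K x) atTop (𝓝 (∫ x in ⋃ n : ℕ, ball (0:EE d) n, K x)) := by
    apply tendsto_setIntegral_of_monotone
    · intro i; exact measurableSet_ball
    · intro i j hij; exact ball_subset_ball (by exact_mod_cast hij)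
    · exact P.KInt.integrableOn
  rw [iUnion_ball_nat, setIntegral_univ, P.Kint] at h1
  obtain ⟨n, hn1, hn⟩ := ((h1.eventually (lt_mem_nhds (show 1 - θ < 1 by linarith))).and (eventually_ge_atTop 1)).exists
  have hnpos : (0:ℝ) < n := by exact_mod_cast hn
  refine ⟨δ / n, by positivity, fun β hβ hβ2 x => ?_⟩
  have h2 : ∫ y in ball x δ, kb K β (x - y) = ∫ y, (fun z => (β^d)⁻¹ * (ball (0:EE d) (δ/β)).indicator K (β⁻¹ • z)) (x - y) := by
    rw [← integral_indicator measurableSet_ball]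
    congr 1
    ext y
    simp only [Set.indicator, mem_ball, kb, dist_eq_norm]
    rw [norm_sub_rev y x, sub_zero, norm_smul, Real.norm_of_nonneg (inv_nonneg.2 hβ.le)]
    have : β⁻¹ * ‖x - y‖ < δ / β ↔ ‖x - y‖ < δ := by
      rw [inv_mul_eq_div, div_lt_div_iff_of_pos_right hβ]
    simp only [this]
    split_ifs <;> simp
  rw [h2, integral_sub_left_eq_self (fun z => (β^d)⁻¹ * (ball (0:EE d) (δ/β)).indicator K (β⁻¹ • z)) volume x,
    integral_const_mul, Measure.integral_comp_inv_smul]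
  simp only [finrank_euclideanSpace, Fintype.card_fin, smul_eq_mul]
  rw [abs_of_pos (by positivity), inv_mul_cancel_left₀ (by positivity), integral_indicator measurableSet_ball]
  refine hn1.le.trans ?_
  apply setIntegral_mono_set P.KInt.integrableOn (Eventually.of_forall P.K0)
  apply Eventually.of_forall
  apply ball_subset_ball
  rw [le_div_iff₀ hβ]
  rw [lt_div_iff₀ hnpos] at hβ2
  linarith

lemma kb_kappa (P : Par d η f q0 K γ b lam) :
    ∃ κ > 0, ∃ ρ > 0, ∀ (β r : ℝ), 0 < β → 0 < r → β * ρ ≤ r → ∀ x0 x : EE d, x ∈ ball x0 r →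
      κ ≤ ∫ y in ball x0 r, kb K β (x - y) := by
  have : Nonempty (Fin d) := ⟨⟨0, P.hd⟩⟩
  have : Nontrivial (EE d) := inferInstance
  obtain ⟨ρ, hρ, hK⟩ := Metric.continuousAt_iff.1 P.Kcont.continuousAt (K 0 / 2) (by linarith [P.Kpos])
  have hK2 : ∀ z : EE d, ‖z‖ < ρ → K 0 / 2 ≤ K z := by
    intro z hz
    have h := hK (x := z) (by rwa [dist_zero_right])
    rw [Real.dist_eq, abs_lt] at h
    linarith [h.1]
  set v := (volume (ball (0:EE d) 1)).toReal with hv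
  have hvpos : 0 < v := ENNReal.toReal_pos (measure_ball_pos _ _ one_pos).ne' measure_ball_lt_top.ne
  have hKp := P.Kpos
  refine ⟨K 0 / 2 * (ρ/2)^d * v, by positivity, ρ, hρ, fun β r hβ hr hβr x0 x hx => ?_⟩
  set t := β * ρ / (2 * r) with ht
  have ht0 : 0 < t := by positivity
  have htr : t * r = β * ρ / 2 := by rw [ht]; field_simp
  have ht1 : t ≤ 1/2 := by rw [ht, div_le_iff₀ (by positivity)]; linarith
  rw [mem_ball, dist_eq_norm] at hx
  set z := x + t • (x0 - x)
  have hsub : ball z (β * ρ / 2) ⊆ ball x0 r := by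
    intro y hy
    rw [mem_ball, dist_eq_norm] at hy ⊢
    have : y - x0 = (y - z) + (1 - t) • (x - x0) := by
      simp only [z, smul_sub, sub_smul, one_smul]; abel
    rw [this]
    calc _ ≤ ‖y - z‖ + ‖(1 - t) • (x - x0)‖ := norm_add_le _ _
      _ = ‖y - z‖ + (1 - t) * ‖x - x0‖ := by rw [norm_smul, Real.norm_of_nonneg (by linarith)]
      _ < β * ρ / 2 + (1-t) * r := by
          apply add_lt_add_of_lt_of_le hy
          apply mul_le_mul_of_nonneg_left hx.le (by linarith)
      _ = r := by linarith
  have hlow : ∀ y ∈ ball z (β * ρ / 2), (β^d)⁻¹ * (K 0 / 2) ≤ kb K β (x - y) := by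
    intro y hy
    rw [mem_ball, dist_eq_norm] at hy
    unfold kb
    gcongr
    apply hK2
    rw [norm_smul, Real.norm_of_nonneg (by positivity), inv_mul_lt_iff₀ hβ]
    have : x - y = -(y - z) - t • (x0 - x) := by simp only [z]; abel
    rw [this]
    calc _ ≤ ‖-(y-z)‖ + ‖t • (x0 - x)‖ := norm_sub_le _ _
      _ = ‖y - z‖ + t * ‖x - x0‖ := by rw [norm_neg, norm_smul, Real.norm_of_nonneg ht0.le, norm_sub_rev x0 x]
      _ < β * ρ / 2 + t * r := by
        apply add_lt_add_of_lt_of_le hy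
        apply mul_le_mul_of_nonneg_left hx.le ht0.le
      _ = _ := by linarith
  have hvol : (volume (ball z (β * ρ / 2))).toReal = (β * ρ / 2)^d * v := by
    rw [Measure.addHaar_ball_of_pos _ _ (by positivity), ENNReal.toReal_mul, ENNReal.toReal_ofReal (by positivity)]
    simp [hv]
  calc K 0 / 2 * (ρ/2)^d * v = ∫ y in ball z (β * ρ / 2), (β^d)⁻¹ * (K 0 / 2) := by
        rw [setIntegral_const, smul_eq_mul, Measure.real, hvol]
        field_simp
        rw [← mul_pow]
        congr 1
        ring
    _ ≤ ∫ y in ball z (β * ρ / 2), kb K β (x - y) := by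
        apply setIntegral_mono_on _ (kb_Int_sub P hβ x).integrableOn measurableSet_ball hlow
        exact integrableOn_const measure_ball_lt_top.ne
    _ ≤ _ := by
        apply setIntegral_mono_set (kb_Int_sub P hβ x).integrableOn
        · exact Eventually.of_forall (fun y => kb_nonneg P hβ _)
        · exact Eventually.of_forall hsub

end kbl
end Midas

namespace Midas

section rs

noncomputable def rseq (N : ℕ) (γ : ℕ → ℝ) (a : ℕ → ℝ) : ℕ → ℝ
  | 0 => 0
  | n+1 => if n < N then 0 else (1 - γ (n+1)) * rseq N γ a n + γ (n+1) * a n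

noncomputable def ee (N : ℕ) (γ : ℕ → ℝ) : ℕ → ℝ
  | 0 => 1
  | n+1 => if n < N then 1 else (1 - γ (n+1)) * ee N γ n

lemma rseq_le_N {N : ℕ} {γ a : ℕ → ℝ} {n : ℕ} (h : n ≤ N) : rseq N γ a n = 0 := by
  cases n with
  | zero => rfl
  | succ n => simp [rseq, Nat.lt_of_succ_le h]

lemma rseq_succ {N : ℕ} {γ a : ℕ → ℝ} {n : ℕ} (h : N ≤ n) :
    rseq N γ a (n+1) = (1 - γ (n+1)) * rseq N γ a n + γ (n+1) * a n := by
  simp [rseq, Nat.not_lt.2 h]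

lemma ee_le_N {N : ℕ} {γ : ℕ → ℝ} {n : ℕ} (h : n ≤ N) : ee N γ n = 1 := by
  cases n with
  | zero => rfl
  | succ n => simp [ee, Nat.lt_of_succ_le h]

lemma ee_succ {N : ℕ} {γ : ℕ → ℝ} {n : ℕ} (h : N ≤ n) :
    ee N γ (n+1) = (1 - γ (n+1)) * ee N γ n := by
  simp [ee, Nat.not_lt.2 h]

lemma rseq_add {N : ℕ} {γ a b : ℕ → ℝ} (n : ℕ) :
    rseq N γ (fun k => a k + b k) n = rseq N γ a n + rseq N γ b n := by
  induction n with
  | zero => simp [rseq]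
  | succ n ih =>
    simp only [rseq]; split_ifs
    · simp
    · rw [ih]; ring

lemma rseq_sub {N : ℕ} {γ a b : ℕ → ℝ} (n : ℕ) :
    rseq N γ (fun k => a k - b k) n = rseq N γ a n - rseq N γ b n := by
  induction n with
  | zero => simp [rseq]
  | succ n ih =>
    simp only [rseq]; split_ifs
    · simp
    · rw [ih]; ring

lemma rseq_neg {N : ℕ} {γ a : ℕ → ℝ} (n : ℕ) :
    rseq N γ (fun k => - a k) n = - rseq N γ a n := by
  induction n with
  | zero => simp [rseq]
  | succ n ih =>
    simp only [rseq]; split_ifs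
    · simp
    · rw [ih]; ring

variable {d : ℕ} {η : ℝ} {f q0 K : EE d → ℝ} {γ b lam : ℕ → ℝ}

lemma Par.g1 (P : Par d η f q0 K γ b lam) {n : ℕ} (h : P.N ≤ n) : 1/2 ≤ 1 - γ (n+1) := by
  linarith [P.γN (n+1) (by omega)]

lemma rseq_mono (P : Par d η f q0 K γ b lam) {a a' : ℕ → ℝ} (n : ℕ)
    (h : ∀ k, P.N ≤ k → k < n → a k ≤ a' k) :
    rseq P.N γ a n ≤ rseq P.N γ a' n := by
  induction n with
  | zero => simp [rseq]
  | succ n ih =>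
    rcases Nat.lt_or_ge n P.N with hn | hn
    · rw [rseq_le_N hn, rseq_le_N hn]
    · rw [rseq_succ hn, rseq_succ hn]
      have h1 := ih (fun k h1 h2 => h k h1 (by omega))
      have h2 := h n hn (by omega)
      have := P.g1 hn
      have := P.γpos (n+1)
      gcongr

lemma rseq_nonneg (P : Par d η f q0 K γ b lam) {a : ℕ → ℝ} (n : ℕ)
    (h : ∀ k, P.N ≤ k → k < n → 0 ≤ a k) : 0 ≤ rseq P.N γ a n := by
  have h0 : rseq P.N γ (fun _ => 0) n = 0 := by
    induction n with
    | zero => simp [rseq]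
    | succ n ih =>
      simp only [rseq]; split_ifs
      · rfl
      · rw [ih (fun k h1 h2 => h k h1 (by omega))]; ring
  rw [← h0]
  exact rseq_mono P n h

lemma ee_pos (P : Par d η f q0 K γ b lam) (n : ℕ) : 0 < ee P.N γ n := by
  induction n with
  | zero => simp [ee]
  | succ n ih =>
    rcases Nat.lt_or_ge n P.N with hn | hn
    · rw [ee_le_N hn]; norm_num
    · rw [ee_succ hn]
      have := P.g1 hn
      apply mul_pos (by linarith) ih

lemma ee_step (P : Par d η f q0 K γ b lam) (n : ℕ) : ee P.N γ (n+1) ≤ ee P.N γ n := by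
  rcases Nat.lt_or_ge n P.N with hn | hn
  · rw [ee_le_N hn, ee_le_N hn.le]
  · rw [ee_succ hn]
    have := ee_pos P n
    have := P.γpos (n+1)
    nlinarith

lemma ee_anti (P : Par d η f q0 K γ b lam) : Antitone (ee P.N γ) :=
  antitone_nat_of_succ_le (ee_step P)

lemma ee_half (P : Par d η f q0 K γ b lam) (n : ℕ) : ee P.N γ n / 2 ≤ ee P.N γ (n+1) := by
  have h0 := ee_pos P n
  rcases Nat.lt_or_ge n P.N with hn | hn
  · rw [ee_le_N hn, ee_le_N hn.le]; norm_num
  · rw [ee_succ hn]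
    have := P.g1 hn
    nlinarith

lemma ee_le_one (P : Par d η f q0 K γ b lam) (n : ℕ) : ee P.N γ n ≤ 1 := by
  have := ee_anti P (Nat.zero_le n)
  simpa [ee] using this

lemma ee_le (P : Par d η f q0 K γ b lam) {n : ℕ} (h : P.N ≤ n) : ee P.N γ n ≤ γ n / γ P.N := by
  induction n, h using Nat.le_induction with
  | base => rw [ee_le_N le_rfl, div_self (P.γpos _).ne']
  | succ n hn ih =>
    rw [ee_succ hn]
    have := P.g1 hn
    calc _ ≤ (1 - γ (n+1)) * (γ n / γ P.N) := by gcongr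
      _ = (γ n * (1 - γ (n+1))) / γ P.N := by ring
      _ ≤ _ := by
        have := P.γpos P.N
        gcongr
        exact P.γstep n hn

lemma ee_tend (P : Par d η f q0 K γ b lam) : Tendsto (ee P.N γ) atTop (𝓝 0) := by
  have h : Tendsto (fun n => γ n / γ P.N) atTop (𝓝 0) := by simpa using P.γ0.div_const (γ P.N)
  refine squeeze_zero' (Eventually.of_forall fun n => (ee_pos P n).le) ?_ h
  filter_upwards [eventually_ge_atTop P.N] with n hn using ee_le P hn

lemma γlam_tend (P : Par d η f q0 K γ b lam) : Tendsto (fun n => γ n / lam n) atTop (𝓝 0) := by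
  refine squeeze_zero' (Eventually.of_forall fun n => (div_pos (P.γpos n) (P.lpos n)).le) ?_ P.rateB
  filter_upwards [eventually_ge_atTop P.N, eventually_ge_atTop 3] with n hn hn3
  have hb := P.bpos n
  have hl := P.lpos n
  have hg := P.γpos n
  have hbd : b n ^ d ≤ 1 := pow_le_one₀ hb.le (P.bN n hn)
  have hlog : 1 ≤ Real.log n := by
    rw [Real.le_log_iff_exp_le (by positivity)]
    have : (3:ℝ) ≤ n := by exact_mod_cast hn3
    linarith [Real.exp_one_lt_d9]
  apply div_le_div₀ (by positivity)
  · nlinarith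
  · positivity
  · nlinarith

lemma eelam_tend (P : Par d η f q0 K γ b lam) : Tendsto (fun n => ee P.N γ n / lam n) atTop (𝓝 0) := by
  have h : Tendsto (fun n => γ n / lam n / γ P.N) atTop (𝓝 0) := by
    simpa using (γlam_tend P).div_const (γ P.N)
  refine squeeze_zero' (Eventually.of_forall fun n => (div_pos (ee_pos P n) (P.lpos n)).le) ?_ h
  filter_upwards [eventually_ge_atTop P.N] with n hn
  rw [div_right_comm]
  have := P.lpos n
  gcongr
  exact ee_le P hn

lemma lin_ge (P : Par d η f q0 K γ b lam) {u : ℕ → ℝ} {A : ℝ} {n0 n : ℕ} (h0 : P.N ≤ n0)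
    (hn : n0 ≤ n) (h : ∀ k, n0 ≤ k → k < n → (1 - γ (k+1)) * u k + γ (k+1) * A ≤ u (k+1)) :
    A + ee P.N γ n / ee P.N γ n0 * (u n0 - A) ≤ u n := by
  induction n, hn using Nat.le_induction with
  | base => rw [div_self (ee_pos P n0).ne']; linarith
  | succ n hn ih =>
    have h1 := ih (fun k h1 h2 => h k h1 (by omega))
    have h2 := h n hn (by omega)
    rw [ee_succ (h0.trans hn)]
    have h3 := P.g1 (h0.trans hn)
    have h4 : (1 - γ (n+1)) * (A + ee P.N γ n / ee P.N γ n0 * (u n0 - A)) ≤ (1 - γ (n+1)) * u n := by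
      gcongr
    calc _ = (1 - γ (n+1)) * (A + ee P.N γ n / ee P.N γ n0 * (u n0 - A)) + γ (n+1) * A := by ring
      _ ≤ _ := by linarith

lemma lin_le (P : Par d η f q0 K γ b lam) {u : ℕ → ℝ} {A : ℝ} {n0 n : ℕ} (h0 : P.N ≤ n0)
    (hn : n0 ≤ n) (h : ∀ k, n0 ≤ k → k < n → u (k+1) ≤ (1 - γ (k+1)) * u k + γ (k+1) * A) :
    u n ≤ A + ee P.N γ n / ee P.N γ n0 * (u n0 - A) := by
  have := lin_ge P (u := fun k => - u k) (A := -A) h0 hn (fun k h1 h2 => by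
    have := h k h1 h2; linarith)
  have h2 : ee P.N γ n / ee P.N γ n0 * (-u n0 - -A) = - (ee P.N γ n / ee P.N γ n0 * (u n0 - A)) := by ring
  rw [h2] at this
  linarith

end rs

section step
variable {d : ℕ} {η : ℝ} {f q0 K : EE d → ℝ} {γ b lam : ℕ → ℝ}

/-- truncated weight -/
noncomputable def tw (f q : EE d → ℝ) (T : ℝ) (y : EE d) : ℝ := min (f y / q y) T

noncomputable def GG (η : ℝ) (f q : EE d → ℝ) (T : ℝ) (k : EE d → ℝ) : ℝ :=
  ∫ y, tw f q T y ^ η * k y * q y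

variable {q : EE d → ℝ} {T : ℝ}

lemma tw_nonneg (P : Par d η f q0 K γ b lam) (hq : ∀ x, 0 ≤ q x) (hT : 0 < T) (y : EE d) :
    0 ≤ tw f q T y := le_min (div_nonneg (P.f0 y) (hq y)) hT.le

lemma tw_le_T (y : EE d) : tw f q T y ≤ T := min_le_right _ _

lemma twp_le (P : Par d η f q0 K γ b lam) (hq : ∀ x, 0 ≤ q x) (hT : 0 < T) (y : EE d) :
    tw f q T y ^ η ≤ T ^ η :=
  Real.rpow_le_rpow (tw_nonneg P hq hT y) (tw_le_T y) P.hη.le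

lemma twp_nonneg (P : Par d η f q0 K γ b lam) (hq : ∀ x, 0 ≤ q x) (hT : 0 < T) (y : EE d) :
    0 ≤ tw f q T y ^ η := Real.rpow_nonneg (tw_nonneg P hq hT y) _

lemma wq_eq (P : Par d η f q0 K γ b lam) (hq : ∀ x, 0 ≤ q x) (y : EE d) :
    (f y / q y) ^ η * q y = f y ^ η * q y ^ (1 - η) := by
  have h1 := P.hη
  have h2 := P.hη1
  rcases (hq y).eq_or_lt with h | h
  · rw [← h, Real.zero_rpow (by linarith)]; simp
  · rw [Real.div_rpow (P.f0 y) h.le, Real.rpow_sub h, Real.rpow_one]; field_simp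

lemma twq_le (P : Par d η f q0 K γ b lam) (hq : ∀ x, 0 ≤ q x) (hT : 0 < T) (y : EE d) :
    tw f q T y ^ η * q y ≤ f y ^ η * q y ^ (1 - η) := by
  rw [← wq_eq P hq]
  apply mul_le_mul_of_nonneg_right _ (hq y)
  exact Real.rpow_le_rpow (tw_nonneg P hq hT y) (min_le_left _ _) P.hη.le

lemma tw_eq (P : Par d η f q0 K γ b lam) (hq : ∀ x, 0 ≤ q x) (hT : 0 < T) (y : EE d)
    (h : f y ≤ T * q y) : tw f q T y = f y / q y := by
  apply min_eq_left
  rcases (hq y).eq_or_lt with h' | h'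
  · rw [← h']; simp [hT.le]
  · rwa [div_le_iff₀ h']

lemma twq_eq (P : Par d η f q0 K γ b lam) (hq : ∀ x, 0 ≤ q x) (hT : 0 < T) (y : EE d)
    (h : f y ≤ T * q y) : tw f q T y ^ η * q y = f y ^ η * q y ^ (1 - η) := by
  rw [tw_eq P hq hT y h, wq_eq P hq]

lemma young (P : Par d η f q0 K γ b lam) {x y : ℝ} (hx : 0 ≤ x) (hy : 0 ≤ y) :
    x ^ η * y ^ (1 - η) ≤ η * x + (1 - η) * y :=
  Real.geom_mean_le_arith_mean2_weighted P.hη.le (by linarith [P.hη1]) hx hy (by ring)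

lemma twq_young (P : Par d η f q0 K γ b lam) (hq : ∀ x, 0 ≤ q x) (hT : 0 < T) (y : EE d) :
    tw f q T y ^ η * q y ≤ η * f y + (1 - η) * q y :=
  (twq_le P hq hT y).trans (young P (P.f0 y) (hq y))

lemma twk_aesm (P : Par d η f q0 K γ b lam) (hqi : Integrable q) {k : EE d → ℝ}
    (hk : AEStronglyMeasurable k) : AEStronglyMeasurable (fun y => tw f q T y ^ η * k y * q y) := by
  have h1 : AEMeasurable q := hqi.aestronglyMeasurable.aemeasurable
  have h2 : Measurable f := P.fcont.measurable
  have h3 : AEMeasurable k := hk.aemeasurable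
  apply AEMeasurable.aestronglyMeasurable
  unfold tw
  exact ((((h2.aemeasurable.div h1).min aemeasurable_const).pow_const η).mul h3).mul h1

lemma GG_Int (P : Par d η f q0 K γ b lam) (hq : ∀ x, 0 ≤ q x) (hqi : Integrable q) (hT : 0 < T)
    {k : EE d → ℝ} {C : ℝ} (hk : AEStronglyMeasurable k) (hkC : ∀ y, |k y| ≤ C) :
    Integrable (fun y => tw f q T y ^ η * k y * q y) := by
  refine (hqi.const_mul (T^η * C)).mono' (twk_aesm P hqi hk) (Eventually.of_forall fun y => ?_)
  rw [Real.norm_eq_abs, abs_mul, abs_mul, abs_of_nonneg (hq y), abs_of_nonneg (twp_nonneg P hq hT y)]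
  have := twp_le P hq hT y
  have h2 := hkC y
  have h3 := hq y
  have h4 := twp_nonneg P hq hT y
  have h5 : 0 ≤ C := (abs_nonneg _).trans h2
  gcongr

lemma kbx_meas (P : Par d η f q0 K γ b lam) (β : ℝ) (x : EE d) :
    AEStronglyMeasurable (fun y => kb K β (x - y)) :=
  ((kb_cont P β).comp (continuous_const.sub continuous_id)).aestronglyMeasurable

lemma kbx_abs (P : Par d η f q0 K γ b lam) {β : ℝ} (hβ : 0 < β) (x : EE d) :
    |kb K β x| ≤ P.Km / β ^ d := by
  rw [abs_of_nonneg (kb_nonneg P hβ x)]; exact kb_le P hβ x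

lemma GGk_Int (P : Par d η f q0 K γ b lam) (hq : ∀ x, 0 ≤ q x) (hqi : Integrable q) (hT : 0 < T)
    {β : ℝ} (hβ : 0 < β) (x : EE d) :
    Integrable (fun y => tw f q T y ^ η * kb K β (x - y) * q y) :=
  GG_Int P hq hqi hT (kbx_meas P β x) (fun y => kbx_abs P hβ (x - y))

lemma GG_nonneg (P : Par d η f q0 K γ b lam) (hq : ∀ x, 0 ≤ q x) (hT : 0 < T)
    {k : EE d → ℝ} (hk : ∀ y, 0 ≤ k y) : 0 ≤ GG η f q T k :=
  integral_nonneg fun y => mul_nonneg (mul_nonneg (twp_nonneg P hq hT y) (hk y)) (hq y)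

lemma mixInt (P : Par d η f q0 K γ b lam) (hqi : Integrable q) :
    Integrable (fun y => η * f y + (1 - η) * q y) :=
  (P.fInt.const_mul _).add (hqi.const_mul _)

lemma mixint (P : Par d η f q0 K γ b lam) (hqi : Integrable q) (hq1 : ∫ y, q y = 1) :
    ∫ y, (η * f y + (1 - η) * q y) = 1 := by
  rw [integral_add (P.fInt.const_mul _) (hqi.const_mul _), integral_const_mul, integral_const_mul,
    P.fint, hq1]; ring

lemma S_le (P : Par d η f q0 K γ b lam) (hq : ∀ x, 0 ≤ q x) (hqi : Integrable q)
    (hq1 : ∫ y, q y = 1) (hT : 0 < T) : GG η f q T (fun _ => 1) ≤ 1 := by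
  refine le_of_le_of_eq ?_ (mixint P hqi hq1)
  apply integral_mono (GG_Int P hq hqi hT (C := 1) aestronglyMeasurable_const (by simp)) (mixInt P hqi)
  intro y
  simpa using twq_young P hq hT y

lemma D_up (P : Par d η f q0 K γ b lam) (hq : ∀ x, 0 ≤ q x) (hqi : Integrable q)
    (hq1 : ∫ y, q y = 1) (hT : 0 < T) {β δ : ℝ} (hβ : 0 < β) (hδ : 0 < δ) (x : EE d) {p φ : ℝ}
    (hp : ∀ y ∈ ball x δ, q y ≤ p) (hφ : ∀ y ∈ ball x δ, f y ≤ φ) :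
    GG η f q T (fun y => kb K β (x - y)) ≤
      φ ^ η * p ^ (1 - η) + P.CK * β ^ P.rK / δ ^ ((d:ℝ) + P.rK) := by
  set t := P.CK * β ^ P.rK / δ ^ ((d:ℝ) + P.rK) with ht
  have hCK := P.CKpos
  have ht0 : 0 ≤ t := by positivity
  have hη1 := P.hη1
  have hp0 : 0 ≤ p := (hq x).trans (hp x (mem_ball_self hδ))
  have hφ0 : 0 ≤ φ := (P.f0 x).trans (hφ x (mem_ball_self hδ))
  have hI : ∫ y, (φ ^ η * p ^ (1 - η) * kb K β (x - y) + t * (η * f y + (1 - η) * q y))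
      = φ ^ η * p ^ (1 - η) + t := by
    rw [integral_add ((kb_Int_sub P hβ x).const_mul _) ((mixInt P hqi).const_mul _),
      integral_const_mul, integral_const_mul, kb_int_sub P hβ, mixint P hqi hq1]; ring
  rw [← hI]
  apply integral_mono (GGk_Int P hq hqi hT hβ x)
    (((kb_Int_sub P hβ x).const_mul _).add ((mixInt P hqi).const_mul _))
  intro y
  have hk0 := kb_nonneg P hβ (x - y)
  have hyo := twq_young P hq hT y
  have hm0 : 0 ≤ tw f q T y ^ η * q y := mul_nonneg (twp_nonneg P hq hT y) (hq y)
  have e1 : tw f q T y ^ η * kb K β (x - y) * q y = (tw f q T y ^ η * q y) * kb K β (x - y) := by ring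
  simp only [e1, Pi.add_apply]
  by_cases hy : y ∈ ball x δ
  · have h1 : tw f q T y ^ η * q y ≤ φ ^ η * p ^ (1 - η) := by
      refine (twq_le P hq hT y).trans ?_
      have := P.f0 y
      have := hq y
      have := P.hη
      have := hp y hy
      have := hφ y hy
      have : 0 ≤ 1 - η := by linarith
      gcongr
    have h2 : 0 ≤ t * (η * f y + (1 - η) * q y) := mul_nonneg ht0 (hm0.trans hyo)
    nlinarith
  · have hy' : δ ≤ ‖x - y‖ := by
      rw [mem_ball, not_lt, dist_comm, dist_eq_norm] at hy; exact hy
    have h1 := kb_tail P hβ hδ (x - y) hy'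
    have h2 : 0 ≤ φ ^ η * p ^ (1 - η) * kb K β (x - y) := by positivity
    have h3 : (tw f q T y ^ η * q y) * kb K β (x - y) ≤ (η * f y + (1 - η) * q y) * t :=
      mul_le_mul hyo h1 hk0 (hm0.trans hyo)
    linarith

lemma D_low (P : Par d η f q0 K γ b lam) (hq : ∀ x, 0 ≤ q x) (hqi : Integrable q)
    (hT : 0 < T) {β : ℝ} (hβ : 0 < β) (x : EE d) {B : Set (EE d)} (hB : MeasurableSet B) {A : ℝ}
    (hA : ∀ y ∈ B, A ≤ tw f q T y ^ η * q y) :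
    A * (∫ y in B, kb K β (x - y)) ≤ GG η f q T (fun y => kb K β (x - y)) := by
  rw [← integral_const_mul]
  have hI := GGk_Int P hq hqi hT hβ x
  calc _ ≤ ∫ y in B, tw f q T y ^ η * kb K β (x - y) * q y := by
        apply setIntegral_mono_on ((kb_Int_sub P hβ x).const_mul A).integrableOn hI.integrableOn hB
        intro y hy
        have := hA y hy
        have := kb_nonneg P hβ (x - y)
        nlinarith
    _ ≤ _ := by
        apply setIntegral_le_integral hI
        exact Eventually.of_forall fun y => mul_nonneg (mul_nonneg (twp_nonneg P hq hT y) (kb_nonneg P hβ _)) (hq y)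

lemma twq_ge (P : Par d η f q0 K γ b lam) (hq : ∀ x, 0 ≤ q x) (hT : 0 < T) (y : EE d)
    (h : f y ≤ T * q y) {a l : ℝ} (ha : 0 ≤ a) (haf : a ≤ f y) (hl : 0 ≤ l) (hlq : l ≤ q y) :
    a ^ η * l ^ (1 - η) ≤ tw f q T y ^ η * q y := by
  rw [twq_eq P hq hT y h]
  have := P.hη
  have := P.hη1
  have : 0 ≤ 1 - η := by linarith
  have := P.f0 y
  gcongr

lemma S_low (P : Par d η f q0 K γ b lam) (hq : ∀ x, 0 ≤ q x) (hqi : Integrable q)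
    (hT : 0 < T) {l : ℝ} (hl : 0 ≤ l) (hlq : ∀ y, l * f y ≤ q y) (hlT : 1 ≤ T * l) :
    l ^ (1 - η) ≤ GG η f q T (fun _ => 1) := by
  have h1 : l ^ (1 - η) = ∫ y, l ^ (1 - η) * f y := by rw [integral_const_mul, P.fint, mul_one]
  rw [h1]
  apply integral_mono (P.fInt.const_mul _) (GG_Int P hq hqi hT (C := 1) aestronglyMeasurable_const (by simp))
  intro y
  simp only [mul_one]
  have hf := P.f0 y
  have h2 : f y ≤ T * q y := by
    calc f y ≤ (T * l) * f y := by nlinarith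
      _ = T * (l * f y) := by ring
      _ ≤ _ := by have := hlq y; gcongr
  refine le_trans (le_of_eq ?_) (twq_ge P hq hT y h2 hf le_rfl (mul_nonneg hl hf) (hlq y))
  have := P.hη
  have := P.hη1
  rw [Real.mul_rpow hl hf]
  rcases hf.eq_or_lt with h | h
  · rw [← h, Real.zero_rpow (by linarith)]; simp
  · have : f y ^ η * f y ^ (1 - η) = f y := by rw [← Real.rpow_add h]; simp
    rw [mul_left_comm, this]

end step
end Midas

namespace Midas

section pathdef
variable {d : ℕ} {η : ℝ} {f q0 K : EE d → ℝ} {γ b lam : ℕ → ℝ}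

/-- truncation level for the step from n to n+1 -/
noncomputable def TT (P : Par d η f q0 K γ b lam) (n : ℕ) : ℝ := 2 / (P.c * lam (n+1))

/-- compensated sequence for a kernel family -/
noncomputable def zz (P : Par d η f q0 K γ b lam) (q : ℕ → EE d → ℝ) (X : ℕ → EE d)
    (k : ℕ → EE d → ℝ) (n : ℕ) : ℝ :=
  rseq P.N γ (fun j => tw f (q j) (TT P j) (X (j+1)) ^ η * k j (X (j+1)) - GG η f (q j) (TT P j) (k j)) n

noncomputable def kx (K : EE d → ℝ) (b : ℕ → ℝ) (x : EE d) (j : ℕ) (y : EE d) : ℝ :=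
  kb K (b (j+1)) (x - y)

noncomputable def k1 (_ : ℕ) (_ : EE d) : ℝ := 1

noncomputable def hh (P : Par d η f q0 K γ b lam) (q : ℕ → EE d → ℝ)
    (k : ℕ → EE d → ℝ) (n : ℕ) : ℝ :=
  rseq P.N γ (fun j => GG η f (q j) (TT P j) (k j)) n

structure Path (P : Par d η f q0 K γ b lam) (X : ℕ → EE d) (g q : ℕ → EE d → ℝ) : Prop where
  qpos : ∀ n, P.N ≤ n → ∀ x, 0 ≤ q n x
  qInt : ∀ n, P.N ≤ n → Integrable (q n)
  qint : ∀ n, P.N ≤ n → ∫ x, q n x = 1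
  grec : ∀ n, P.N ≤ n → ∀ x, g (n+1) x = (1 - γ (n+1)) * g n x
      + γ (n+1) * (f (X (n+1)) / q n (X (n+1))) ^ η * kb K (b (n+1)) (x - X (n+1))
  qrec : ∀ n, P.N ≤ n → ∀ x, q n x = (1 - lam n) * (g n x / ∫ y, g n y) + lam n * q0 x
  gbd : ∀ n, ∃ C, ∀ x, |g n x| ≤ C
  gInt : ∀ n, Integrable (g n)
  gcont : ∀ n, Continuous (g n)
  zsmall : ∀ τ > 0, ∀ᶠ n : ℕ in atTop, ∀ x : EE d, ‖x‖ ≤ n → |zz P q X (kx K b x) n| ≤ τ * lam n ^ (1 - η)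
  zmsmall : ∀ τ > 0, ∀ᶠ n : ℕ in atTop, |zz P q X k1 n| ≤ τ * lam n ^ (1 - η)
  forced : ∀ n, P.N ≤ n → 0 < ∫ y, g n y → 0 < volume {x | 0 < g n x ∧ f x = 0} → ∀ x, 0 ≤ g n x

end pathdef

section path
variable {d : ℕ} {η : ℝ} {f q0 K : EE d → ℝ} {γ b lam : ℕ → ℝ}
variable {P : Par d η f q0 K γ b lam} {X : ℕ → EE d} {g q : ℕ → EE d → ℝ}

lemma TT_pos (P : Par d η f q0 K γ b lam) (n : ℕ) : 0 < TT P n :=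
  div_pos two_pos (mul_pos P.hc (P.lpos _))

lemma TT_mul (P : Par d η f q0 K γ b lam) (n : ℕ) : 2 ≤ TT P n * (P.c * lam n) := by
  have h1 := P.hc
  have h2 := P.lpos (n+1)
  have h3 := P.lanti (Nat.le_succ n)
  rw [TT, div_mul_eq_mul_div, le_div_iff₀ (by positivity)]
  have : P.c * lam (n+1) ≤ P.c * lam n := by gcongr
  linarith

lemma fTq (P : Par d η f q0 K γ b lam) {n : ℕ} {y : EE d} {p : ℝ} (h : lam n / 2 * q0 y ≤ p) :
    f y ≤ TT P n * p := by
  have h1 := P.hc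
  have h2 := P.lpos n
  have h4 := P.f0 y
  have h3 : lam n / 2 * (P.c * f y) ≤ p := by
    refine le_trans ?_ h
    have := P.hfq y
    gcongr
  calc f y ≤ (TT P n * (P.c * lam n)) / 2 * f y := by
        have := TT_mul P n
        nlinarith
    _ = TT P n * (lam n / 2 * (P.c * f y)) := by ring
    _ ≤ _ := by have := TT_pos P n; gcongr

lemma lam_rpow_le (P : Par d η f q0 K γ b lam) {n : ℕ} (h : P.N ≤ n) : lam n ≤ lam n ^ (1 - η) := by
  have := P.lpos n
  have h2 := P.lN n h
  conv_lhs => rw [← Real.rpow_one (lam n)]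
  apply Real.rpow_le_rpow_of_exponent_ge this (by linarith) (by linarith [P.hη])

lemma ee_small (P : Par d η f q0 K γ b lam) {C : ℝ} (hC : 0 < C) :
    ∀ᶠ n in atTop, ee P.N γ n ≤ C * lam n := by
  filter_upwards [(eelam_tend P).eventually (gt_mem_nhds hC)] with n hn
  rw [div_lt_iff₀ (P.lpos n)] at hn
  exact hn.le

lemma lam_anti_rpow (P : Par d η f q0 K γ b lam) {n k : ℕ} (h : n ≤ k) :
    lam k ^ (1 - η) ≤ lam n ^ (1 - η) :=
  Real.rpow_le_rpow (P.lpos k).le (P.lanti h) (by linarith [P.hη1])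

lemma m_succ (H : Path P X g q) {n : ℕ} (hn : P.N ≤ n) : ∫ y, g (n+1) y = (1 - γ (n+1)) * (∫ y, g n y)
      + γ (n+1) * (f (X (n+1)) / q n (X (n+1))) ^ η := by
  have : g (n+1) = fun x => (1 - γ (n+1)) * g n x
      + γ (n+1) * (f (X (n+1)) / q n (X (n+1))) ^ η * kb K (b (n+1)) (x - X (n+1)) := by
    ext x; exact H.grec n hn x
  rw [this, integral_add ((H.gInt n).const_mul _) ((kb_Int_sub' P (P.bpos _) _).const_mul _),
    integral_const_mul, integral_const_mul, kb_int_sub' P (P.bpos _)]; ring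

lemma m_ne (H : Path P X g q) {n : ℕ} (hn : P.N ≤ n) : ∫ y, g n y ≠ 0 := by
  intro h
  have h1 := H.qint n hn
  have : q n = fun x => lam n * q0 x := by
    ext x; rw [H.qrec n hn x, h]; simp
  rw [this, integral_const_mul, P.q0int] at h1
  linarith [P.lN n hn]

lemma wn (H : Path P X g q) {n : ℕ} (hn : P.N ≤ n) : 0 ≤ (f (X (n+1)) / q n (X (n+1))) ^ η :=
  Real.rpow_nonneg (div_nonneg (P.f0 _) (H.qpos n hn _)) _

lemma g_mono (H : Path P X g q) {n k : ℕ} (hn : P.N ≤ n) (hk : n ≤ k) (x : EE d) :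
    ee P.N γ k / ee P.N γ n * g n x ≤ g k x := by
  have := lin_ge P (u := fun k => g k x) (A := 0) hn hk (fun j h1 h2 => by
    have := H.grec j (hn.trans h1) x
    have h3 : 0 ≤ γ (j+1) * (f (X (j+1)) / q j (X (j+1))) ^ η * kb K (b (j+1)) (x - X (j+1)) :=
      mul_nonneg (mul_nonneg (P.γpos _).le (wn H (hn.trans h1))) (kb_nonneg P (P.bpos _) _)
    linarith)
  simpa using this

lemma m_mono (H : Path P X g q) {n k : ℕ} (hn : P.N ≤ n) (hk : n ≤ k) :
    ee P.N γ k / ee P.N γ n * (∫ y, g n y) ≤ ∫ y, g k y := by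
  have := lin_ge P (u := fun k => ∫ y, g k y) (A := 0) hn hk (fun j h1 h2 => by
    have := m_succ H (hn.trans h1)
    have h3 : 0 ≤ γ (j+1) * (f (X (j+1)) / q j (X (j+1))) ^ η :=
      mul_nonneg (P.γpos _).le (wn H (hn.trans h1))
    linarith)
  simpa using this

lemma hz (P : Par d η f q0 K γ b lam) (q : ℕ → EE d → ℝ) (X : ℕ → EE d) (k : ℕ → EE d → ℝ) (n : ℕ) :
    hh P q k n + zz P q X k n =
      rseq P.N γ (fun j => tw f (q j) (TT P j) (X (j+1)) ^ η * k j (X (j+1))) n := by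
  rw [hh, zz, ← rseq_add]; congr 1; ext j; ring

lemma tww (H : Path P X g q) {n : ℕ} (hn : P.N ≤ n) (y : EE d) :
    tw f (q n) (TT P n) y ^ η ≤ (f y / q n y) ^ η :=
  Real.rpow_le_rpow (tw_nonneg P (H.qpos n hn) (TT_pos P n) y) (min_le_left _ _) P.hη.le

lemma g_ge (H : Path P X g q) {n : ℕ} (hn : P.N ≤ n) (x : EE d) :
    ee P.N γ n * g P.N x + (hh P q (kx K b x) n + zz P q X (kx K b x) n) ≤ g n x := by
  rw [hz]
  induction n, hn using Nat.le_induction with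
  | base => rw [ee_le_N le_rfl, rseq_le_N le_rfl]; linarith
  | succ n hn ih =>
    rw [ee_succ hn, rseq_succ hn, H.grec n hn x]
    have h1 := P.g1 hn
    have h2 := mul_le_mul_of_nonneg_left ih (by linarith : 0 ≤ 1 - γ (n+1))
    have h3 : γ (n+1) * (tw f (q n) (TT P n) (X (n+1)) ^ η * kx K b x n (X (n+1))) ≤
        γ (n+1) * (f (X (n+1)) / q n (X (n+1))) ^ η * kb K (b (n+1)) (x - X (n+1)) := by
      rw [← mul_assoc]
      apply mul_le_mul_of_nonneg_right _ (kb_nonneg P (P.bpos _) _)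
      exact mul_le_mul_of_nonneg_left (tww H hn _) (P.γpos _).le
    linarith

lemma m_ge (H : Path P X g q) {n : ℕ} (hn : P.N ≤ n) :
    ee P.N γ n * (∫ y, g P.N y) + (hh P q k1 n + zz P q X k1 n) ≤ ∫ y, g n y := by
  rw [hz]
  induction n, hn using Nat.le_induction with
  | base => rw [ee_le_N le_rfl, rseq_le_N le_rfl]; linarith
  | succ n hn ih =>
    rw [ee_succ hn, rseq_succ hn, m_succ H hn]
    have h1 := P.g1 hn
    have h2 := mul_le_mul_of_nonneg_left ih (by linarith : 0 ≤ 1 - γ (n+1))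
    have h3 : γ (n+1) * (tw f (q n) (TT P n) (X (n+1)) ^ η * k1 n (X (n+1))) ≤
        γ (n+1) * (f (X (n+1)) / q n (X (n+1))) ^ η := by
      rw [k1, mul_one]
      exact mul_le_mul_of_nonneg_left (tww H hn _) (P.γpos _).le
    linarith

lemma hh_nonneg (H : Path P X g q) (n : ℕ) (x : EE d) : 0 ≤ hh P q (kx K b x) n :=
  rseq_nonneg P n fun j hj _ =>
    GG_nonneg P (H.qpos j hj) (TT_pos P j) (fun _ => kb_nonneg P (P.bpos _) _)

/-- a positive mass occurs -/
lemma S1 (H : Path P X g q) : ∃ n, P.N ≤ n ∧ 0 < ∫ y, g n y := by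
  by_contra hcon
  push Not at hcon
  have hneg : ∀ n, P.N ≤ n → ∀ x, g n x ≤ 0 := by
    intro n hn x
    set M := -(∫ y, g n y) with hM
    have hM0 : 0 ≤ M := by linarith [hcon n hn]
    have key : ∀ k, n ≤ k → g n x ≤ lam k * (2 * M * q0 x) := by
      intro k hk
      have hkN := hn.trans hk
      have hmk : ∫ y, g k y < 0 := lt_of_le_of_ne (hcon k hkN) (m_ne H hkN)
      have h1 := H.qpos k hkN x
      rw [H.qrec k hkN x] at h1
      have hl := P.lN k hkN
      have hl0 := P.lpos k
      have hq0 := P.q00 x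
      set r := ee P.N γ k / ee P.N γ n with hr
      have hr0 : 0 < r := div_pos (ee_pos P k) (ee_pos P n)
      have h2 := g_mono H hn hk x
      have h3 := m_mono H hn hk
      have h4 : (1 - lam k) * g k x ≤ lam k * q0 x * (-(∫ y, g k y)) := by
        have := mul_nonneg h1 (by linarith : 0 ≤ -(∫ y, g k y))
        have e : ((1 - lam k) * (g k x / ∫ y, g k y) + lam k * q0 x) * (-(∫ y, g k y)) =
          -((1 - lam k) * g k x) + lam k * q0 x * (-(∫ y, g k y)) := by
          have hne := hmk.ne
          field_simp
          ring
        linarith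
      have h5 : lam k * q0 x * (-(∫ y, g k y)) ≤ lam k * q0 x * (r * M) := by
        apply mul_le_mul_of_nonneg_left _ (by positivity)
        rw [hM]; linarith
      have h6 : (1 - lam k) * (r * g n x) ≤ lam k * q0 x * (r * M) := by
        refine le_trans ?_ (h4.trans h5)
        apply mul_le_mul_of_nonneg_left h2 (by linarith)
      have h7 : (1 - lam k) * g n x ≤ lam k * q0 x * M := by
        have : r * ((1 - lam k) * g n x) ≤ r * (lam k * q0 x * M) := by linarith
        exact le_of_mul_le_mul_left this hr0
      by_cases hg : g n x ≤ 0
      · refine hg.trans (by positivity)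
      · push Not at hg
        have : 0 ≤ lam k * q0 x * M := by positivity
        nlinarith
    have hlim : Tendsto (fun k => lam k * (2 * M * q0 x)) atTop (𝓝 0) := by
      simpa using P.l0.mul_const (2 * M * q0 x)
    exact ge_of_tendsto hlim ((eventually_ge_atTop n).mono key)
  have hq : ∀ n, P.N ≤ n → ∀ y, P.c * lam n * f y ≤ q n y := by
    intro n hn y
    rw [H.qrec n hn y]
    have h1 : 0 ≤ g n y / ∫ y, g n y := div_nonneg_of_nonpos (hneg n hn y) (hcon n hn)
    have h2 := P.lN n hn
    have h3 := P.hfq y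
    have h4 := P.lpos n
    have : 0 ≤ (1 - lam n) * (g n y / ∫ y, g n y) := mul_nonneg (by linarith) h1
    nlinarith
  have hη1 := P.hη1
  set c1 := P.c ^ (1 - η) with hc1
  have hc1pos : 0 < c1 := Real.rpow_pos_of_pos P.hc _
  have hS : ∀ n, P.N ≤ n → c1 * lam n ^ (1 - η) ≤ GG η f (q n) (TT P n) (k1 n) := by
    intro n hn
    have hcl : 0 < P.c * lam n := mul_pos P.hc (P.lpos n)
    have := S_low P (H.qpos n hn) (H.qInt n hn) (TT_pos P n) hcl.le (hq n hn)
      (by linarith [TT_mul P n])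
    rw [Real.mul_rpow P.hc.le (P.lpos n).le] at this
    exact this
  have hhm : ∀ n, P.N ≤ n → c1 * lam n ^ (1 - η) * (1 - ee P.N γ n) ≤ hh P q k1 n := by
    intro n hn
    have h := lin_ge P (u := hh P q k1) (A := c1 * lam n ^ (1 - η)) le_rfl hn (fun k h1 h2 => by
      unfold hh
      rw [rseq_succ h1]
      have h3 := hS k h1
      have h4 := lam_anti_rpow P h2.le
      have h5 := P.γpos (k+1)
      have h6 : c1 * lam n ^ (1 - η) ≤ GG η f (q k) (TT P k) (k1 k) := by nlinarith
      gcongr)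
    rw [ee_le_N le_rfl] at h
    have h0 : hh P q k1 P.N = 0 := rseq_le_N le_rfl
    rw [h0] at h
    linarith
  set M := |∫ y, g P.N y| with hM
  obtain ⟨n, hn, he1, he2, hz⟩ := ((eventually_ge_atTop P.N).and
    (((ee_tend P).eventually (gt_mem_nhds (by norm_num : (0:ℝ) < 1/2))).and
    ((ee_small P (C := c1 / (8 * (M+1))) (by positivity)).and (H.zmsmall (c1/8) (by positivity))))).exists
  have h1 := m_ge H hn
  have h2 := hcon n hn
  have h3 := hhm n hn
  have h4 := (abs_le.1 hz).1
  have h5 := lam_rpow_le P hn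
  have h6 := P.lpos n
  set Lr := lam n ^ (1 - η)
  have hLr : 0 < Lr := lt_of_lt_of_le h6 h5
  have h7 : ee P.N γ n * |∫ y, g P.N y| ≤ c1/8 * Lr := by
    rw [← hM]
    calc _ ≤ c1 / (8 * (M+1)) * lam n * M := by gcongr
      _ = (c1/8 * lam n) * (M / (M+1)) := by field_simp
      _ ≤ (c1/8 * lam n) * 1 := by
          gcongr
          rw [div_le_one (by positivity)]; linarith
      _ ≤ _ := by rw [mul_one]; gcongr
  have h8 : -(c1/8 * Lr) ≤ ee P.N γ n * (∫ y, g P.N y) := by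
    have : ee P.N γ n * (-|∫ y, g P.N y|) ≤ ee P.N γ n * (∫ y, g P.N y) :=
      mul_le_mul_of_nonneg_left (neg_abs_le _) (ee_pos P n).le
    linarith
  have h9 : c1 * Lr * (1/2) ≤ c1 * Lr * (1 - ee P.N γ n) := by gcongr; linarith
  have : 0 < c1 * Lr := by positivity
  linarith

end path
end Midas

namespace Midas

lemma grow {η γ l κ y : ℝ} (hη : 0 < η) (hη1 : η < 1) (hl : 0 < l) (hκ : 0 < κ) (hγ : 0 < γ)
    (hγ2 : γ ≤ 1/2) (hγl : γ * κ ≤ l ^ η) (hy : 0 ≤ y) (hly : κ - y ≤ l ^ η) :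
    κ - y * (1 - γ) ^ (η/4) ≤ ((1 - γ) * l + γ * (κ * l ^ (1 - η))) ^ η := by
  set s := l ^ η with hs
  have hs0 : 0 < s := Real.rpow_pos_of_pos hl _
  have e1 : (1 - γ) * l + γ * (κ * l ^ (1 - η)) = l * (1 + γ * (κ / s - 1)) := by
    rw [Real.rpow_sub hl, Real.rpow_one, ← hs]; field_simp; ring
  set t := γ * (κ / s - 1) with ht
  have hst : s * t = γ * (κ - s) := by rw [ht]; field_simp
  have hk0 : 0 < κ / s := by positivity
  have ht1 : 0 < 1 + t := by nlinarith
  rw [e1, Real.mul_rpow hl.le ht1.le, ← hs]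
  have hp : 0 ≤ (1 - γ) ^ (η/4) := Real.rpow_nonneg (by linarith) _
  rcases le_total κ s with h | h
  · have htle : 1 + t ≤ 1 := by
      have : κ / s ≤ 1 := by rw [div_le_one hs0]; exact h
      nlinarith
    have h1 : 1 + t ≤ (1 + t) ^ η := by
      conv_lhs => rw [← Real.rpow_one (1 + t)]
      exact Real.rpow_le_rpow_of_exponent_ge ht1 htle hη1.le
    have h2 : 0 ≤ y * (1 - γ) ^ (η/4) := by positivity
    have h3 : s * (1 + t) ≤ s * (1 + t) ^ η := by gcongr
    nlinarith
  · have ht0 : 0 ≤ t := by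
      have : 1 ≤ κ / s := by rw [le_div_iff₀ hs0]; linarith
      exact mul_nonneg hγ.le (by linarith)
    have htle : t ≤ 1 := by
      have : γ * (κ / s) ≤ 1 := by rw [← mul_div_assoc, div_le_one hs0]; exact hγl
      nlinarith
    have h1 : 1 + η * t / 2 ≤ (1 + t) ^ η := by
      have h2 := rpow_one_add_le_one_add_mul_self (s := -(t/(1+t))) (p := η)
        (by rw [neg_le_neg_iff, div_le_one ht1]; linarith) hη.le hη1.le
      have h3 : 1 + -(t/(1+t)) = (1 + t)⁻¹ := by field_simp; ring
      rw [h3, Real.inv_rpow ht1.le] at h2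
      have h4 : 0 < (1 + t) ^ η := Real.rpow_pos_of_pos ht1 _
      have h5 : 1 ≤ (1 + η * -(t/(1+t))) * (1 + t) ^ η := by
        rwa [inv_le_iff_one_le_mul₀ h4] at h2
      have h6 : t / 2 ≤ t/(1+t) := by
        apply div_le_div_of_nonneg_left ht0 ht1 (by linarith)
      have h7 : (1 + η * -(t/(1+t))) * (1 + t) ^ η ≤ (1 - η * t / 2) * (1 + t) ^ η := by
        apply mul_le_mul_of_nonneg_right _ h4.le
        nlinarith
      have h8 : 0 ≤ η * t / 2 := by positivity
      have h9 : η * t / 2 < 1 := by nlinarith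
      have h10 := h5.trans h7
      nlinarith
    have h2 : 1 - η * γ / 2 ≤ (1 - γ) ^ (η/4) := by
      rw [Real.rpow_def_of_pos (by linarith)]
      have h3 : -(2 * γ) ≤ Real.log (1 - γ) := by
        have := Real.one_sub_inv_le_log_of_pos (by linarith : 0 < 1 - γ)
        have h4 : (1 - γ)⁻¹ ≤ 1 + 2 * γ := by
          rw [inv_le_iff_one_le_mul₀ (by linarith)]; nlinarith
        linarith
      have h4 : -(η * γ / 2) ≤ Real.log (1 - γ) * (η / 4) := by nlinarith
      have := Real.add_one_le_exp (Real.log (1 - γ) * (η / 4))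
      linarith
    have h3 : y * (1 - η * γ / 2) ≤ y * (1 - γ) ^ (η/4) := by gcongr
    have h4 : s * (1 + η * t / 2) ≤ s * (1 + t) ^ η := by gcongr
    have h5 : s * (1 + η * t / 2) = s + η / 2 * (γ * (κ - s)) := by rw [← hst]; ring
    have h6 : 0 < 1 - η * γ / 2 := by nlinarith
    have h7 : (κ - s) * (1 - η * γ / 2) ≤ y * (1 - η * γ / 2) := by
      apply mul_le_mul_of_nonneg_right _ h6.le
      linarith
    linarith

section path
variable {d : ℕ} {η : ℝ} {f q0 K : EE d → ℝ} {γ b lam : ℕ → ℝ}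
variable {P : Par d η f q0 K γ b lam} {X : ℕ → EE d} {g q : ℕ → EE d → ℝ}

set_option maxHeartbeats 1000000 in
lemma ball_lemma (H : Path P X g q) {x0 : EE d} {r a : ℝ} (hr : 0 < r) (ha : 0 < a)
    (haf : ∀ y ∈ ball x0 r, a ≤ f y) {n1 : ℕ} (hn1 : P.N ≤ n1)
    (hm : ∀ n, n1 ≤ n → 0 < ∫ y, g n y)
    (hq : ∀ n, n1 ≤ n → ∀ y ∈ ball x0 r, lam n / 2 * q0 y ≤ q n y) :
    ∃ κ > 0, ∃ θ > 0, ∃ n2, n1 ≤ n2 ∧ ∀ k0, n2 ≤ k0 → ∀ n, k0 ≤ n →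
      ee P.N γ n ≤ θ * ee P.N γ k0 → (∀ k, k0 ≤ k → k < n → ∫ y, g k y ≤ 2) →
      ∀ x ∈ ball x0 r, κ ≤ g n x := by
  obtain ⟨κK, hκK, ρ, hρ, hkap⟩ := kb_kappa P
  have hη := P.hη
  have hη1 := P.hη1
  have hOneSub : 0 < 1 - η := by linarith
  have hc := P.hc
  -- general lower bound of D
  have hD : ∀ n, n1 ≤ n → b (n+1) * ρ ≤ r → ∀ l, 0 ≤ l → (∀ y ∈ ball x0 r, l ≤ q n y) →
      ∀ x ∈ ball x0 r, κK * (a ^ η * l ^ (1 - η)) ≤ GG η f (q n) (TT P n) (kx K b x n) := by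
    intro n hn hbr l hl hlq x hx
    have hnN := hn1.trans hn
    have h1 := D_low P (H.qpos n hnN) (H.qInt n hnN) (TT_pos P n) (P.bpos (n+1)) x
      (B := ball x0 r) measurableSet_ball (A := a ^ η * l ^ (1 - η)) (fun y hy =>
        twq_ge P (H.qpos n hnN) (TT_pos P n) y (fTq P (hq n hn y hy)) ha.le (haf y hy) hl (hlq y hy))
    refine le_trans ?_ h1
    rw [mul_comm]
    apply mul_le_mul_of_nonneg_left (hkap _ _ (P.bpos _) hr hbr x0 x hx) (by positivity)
  set κ1 := κK * (a ^ η * (P.c * a / 2) ^ (1 - η)) with hκ1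
  have hkappaPos : 0 < κ1 := by positivity
  have hD1 : ∀ n, n1 ≤ n → b (n+1) * ρ ≤ r → ∀ x ∈ ball x0 r,
      κ1 * lam n ^ (1 - η) ≤ GG η f (q n) (TT P n) (kx K b x n) := by
    intro n hn hbr x hx
    have hl := P.lpos n
    have := hD n hn hbr (P.c * a / 2 * lam n) (by positivity) (fun y hy => by
      refine le_trans ?_ (hq n hn y hy)
      have h1 := P.hfq y
      have h2 := haf y hy
      have : P.c * a ≤ q0 y := le_trans (by gcongr) h1
      nlinarith) x hx
    rw [Real.mul_rpow (by positivity) hl.le] at this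
    rw [hκ1]; linarith
  -- eventually b small
  have hbs : ∀ᶠ n in atTop, b (n+1) * ρ ≤ r := by
    have : Tendsto (fun n => b (n+1) * ρ) atTop (𝓝 0) := by
      simpa using ((tendsto_add_atTop_iff_nat 1).2 P.b0).mul_const ρ
    exact (this.eventually (gt_mem_nhds hr)).mono fun n h => h.le
  obtain ⟨n3, hn3⟩ := eventually_atTop.1 (hbs.and (eventually_ge_atTop n1))
  have hn13 : n1 ≤ n3 := (hn3 n3 le_rfl).2
  -- h lower bound
  have hh1 : ∀ᶠ n in atTop, ∀ x ∈ ball x0 r, κ1 / 2 * lam n ^ (1 - η) ≤ hh P q (kx K b x) n := by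
    have he : ∀ᶠ n in atTop, ee P.N γ n / ee P.N γ n3 < 1/2 := by
      have : Tendsto (fun n => ee P.N γ n / ee P.N γ n3) atTop (𝓝 0) := by
        simpa using (ee_tend P).div_const (ee P.N γ n3)
      exact this.eventually (gt_mem_nhds (by norm_num))
    filter_upwards [he, eventually_ge_atTop n3] with n hen hnn x hx
    have h := lin_ge P (u := hh P q (kx K b x)) (A := κ1 * lam n ^ (1 - η)) (hn1.trans hn13) hnn
      (fun k h1 h2 => by
        have h3 := hD1 k (hn13.trans h1) (hn3 k h1).1 x hx
        unfold hh
        rw [rseq_succ (hn1.trans (hn13.trans h1))]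
        have h4 := lam_anti_rpow P h2.le
        have h5 := P.γpos (k+1)
        have h6 : κ1 * lam n ^ (1 - η) ≤ GG η f (q k) (TT P k) (kx K b x k) :=
          le_trans (by gcongr) h3
        gcongr)
    have h0 := hh_nonneg H n3 x
    have hA : 0 ≤ κ1 * lam n ^ (1 - η) := by have := P.lpos n; positivity
    have hr0 : 0 ≤ ee P.N γ n / ee P.N γ n3 := (div_pos (ee_pos P n) (ee_pos P n3)).le
    have h7 : 0 ≤ ee P.N γ n / ee P.N γ n3 * hh P q (kx K b x) n3 := mul_nonneg hr0 h0
    nlinarith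
  obtain ⟨M, hM⟩ := H.gbd P.N
  have hM0 : 0 ≤ M := (abs_nonneg _).trans (hM 0)
  -- h ≤ 2 g
  have hh2 : ∀ᶠ n in atTop, ∀ x ∈ ball x0 r, hh P q (kx K b x) n ≤ 2 * g n x := by
    filter_upwards [hh1, H.zsmall (κ1/8) (by positivity), ee_small P (C := κ1 / (8 * (M+1))) (by positivity),
      eventually_ge_atTop P.N, eventually_ge_atTop ⌈‖x0‖ + r⌉₊] with n h1 hz he hn hnx x hx
    have h2 := h1 x hx
    have hxn : ‖x‖ ≤ n := by
      have h3 : ‖x0‖ + r ≤ n := Nat.ceil_le.1 hnx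
      have h4 : ‖x‖ ≤ ‖x0‖ + ‖x - x0‖ := by
        have := norm_add_le x0 (x - x0); simpa using this
      rw [mem_ball, dist_eq_norm] at hx
      linarith
    have h3 := (abs_le.1 (hz x hxn)).1
    have h4 := g_ge H hn x
    have h5 := lam_rpow_le P hn
    have h6 := P.lpos n
    have h7 : ee P.N γ n * M ≤ κ1/8 * lam n ^ (1-η) := by
      calc _ ≤ κ1 / (8 * (M+1)) * lam n * M := by gcongr
        _ = (κ1/8 * lam n) * (M / (M+1)) := by field_simp
        _ ≤ (κ1/8 * lam n) * 1 := by
            gcongr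
            rw [div_le_one (by positivity)]; linarith
        _ ≤ _ := by rw [mul_one]; gcongr
    have h8 : -(ee P.N γ n * M) ≤ ee P.N γ n * g P.N x := by
      have := mul_le_mul_of_nonneg_left (abs_le.1 (hM x)).1 (ee_pos P n).le
      linarith
    linarith
  set κ' := κK * (a ^ η * (1/8) ^ (1 - η)) with hκ'
  have hκ'p : 0 < κ' := by positivity
  have hgl : ∀ᶠ n in atTop, γ (n+1) * κ' ≤ (κ1/2 * lam n ^ (1-η)) ^ η := by
    have hp : 0 < (κ1/2) ^ η := by positivity
    filter_upwards [(γlam_tend P).eventually (gt_mem_nhds (div_pos hp hκ'p)), eventually_ge_atTop P.N]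
      with n h1 hn
    have hl := P.lpos n
    have hl1 : lam n ≤ 1 := (P.lN n hn).trans (by norm_num)
    rw [Real.mul_rpow (by positivity) (by positivity), ← Real.rpow_mul hl.le]
    have h2 : lam n ≤ lam n ^ ((1-η)*η) := by
      conv_lhs => rw [← Real.rpow_one (lam n)]
      apply Real.rpow_le_rpow_of_exponent_ge hl hl1
      nlinarith
    have h3 : γ (n+1) ≤ γ n := P.γanti (Nat.le_succ n)
    rw [div_lt_div_iff₀ hl hκ'p] at h1
    calc _ ≤ γ n * κ' := by gcongr
      _ ≤ (κ1/2)^η * lam n := h1.le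
      _ ≤ _ := by gcongr
  obtain ⟨n2, hn2⟩ := eventually_atTop.1 (hh1.and (hh2.and (hgl.and (eventually_ge_atTop n3))))
  have hn23 : n3 ≤ n2 := (hn2 n2 le_rfl).2.2.2
  have hn12 := hn13.trans hn23
  refine ⟨(κ'/2) ^ (1/η) / 2, by positivity, (1/2) ^ (4/η), by positivity, n2, hn12, ?_⟩
  intro k0 hk0 n hn hen hmk x hx
  have main : ∀ k, k0 ≤ k → k ≤ n → ∀ x ∈ ball x0 r,
      κ' - κ' * (ee P.N γ k / ee P.N γ k0) ^ (η/4) ≤ (hh P q (kx K b x) k) ^ η := by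
    intro k hk
    induction k, hk using Nat.le_induction with
    | base =>
      intro _ x hx
      rw [div_self (ee_pos P k0).ne', Real.one_rpow]
      have := Real.rpow_nonneg (hh_nonneg H k0 x) η
      linarith
    | succ k hk ih =>
      intro hkn x hx
      have ih' := ih (by omega)
      have hkn2 : n2 ≤ k := hk0.trans hk
      have hkN : P.N ≤ k := hn1.trans (hn12.trans hkn2)
      obtain ⟨c1, c2, c3, c4⟩ := hn2 k hkn2
      have hlk := P.lpos k
      have he0 : 0 < ee P.N γ k / ee P.N γ k0 := div_pos (ee_pos P k) (ee_pos P k0)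
      set y := κ' * (ee P.N γ k / ee P.N γ k0) ^ (η/4) with hy
      have hy0 : 0 ≤ y := by positivity
      have he1 : ee P.N γ k / ee P.N γ k0 ≤ 1 := by
        rw [div_le_one (ee_pos P k0)]; exact ee_anti P hk
      have hyk : y ≤ κ' := by
        have : (ee P.N γ k / ee P.N γ k0) ^ (η/4) ≤ 1 := Real.rpow_le_one he0.le he1 (by positivity)
        nlinarith
      set l := max ((κ' - y) ^ (1/η)) (κ1/2 * lam k ^ (1-η)) with hl
      have hl2 : κ1/2 * lam k ^ (1-η) ≤ l := le_max_right _ _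
      have hl0 : 0 < l := lt_of_lt_of_le (by positivity) hl2
      have hlh : ∀ z ∈ ball x0 r, l ≤ hh P q (kx K b z) k := by
        intro z hz
        apply max_le _ (c1 z hz)
        have h1 := ih' z hz
        rw [one_div]
        exact (Real.rpow_inv_le_iff_of_pos (by linarith) (hh_nonneg H k z) hη).2 h1
      have hly : κ' - y ≤ l ^ η := by
        have h1 : ((κ' - y) ^ (1/η)) ^ η ≤ l ^ η :=
          Real.rpow_le_rpow (Real.rpow_nonneg (by linarith) _) (le_max_left _ _) hη.le
        rwa [← Real.rpow_mul (by linarith), one_div, inv_mul_cancel₀ hη.ne', Real.rpow_one] at h1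
      have hgk : γ (k+1) * κ' ≤ l ^ η :=
        c3.trans (Real.rpow_le_rpow (by positivity) hl2 hη.le)
      have hgr := grow hη hη1 hl0 hκ'p (P.γpos (k+1)) (P.γN (k+1) (by omega)) hgk hy0 hly
      have hyy : y * (1 - γ (k+1)) ^ (η/4) = κ' * (ee P.N γ (k+1) / ee P.N γ k0) ^ (η/4) := by
        rw [ee_succ hkN, mul_div_assoc, Real.mul_rpow (by linarith [P.g1 hkN]) he0.le, hy]; ring
      rw [hyy] at hgr
      refine hgr.trans ?_
      have hq8 : ∀ z ∈ ball x0 r, l / 8 ≤ q k z := by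
        intro z hz
        have h1 := hlh z hz
        have h2 := c2 z hz
        have h3 := hm k (hn12.trans hkn2)
        have h4 := hmk k hk (by omega)
        have h5 := P.lN k hkN
        rw [H.qrec k hkN z]
        have h6 : l / 4 ≤ g k z / ∫ y, g k y := by
          rw [le_div_iff₀ h3]; nlinarith
        have h7 := mul_nonneg hlk.le (P.q00 z)
        nlinarith
      have hDk := hD k (hn12.trans hkn2) (hn3 k (hn23.trans hkn2)).1 (l/8) (by positivity) hq8 x hx
      have e1 : κK * (a ^ η * (l/8) ^ (1 - η)) = κ' * l ^ (1 - η) := by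
        rw [div_eq_mul_one_div l 8, Real.mul_rpow hl0.le (by norm_num), hκ']; ring
      rw [e1] at hDk
      have hg1 := P.g1 hkN
      have hgp := P.γpos (k+1)
      apply Real.rpow_le_rpow (by positivity) _ hη.le
      unfold hh
      rw [rseq_succ hkN]
      have := hlh x hx
      unfold hh at this
      gcongr
  have hm1 := main n hn le_rfl x hx
  have hn2n := hn2 n (hk0.trans hn)
  have h2 := hn2n.2.1 x hx
  have hr2 : ee P.N γ n / ee P.N γ k0 ≤ (1/2) ^ (4/η) := by
    rw [div_le_iff₀ (ee_pos P k0)]; exact hen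
  have hr3 : (ee P.N γ n / ee P.N γ k0) ^ (η/4) ≤ 1/2 := by
    have := Real.rpow_le_rpow (div_pos (ee_pos P n) (ee_pos P k0)).le hr2 (by positivity : 0 ≤ η/4)
    rw [← Real.rpow_mul (by norm_num)] at this
    have e : 4 / η * (η/4) = 1 := by field_simp
    rwa [e, Real.rpow_one] at this
  have h4 : κ'/2 ≤ (hh P q (kx K b x) n) ^ η := by nlinarith
  have h5 : (κ'/2) ^ (1/η) ≤ hh P q (kx K b x) n := by
    rw [one_div]
    exact (Real.rpow_inv_le_iff_of_pos (by positivity) (hh_nonneg H n x) hη).2 h4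
  linarith

end path
end Midas

namespace Midas
section path
variable {d : ℕ} {η : ℝ} {f q0 K : EE d → ℝ} {γ b lam : ℕ → ℝ}
variable {P : Par d η f q0 K γ b lam} {X : ℕ → EE d} {g q : ℕ → EE d → ℝ}

lemma m_pos_of (H : Path P X g q) {n k : ℕ} (hn : P.N ≤ n) (hk : n ≤ k) (h : 0 < ∫ y, g n y) :
    0 < ∫ y, g k y :=
  lt_of_lt_of_le (mul_pos (div_pos (ee_pos P k) (ee_pos P n)) h) (m_mono H hn hk)

lemma q_ge_of_nonneg (H : Path P X g q) {n : ℕ} (hn : P.N ≤ n) (h : 0 < ∫ y, g n y) {y : EE d}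
    (hg : 0 ≤ g n y) : lam n / 2 * q0 y ≤ q n y := by
  rw [H.qrec n hn y]
  have h1 := P.lN n hn
  have h2 := mul_nonneg (P.lpos n).le (P.q00 y)
  have h3 : 0 ≤ (1 - lam n) * (g n y / ∫ y, g n y) := mul_nonneg (by linarith) (div_nonneg hg h.le)
  linarith

lemma vol_ball_pos (x0 : EE d) {r : ℝ} (hr : 0 < r) : 0 < (volume (ball x0 r)).toReal :=
  ENNReal.toReal_pos (measure_ball_pos _ _ hr).ne' measure_ball_lt_top.ne

/-- key: exploration dominates eventually -/
lemma S2b (H : Path P X g q) {x0 : EE d} {r a : ℝ} (hr : 0 < r) (ha : 0 < a)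
    (haf : ∀ y ∈ ball x0 r, a ≤ f y) {n1 : ℕ} (hn1 : P.N ≤ n1)
    (hm : 0 < ∫ y, g n1 y) (hgp : ∀ y ∈ ball x0 r, 0 ≤ g n1 y) {C : ℝ} (hC : 0 < C) :
    ∀ᶠ n in atTop, C * ee P.N γ n ≤ lam n * ∫ y, g n y := by
  have hmn : ∀ n, n1 ≤ n → 0 < ∫ y, g n y := fun n hn => m_pos_of H hn1 hn hm
  have hgn : ∀ n, n1 ≤ n → ∀ y ∈ ball x0 r, 0 ≤ g n y := fun n hn y hy =>
    le_trans (mul_nonneg (div_pos (ee_pos P n) (ee_pos P n1)).le (hgp y hy)) (g_mono H hn1 hn y)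
  obtain ⟨κ, hκ, θ, hθ, n2, hn2, hball⟩ := ball_lemma H hr ha haf hn1 hmn (fun n hn y hy =>
    q_ge_of_nonneg H (hn1.trans hn) (hmn n hn) (hgn n hn y hy))
  have hv := vol_ball_pos x0 hr
  set v := (volume (ball x0 r)).toReal with hvdef
  set I := ∫ y, |g P.N y| with hI
  have hI0 : 0 ≤ I := integral_nonneg fun y => abs_nonneg _
  have hN2 : P.N ≤ n2 := hn1.trans hn2
  have hlim2 : ∀ᶠ n in atTop, C * (ee P.N γ n / lam n) + ee P.N γ n * I < κ * v := by
    have : Tendsto (fun n => C * (ee P.N γ n / lam n) + ee P.N γ n * I) atTop (𝓝 (C * 0 + 0 * I)) :=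
      ((eelam_tend P).const_mul C).add ((ee_tend P).mul_const I)
    rw [mul_zero, zero_mul, add_zero] at this
    exact this.eventually (gt_mem_nhds (by positivity))
  have hlim3 : ∀ᶠ n in atTop, lam n < C * ee P.N γ n2 :=
    P.l0.eventually (gt_mem_nhds (mul_pos hC (ee_pos P n2)))
  filter_upwards [hlim2, hlim3, ee_small P (C := 1/C) (by positivity), ee_small P (C := θ / (2*C)) (by positivity),
    eventually_ge_atTop n2] with n h2 h3 h4 h5 hnn
  by_contra hcon
  push Not at hcon
  have hl := P.lpos n
  -- first index
  classical
  have hexn : C * ee P.N γ n ≤ lam n := by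
    have : C * ee P.N γ n ≤ C * (1 / C * lam n) := by gcongr
    rwa [← mul_assoc, mul_one_div_cancel hC.ne', one_mul] at this
  have hex : ∃ k, C * ee P.N γ k ≤ lam n := ⟨n, hexn⟩
  set k0 := Nat.find hex with hk0
  have hk0s : C * ee P.N γ k0 ≤ lam n := Nat.find_spec hex
  have hk0n : k0 ≤ n := Nat.find_min' hex hexn
  have hk02 : n2 ≤ k0 := by
    by_contra hh
    push Not at hh
    have := ee_anti P hh.le
    have : C * ee P.N γ n2 ≤ C * ee P.N γ k0 := by gcongr
    linarith
  have hk0pos : 1 ≤ k0 := P.N1.trans (hN2.trans hk02)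
  have hk0' : lam n < C * ee P.N γ (k0 - 1) := by
    have := Nat.find_min hex (m := k0 - 1) (by omega)
    push Not at this
    exact this
  have hhalf := ee_half P (k0 - 1)
  rw [Nat.sub_add_cancel hk0pos] at hhalf
  have hmk : ∀ k, k0 ≤ k → k < n → ∫ y, g k y ≤ 2 := by
    intro k h6 h7
    have h8 := m_mono H (hN2.trans (hk02.trans h6)) h7.le
    have hek := ee_pos P k
    have hen := ee_pos P n
    have h9 : C * ee P.N γ k ≤ lam n := le_trans (by have := ee_anti P h6; gcongr) hk0s
    have hmk0 := hmn k (hn2.trans (hk02.trans h6))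
    have h10 : lam n * (ee P.N γ n / ee P.N γ k * ∫ y, g k y) < C * ee P.N γ n :=
      lt_of_le_of_lt (by gcongr) hcon
    have h11 : lam n * (∫ y, g k y) < C * ee P.N γ k := by
      have e : lam n * (ee P.N γ n / ee P.N γ k * ∫ y, g k y) = (ee P.N γ n / ee P.N γ k) * (lam n * ∫ y, g k y) := by ring
      have e2 : C * ee P.N γ n = (ee P.N γ n / ee P.N γ k) * (C * ee P.N γ k) := by field_simp
      rw [e, e2] at h10
      exact lt_of_mul_lt_mul_left h10 (by positivity)
    have : lam n * (∫ y, g k y) < lam n * 1 := by linarith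
    have := lt_of_mul_lt_mul_left this hl.le
    linarith
  have hb := hball k0 hk02 n hk0n (by
    have : lam n / (2 * C) ≤ ee P.N γ k0 := by
      rw [div_le_iff₀ (by positivity)]
      nlinarith
    calc _ ≤ θ / (2*C) * lam n := h5
      _ = θ * (lam n / (2*C)) := by ring
      _ ≤ _ := by gcongr) hmk
  have hmlow : κ * v - ee P.N γ n * I ≤ ∫ y, g n y := by
    have e1 : κ * v = ∫ y, (ball x0 r).indicator (fun _ => κ) y := by
      rw [integral_indicator measurableSet_ball, setIntegral_const, smul_eq_mul, mul_comm]; rfl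
    rw [e1, hI, ← integral_const_mul, ← integral_sub]
    · apply integral_mono _ (H.gInt n)
      · intro y
        have h6 := g_mono H le_rfl (hN2.trans hnn) y
        rw [ee_le_N (le_refl P.N), div_one] at h6
        have h7 : -(ee P.N γ n * |g P.N y|) ≤ ee P.N γ n * g P.N y := by
          rw [← mul_neg]
          exact mul_le_mul_of_nonneg_left (neg_abs_le _) (ee_pos P n).le
        have h8 := mul_nonneg (ee_pos P n).le (abs_nonneg (g P.N y))
        by_cases hy : y ∈ ball x0 r
        · simp only [Set.indicator_of_mem hy]
          have := hb y hy
          linarith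
        · simp only [Set.indicator_of_notMem hy]
          linarith
      · refine Integrable.sub ?_ (((H.gInt _).abs).const_mul _)
        exact (integrable_indicator_iff measurableSet_ball).2 (integrableOn_const measure_ball_lt_top.ne)
    · exact (integrable_indicator_iff measurableSet_ball).2 (integrableOn_const measure_ball_lt_top.ne)
    · exact ((H.gInt _).abs).const_mul _
  have h6 : ∫ y, g n y < C * (ee P.N γ n / lam n) := by
    rw [← mul_div_assoc, lt_div_iff₀ hl]; linarith
  linarith

lemma S3 (H : Path P X g q) : ∃ n1, P.N ≤ n1 ∧ ∀ n, n1 ≤ n → 0 < ∫ y, g n y ∧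
    ∀ y, lam n / 2 * q0 y ≤ q n y := by
  obtain ⟨n0, hn0, hm0⟩ := S1 H
  by_cases hall : ∀ x, 0 ≤ g n0 x
  · refine ⟨n0, hn0, fun n hn => ?_⟩
    have hm := m_pos_of H hn0 hn hm0
    refine ⟨hm, fun y => q_ge_of_nonneg H (hn0.trans hn) hm ?_⟩
    exact le_trans (mul_nonneg (div_pos (ee_pos P n) (ee_pos P n0)).le (hall y)) (g_mono H hn0 hn y)
  -- find the ball
  have hvol : volume {x | 0 < g n0 x ∧ f x = 0} = 0 := by
    by_contra h
    exact hall (H.forced n0 hn0 hm0 (pos_iff_ne_zero.2 h))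
  have hne : ∃ x, 0 < g n0 x := by
    by_contra h
    push Not at h
    have := integral_nonpos (μ := volume) (f := g n0) h
    linarith
  have hopen : IsOpen {x | 0 < g n0 x} := isOpen_lt continuous_const (H.gcont n0)
  have hex : ∃ x, 0 < g n0 x ∧ 0 < f x := by
    by_contra h
    push Not at h
    have hsub : {x | 0 < g n0 x} ⊆ {x | 0 < g n0 x ∧ f x = 0} := fun x hx =>
      ⟨hx, le_antisymm (h x hx) (P.f0 x)⟩
    have h1 : volume {x | 0 < g n0 x} = 0 := measure_mono_null hsub hvol
    exact (hopen.measure_pos volume hne).ne' h1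
  obtain ⟨x0, hx0, hfx0⟩ := hex
  have hopen2 : IsOpen ({x | 0 < g n0 x} ∩ {x | f x0 / 2 < f x}) :=
    hopen.inter (isOpen_lt continuous_const P.fcont)
  obtain ⟨r, hr, hsub⟩ := Metric.isOpen_iff.1 hopen2 x0 ⟨hx0, by
    show f x0 / 2 < f x0
    linarith⟩
  set C0 := 2 * (∫ y, g n0 y) * lam n0 with hC0
  have hl0 := P.lpos n0
  have hC0p : 0 < C0 := by positivity
  have hglow : ∀ y, -(C0 * q0 y) ≤ g n0 y := by
    intro y
    have h1 := H.qpos n0 hn0 y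
    rw [H.qrec n0 hn0 y] at h1
    have h2 := P.lN n0 hn0
    have h3 := P.q00 y
    have h4 : 0 ≤ (1 - lam n0) * g n0 y + lam n0 * q0 y * ∫ y, g n0 y := by
      have := mul_nonneg h1 hm0.le
      have e : ((1 - lam n0) * (g n0 y / ∫ y, g n0 y) + lam n0 * q0 y) * (∫ y, g n0 y) =
          (1 - lam n0) * g n0 y + lam n0 * q0 y * ∫ y, g n0 y := by
        have := hm0.ne'
        field_simp
      linarith
    by_cases hg : 0 ≤ g n0 y
    · have : 0 ≤ C0 * q0 y := by positivity
      linarith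
    · push Not at hg
      have : (1 - lam n0) * g n0 y ≤ 1/2 * g n0 y := by nlinarith
      rw [hC0]; linarith
  have hev := S2b H hr (half_pos hfx0) (fun y hy => (hsub hy).2.le) hn0 hm0 (fun y hy => (hsub hy).1.le)
    (C := 2 * C0 / ee P.N γ n0) (by have := ee_pos P n0; positivity)
  obtain ⟨n1, hn1⟩ := eventually_atTop.1 (hev.and (eventually_ge_atTop n0))
  refine ⟨n1, hn0.trans (hn1 n1 le_rfl).2, fun n hn => ?_⟩
  obtain ⟨h1, h2⟩ := hn1 n hn
  have hm := m_pos_of H hn0 h2 hm0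
  refine ⟨hm, fun y => ?_⟩
  have hnN := hn0.trans h2
  rw [H.qrec n hnN y]
  have hl := P.lpos n
  have hl2 := P.lN n hnN
  have hq := P.q00 y
  have he := ee_pos P n
  have he0 := ee_pos P n0
  have h3 : -(ee P.N γ n / ee P.N γ n0 * (C0 * q0 y)) ≤ g n y := by
    refine le_trans ?_ (g_mono H hn0 h2 y)
    rw [← mul_neg]
    apply mul_le_mul_of_nonneg_left (hglow y) (by positivity)
  have h4 : -(lam n / 2 * q0 y) ≤ g n y / ∫ y, g n y := by
    rw [le_div_iff₀ hm]
    refine le_trans ?_ h3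
    have e : ee P.N γ n / ee P.N γ n0 * (C0 * q0 y) = (2 * C0 / ee P.N γ n0 * ee P.N γ n) / 2 * q0 y := by
      field_simp
    rw [e]
    have := mul_le_mul_of_nonneg_right h1 hq
    linarith
  have h5 : 0 ≤ lam n / 2 * q0 y := by positivity
  nlinarith

end path
end Midas

namespace Midas
section path
variable {d : ℕ} {η : ℝ} {f q0 K : EE d → ℝ} {γ b lam : ℕ → ℝ}
variable {P : Par d η f q0 K γ b lam} {X : ℕ → EE d} {g q : ℕ → EE d → ℝ}

/-- stationary regime -/
structure Good (P : Par d η f q0 K γ b lam) (X : ℕ → EE d) (g q : ℕ → EE d → ℝ) (n1 : ℕ) (C : ℝ) : Prop where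
  N1 : P.N ≤ n1
  mpos : ∀ n, n1 ≤ n → 0 < ∫ y, g n y
  qlow : ∀ n, n1 ≤ n → ∀ y, lam n / 2 * q0 y ≤ q n y
  C0 : 0 ≤ C
  gapp : ∀ n, n1 ≤ n → ∀ x, |g n x - (hh P q (kx K b x) n + zz P q X (kx K b x) n)| ≤ C * ee P.N γ n
  mapp : ∀ n, n1 ≤ n → |(∫ y, g n y) - (hh P q k1 n + zz P q X k1 n)| ≤ C * ee P.N γ n

lemma exists_good (H : Path P X g q) : ∃ n1 C, Good P X g q n1 C := by
  obtain ⟨n1, hn1, h⟩ := S3 H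
  have htw : ∀ n, n1 ≤ n → ∀ y, tw f (q n) (TT P n) y = f y / q n y := fun n hn y =>
    tw_eq P (H.qpos n (hn1.trans hn)) (TT_pos P n) y (fTq P ((h n hn).2 y))
  obtain ⟨M1, hM1⟩ := H.gbd n1
  obtain ⟨M2, hM2⟩ := H.gbd P.N
  set G : ℕ → EE d → ℝ := fun n x => hh P q (kx K b x) n + zz P q X (kx K b x) n with hG
  set Gm : ℕ → ℝ := fun n => hh P q k1 n + zz P q X k1 n with hGm
  have heq : ∀ n, n1 ≤ n → ∀ x, g n x - G n x = ee P.N γ n / ee P.N γ n1 * (g n1 x - G n1 x) := by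
    intro n hn x
    have hrec : ∀ k, n1 ≤ k → g (k+1) x - G (k+1) x = (1 - γ (k+1)) * (g k x - G k x) + γ (k+1) * 0 := by
      intro k hk
      simp only [hG, hz]
      rw [rseq_succ (hn1.trans hk), H.grec k (hn1.trans hk), htw k hk, kx]
      ring
    apply le_antisymm
    · have := lin_le P (u := fun k => g k x - G k x) (A := 0) hn1 hn (fun k h1 _ => (hrec k h1).le)
      simpa using this
    · have := lin_ge P (u := fun k => g k x - G k x) (A := 0) hn1 hn (fun k h1 _ => (hrec k h1).ge)
      simpa using this
  have heqm : ∀ n, n1 ≤ n → (∫ y, g n y) - Gm n = ee P.N γ n / ee P.N γ n1 * ((∫ y, g n1 y) - Gm n1) := by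
    intro n hn
    have hrec : ∀ k, n1 ≤ k → (∫ y, g (k+1) y) - Gm (k+1) = (1 - γ (k+1)) * ((∫ y, g k y) - Gm k) + γ (k+1) * 0 := by
      intro k hk
      simp only [hGm, hz]
      rw [rseq_succ (hn1.trans hk), m_succ H (hn1.trans hk), htw k hk, k1]
      ring
    apply le_antisymm
    · have := lin_le P (u := fun k => (∫ y, g k y) - Gm k) (A := 0) hn1 hn (fun k h1 _ => (hrec k h1).le)
      simpa using this
    · have := lin_ge P (u := fun k => (∫ y, g k y) - Gm k) (A := 0) hn1 hn (fun k h1 _ => (hrec k h1).ge)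
      simpa using this
  have hGb : ∀ x, |g n1 x - G n1 x| ≤ 2 * M1 + M2 := by
    intro x
    have h1 := g_ge H hn1 x
    have h2 : 0 ≤ G n1 x := by
      simp only [hG, hz]
      apply rseq_nonneg P
      intro k hk _
      exact mul_nonneg (twp_nonneg P (H.qpos k hk) (TT_pos P k) _) (kb_nonneg P (P.bpos _) _)
    have h3 := abs_le.1 (hM1 x)
    have h4 := abs_le.1 (hM2 x)
    have h5 : -M2 ≤ ee P.N γ n1 * g P.N x := by
      have h6 := ee_le_one P n1
      have h7 := ee_pos P n1
      have : 0 ≤ M2 := (abs_nonneg _).trans (hM2 x)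
      nlinarith
    have h8 : G n1 x ≤ g n1 x - ee P.N γ n1 * g P.N x := by simp only [hG]; linarith
    have hM20 : 0 ≤ M2 := (abs_nonneg _).trans (hM2 x)
    rw [abs_le]; constructor <;> linarith
  have hM0 : 0 ≤ 2 * M1 + M2 := (abs_nonneg _).trans (hGb 0)
  have hen1 := ee_pos P n1
  refine ⟨n1, (2 * M1 + M2) / ee P.N γ n1 + |(∫ y, g n1 y) - Gm n1| / ee P.N γ n1,
    hn1, fun n hn => (h n hn).1, fun n hn => (h n hn).2, by positivity, ?_, ?_⟩
  · intro n hn x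
    have hen := ee_pos P n
    rw [show g n x - (hh P q (kx K b x) n + zz P q X (kx K b x) n) = _ from heq n hn x, abs_mul,
      abs_of_pos (by positivity)]
    calc _ ≤ ee P.N γ n / ee P.N γ n1 * (2 * M1 + M2) := by gcongr; exact hGb x
      _ = (2 * M1 + M2) / ee P.N γ n1 * ee P.N γ n := by ring
      _ ≤ _ := by
        gcongr
        have : 0 ≤ |(∫ y, g n1 y) - Gm n1| / ee P.N γ n1 := by positivity
        linarith
  · intro n hn
    have hen := ee_pos P n
    rw [show (∫ y, g n y) - (hh P q k1 n + zz P q X k1 n) = _ from heqm n hn, abs_mul,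
      abs_of_pos (by positivity)]
    calc _ = |(∫ y, g n1 y) - Gm n1| / ee P.N γ n1 * ee P.N γ n := by ring
      _ ≤ _ := by
        gcongr
        have : 0 ≤ (2 * M1 + M2) / ee P.N γ n1 := by positivity
        linarith

variable {n1 : ℕ} {C : ℝ}

lemma lam_rpow_le_one (P : Par d η f q0 K γ b lam) {n : ℕ} (h : P.N ≤ n) : lam n ^ (1 - η) ≤ 1 :=
  Real.rpow_le_one (P.lpos n).le ((P.lN n h).trans (by norm_num)) (by linarith [P.hη1])

lemma ee_small' (P : Par d η f q0 K γ b lam) (C : ℝ) {δ : ℝ} (hδ : 0 < δ) :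
    ∀ᶠ n in atTop, C * ee P.N γ n < δ := by
  have : Tendsto (fun n => C * ee P.N γ n) atTop (𝓝 0) := by simpa using (ee_tend P).const_mul C
  exact this.eventually (gt_mem_nhds hδ)

lemma S4 (H : Path P X g q) (G : Good P X g q n1 C) {δ : ℝ} (hδ : 0 < δ) :
    ∀ᶠ n in atTop, ∫ y, g n y ≤ 1 + δ := by
  filter_upwards [H.zmsmall (δ/2) (by positivity), ee_small' P C (half_pos hδ), eventually_ge_atTop n1]
    with n h1 h2 hn
  have h3 := (abs_le.1 (G.mapp n hn)).2
  have h4 := (abs_le.1 h1).2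
  have h5 := lam_rpow_le_one P (G.N1.trans hn)
  have h6 : hh P q k1 n ≤ 1 := by
    have := lin_le P (u := hh P q k1) (A := 1) le_rfl (G.N1.trans hn) (fun k h1 _ => by
      unfold hh
      rw [rseq_succ h1]
      have hS := S_le P (H.qpos k h1) (H.qInt k h1) (H.qint k h1) (TT_pos P k)
      have := P.γpos (k+1)
      gcongr
      exact hS)
    have h0 : hh P q k1 P.N = 0 := rseq_le_N le_rfl
    rw [h0] at this
    have h7 : 0 ≤ ee P.N γ n / ee P.N γ P.N := (div_pos (ee_pos P _) (ee_pos P _)).le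
    linarith
  nlinarith

lemma S5 (H : Path P X g q) (G : Good P X g q n1 C) {x0 : EE d} {r a : ℝ} (hr : 0 < r) (ha : 0 < a)
    (haf : ∀ y ∈ ball x0 r, a ≤ f y) : ∃ κ > 0, ∀ᶠ n in atTop, ∀ y ∈ ball x0 r, κ ≤ g n y := by
  obtain ⟨κ, hκ, θ, hθ, n2, hn2, hball⟩ := ball_lemma H hr ha haf G.N1 G.mpos (fun n hn y _ => G.qlow n hn y)
  obtain ⟨n3, hn3⟩ := eventually_atTop.1 (S4 H G one_pos)
  refine ⟨κ, hκ, ?_⟩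
  have h1 : ∀ᶠ n in atTop, 1 * ee P.N γ n < θ * ee P.N γ (max n2 n3) :=
    ee_small' P 1 (mul_pos hθ (ee_pos P _))
  filter_upwards [h1, eventually_ge_atTop (max n2 n3)] with n h1 hn
  exact hball (max n2 n3) (le_max_left _ _) n hn (by linarith) (fun k hk _ => by
    have := hn3 k ((le_max_right _ _).trans hk)
    linarith)

lemma norm_ev (x0 : EE d) (r : ℝ) : ∀ᶠ n : ℕ in atTop, ∀ x ∈ ball x0 r, ‖x‖ ≤ n := by
  filter_upwards [eventually_ge_atTop ⌈‖x0‖ + r⌉₊] with n hn x hx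
  have h3 : ‖x0‖ + r ≤ n := Nat.ceil_le.1 hn
  have h4 : ‖x‖ ≤ ‖x0‖ + ‖x - x0‖ := by
    have := norm_add_le x0 (x - x0); simpa using this
  rw [mem_ball, dist_eq_norm] at hx
  linarith

lemma ball_sub {x0 x : EE d} {ε ε' : ℝ} (hx : x ∈ ball x0 ε') : ball x (ε - ε') ⊆ ball x0 ε := by
  apply ball_subset_ball'
  rw [mem_ball] at hx
  linarith

lemma gz_ev (H : Path P X g q) (G : Good P X g q n1 C) (x0 : EE d) (r : ℝ) {δ : ℝ} (hδ : 0 < δ) :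
    ∀ᶠ n in atTop, ∀ x ∈ ball x0 r, |g n x - hh P q (kx K b x) n| ≤ δ := by
  filter_upwards [H.zsmall (δ/2) (by positivity), ee_small' P C (half_pos hδ), eventually_ge_atTop n1,
    norm_ev x0 r] with n h1 h2 hn hx x hxb
  have h3 := abs_le.1 (G.gapp n hn x)
  have h4 := abs_le.1 (h1 x (hx x hxb))
  have h5 := lam_rpow_le_one P (G.N1.trans hn)
  rw [abs_le]
  constructor <;> nlinarith

lemma b_ev (P : Par d η f q0 K γ b lam) {β : ℝ} (hβ : 0 < β) : ∀ᶠ n in atTop, b (n+1) < β :=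
  ((tendsto_add_atTop_iff_nat 1).2 P.b0).eventually (gt_mem_nhds hβ)

lemma S6 (H : Path P X g q) (G : Good P X g q n1 C) {x0 : EE d} {ε ε' a l l' : ℝ} (ha : 0 < a)
    (haf : ∀ y ∈ ball x0 ε, a ≤ f y) (hl : 0 < l) (hε : ε' < ε) (hl' : l' < a ^ η * l ^ (1 - η))
    (hQ : ∀ᶠ n in atTop, ∀ y ∈ ball x0 ε, l ≤ g n y) :
    ∀ᶠ n in atTop, ∀ y ∈ ball x0 ε', l' ≤ g n y := by
  have hη := P.hη
  have hη1 := P.hη1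
  set A := a ^ η * l ^ (1 - η) with hA
  have hAp : 0 < A := by positivity
  obtain ⟨σ, hσ0, hσ1, hσ⟩ : ∃ σ, 0 < σ ∧ σ < 1 ∧ l' < σ * σ * A := by
    have h1 : Tendsto (fun σ : ℝ => σ * σ * A) (𝓝[<] 1) (𝓝 (1 * 1 * A)) := by
      apply tendsto_nhdsWithin_of_tendsto_nhds
      exact (Continuous.tendsto (by fun_prop) 1)
    rw [one_mul, one_mul] at h1
    have h2 := h1.eventually (lt_mem_nhds hl')
    have h3 : ∀ᶠ σ : ℝ in 𝓝[<] 1, 0 < σ := nhdsWithin_le_nhds (lt_mem_nhds one_pos)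
    obtain ⟨σ, h⟩ := (h2.and (h3.and self_mem_nhdsWithin)).exists
    exact ⟨σ, h.2.1, h.2.2, h.1⟩
  set l2 := σ * σ * A with hl2
  have hl2p : 0 < l2 := by positivity
  obtain ⟨β0, hβ0, hkb⟩ := kb_ball P (sub_pos.2 hε) (θ := 1 - σ) (by linarith)
  -- lower bound of q
  have hσ' : 0 < (1 - σ) / (2 * σ) := div_pos (by linarith) (by positivity)
  have hqe : ∀ᶠ n in atTop, ∀ y ∈ ball x0 ε, σ * l ≤ q n y := by
    filter_upwards [hQ, S4 H G hσ', eventually_ge_atTop n1,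
      P.l0.eventually (gt_mem_nhds (show (0:ℝ) < (1 - σ)/2 by linarith))] with n h1 h2 hn h3 y hy
    rw [H.qrec n (G.N1.trans hn) y]
    have h4 := G.mpos n hn
    have h5 := h1 y hy
    have h6 := mul_nonneg (P.lpos n).le (P.q00 y)
    have h7 : 1 - (1-σ)/2 ≤ 1 - lam n := by linarith
    have h8 : l / (1 + (1 - σ)/(2*σ)) ≤ g n y / ∫ y, g n y := by
      apply div_le_div₀ (by linarith) h5 h4 h2
    have e : (1 - (1-σ)/2) * (l / (1 + (1 - σ)/(2*σ))) = σ * l := by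
      have : 1 + (1 - σ)/(2*σ) = (1+σ)/(2*σ) := by field_simp; ring
      rw [this]
      field_simp
      ring
    have h9 : (1 - (1-σ)/2) * (l / (1 + (1 - σ)/(2*σ))) ≤ (1 - lam n) * (g n y / ∫ y, g n y) := by
      apply mul_le_mul h7 h8 (by positivity) (by linarith)
    linarith
  obtain ⟨n3, hn3⟩ := eventually_atTop.1 (hqe.and ((b_ev P hβ0).and (eventually_ge_atTop n1)))
  have hn13 := (hn3 n3 le_rfl).2.2
  have hlow : ∀ n, n3 ≤ n → ∀ x ∈ ball x0 ε', l2 * (1 - ee P.N γ n / ee P.N γ n3) ≤ hh P q (kx K b x) n := by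
    intro n hn x hx
    have h := lin_ge P (u := hh P q (kx K b x)) (A := l2) (G.N1.trans hn13) hn (fun k h1 _ => by
      obtain ⟨c1, c2, c3⟩ := hn3 k h1
      have hkN := G.N1.trans c3
      have hD := D_low P (H.qpos k hkN) (H.qInt k hkN) (TT_pos P k) (P.bpos (k+1)) x
        (B := ball x (ε - ε')) measurableSet_ball (A := a ^ η * (σ * l) ^ (1 - η)) (fun y hy =>
        twq_ge P (H.qpos k hkN) (TT_pos P k) y (fTq P (G.qlow k c3 y)) ha.le (haf y (ball_sub hx hy))
          (by positivity) (c1 y (ball_sub hx hy)))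
      have hk := hkb (b (k+1)) (P.bpos _) c2 x
      have h2 : l2 ≤ a ^ η * (σ * l) ^ (1 - η) * (∫ y in ball x (ε - ε'), kb K (b (k+1)) (x - y)) := by
        rw [hl2, hA, Real.mul_rpow hσ0.le hl.le]
        have h3 : σ ≤ σ ^ (1 - η) := by
          conv_lhs => rw [← Real.rpow_one σ]
          exact Real.rpow_le_rpow_of_exponent_ge hσ0 hσ1.le (by linarith)
        calc _ = a ^ η * (σ * l ^ (1 - η)) * σ := by ring
          _ ≤ _ := by
            gcongr
            linarith
      unfold hh
      rw [rseq_succ hkN]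
      have := P.γpos (k+1)
      have h5 := h2.trans hD
      gcongr
      exact h5)
    have h0 := hh_nonneg H n3 x
    have hr0 : 0 ≤ ee P.N γ n / ee P.N γ n3 := (div_pos (ee_pos P n) (ee_pos P n3)).le
    have h7 : 0 ≤ ee P.N γ n / ee P.N γ n3 * hh P q (kx K b x) n3 := mul_nonneg hr0 h0
    linarith
  have hdel : 0 < (l2 - l')/2 := by linarith
  filter_upwards [gz_ev H G x0 ε' hdel, ee_small' P (l2 / ee P.N γ n3) hdel, eventually_ge_atTop n3]
    with n h1 h2 hn y hy
  have h3 := hlow n hn y hy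
  have h4 := (abs_le.1 (h1 y hy)).1
  have e : l2 * (1 - ee P.N γ n / ee P.N γ n3) = l2 - l2 / ee P.N γ n3 * ee P.N γ n := by ring
  linarith

lemma iter_tend {A l η : ℝ} (hA : 0 < A) (hl : 0 < l) (hη : 0 < η) (hη1 : η < 1) :
    Tendsto (fun j : ℕ => A * (l / A) ^ ((1 - η) ^ j)) atTop (𝓝 A) := by
  have h1 : Tendsto (fun j : ℕ => (1 - η) ^ j) atTop (𝓝 0) :=
    tendsto_pow_atTop_nhds_zero_of_lt_one (by linarith) (by linarith)
  have h2 : Tendsto (fun t : ℝ => (l/A) ^ t) (𝓝 0) (𝓝 ((l/A) ^ (0:ℝ))) :=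
    (Real.continuousAt_const_rpow (by positivity)).tendsto
  have h3 := (h2.comp h1).const_mul A
  simpa using h3

lemma iter_eq {A l η : ℝ} (hA : 0 < A) (hl : 0 < l) (j : ℕ) :
    A * (l / A) ^ ((1 - η) ^ (j+1)) = A ^ η * (A * (l / A) ^ ((1 - η) ^ j)) ^ (1 - η) := by
  rw [Real.mul_rpow hA.le (by positivity), ← Real.rpow_mul (by positivity), ← mul_assoc, ← Real.rpow_add hA, pow_succ]
  congr 1
  rw [show η + (1 - η) = 1 by ring, Real.rpow_one]

lemma S6b (H : Path P X g q) (G : Good P X g q n1 C) (x0 : EE d) {l : ℝ} (hl : l < f x0) :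
    ∀ᶠ n in atTop, l ≤ g n x0 ∨ l < 0 := by
  by_cases hl0 : l < 0
  · exact Eventually.of_forall fun n => Or.inr hl0
  push Not at hl0
  obtain ⟨a, hla, haf⟩ := exists_between hl
  obtain ⟨A, hlA, hAa⟩ := exists_between hla
  have hA : 0 < A := by linarith
  have ha : 0 < a := by linarith
  have hη := P.hη
  have hη1 := P.hη1
  obtain ⟨r, hr, hsub⟩ := Metric.isOpen_iff.1 (isOpen_lt continuous_const P.fcont : IsOpen {x | a < f x}) x0 haf
  have hfa : ∀ y ∈ ball x0 r, a ≤ f y := fun y hy => le_of_lt (hsub hy)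
  obtain ⟨κ, hκ, hk⟩ := S5 H G hr ha hfa
  have key : ∀ j : ℕ, ∀ ε, ε < r → ∀ᶠ n in atTop, ∀ y ∈ ball x0 ε, A * (κ / A) ^ ((1 - η) ^ j) ≤ g n y := by
    intro j
    induction j with
    | zero =>
      intro ε hε
      filter_upwards [hk] with n hn y hy
      have := hn y (ball_subset_ball hε.le hy)
      rw [pow_zero, Real.rpow_one, mul_div_cancel₀ _ hA.ne']
      exact this
    | succ j ih =>
      intro ε hε
      have h1 := ih ((ε + r)/2) (by linarith)
      refine S6 H G ha (fun y hy => hfa y (ball_subset_ball (by linarith) hy))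
        (l := A * (κ / A) ^ ((1 - η) ^ j)) (by positivity) (by linarith) ?_ h1
      rw [iter_eq hA hκ]
      have : A ^ η < a ^ η := Real.rpow_lt_rpow hA.le hAa hη
      gcongr
  obtain ⟨j, hj⟩ := ((iter_tend hA hκ hη hη1).eventually (lt_mem_nhds hlA)).exists
  filter_upwards [key j (r/2) (by linarith)] with n hn
  exact Or.inl (hj.le.trans (hn x0 (mem_ball_self (by positivity))))

lemma S7 (H : Path P X g q) (G : Good P X g q n1 C) {δ : ℝ} (hδ : 0 < δ) :
    ∀ᶠ n in atTop, 1 - δ ≤ ∫ y, g n y := by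
  set u : ℕ → EE d → ℝ := fun n x => g n x + 2 * (lam n * ∫ y, g n y) * q0 x with hu
  have hu0 : ∀ n, n1 ≤ n → ∀ x, 0 ≤ u n x := by
    intro n hn x
    have h1 := H.qpos n (G.N1.trans hn) x
    rw [H.qrec n (G.N1.trans hn) x] at h1
    have h2 := G.mpos n hn
    have h3 := P.lN n (G.N1.trans hn)
    have h4 := P.lpos n
    have h5 := P.q00 x
    have h6 : 0 ≤ (1 - lam n) * g n x + lam n * q0 x * ∫ y, g n y := by
      have := mul_nonneg h1 h2.le
      have e : ((1 - lam n) * (g n x / ∫ y, g n y) + lam n * q0 x) * (∫ y, g n y) =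
          (1 - lam n) * g n x + lam n * q0 x * ∫ y, g n y := by
        have := h2.ne'
        field_simp
      linarith
    simp only [hu]
    have h8 : 0 ≤ lam n * q0 x * ∫ y, g n y := by positivity
    by_cases hg : 0 ≤ g n x
    · linarith
    · push Not at hg
      nlinarith
  have hlim : ∀ x, ENNReal.ofReal (f x) ≤ liminf (fun n => ENNReal.ofReal (u n x)) atTop := by
    intro x
    apply le_of_forall_lt
    intro t ht
    have htt : t ≠ ∞ := ne_top_of_lt ht
    obtain ⟨s, hts, hsf⟩ := exists_between ht
    refine lt_of_lt_of_le hts ?_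
    apply le_liminf_of_le (by isBoundedDefault)
    have hst : s ≠ ∞ := ne_top_of_lt hsf
    have h1 : s.toReal < f x := (ENNReal.lt_ofReal_iff_toReal_lt hst).1 hsf
    filter_upwards [S6b H G x h1, eventually_ge_atTop n1] with n hn hnn
    rw [ENNReal.le_ofReal_iff_toReal_le hst (hu0 n hnn x)]
    rcases hn with h | h
    · refine h.trans ?_
      simp only [hu]
      have := P.q00 x
      have := P.lpos n
      have := G.mpos n hnn
      have : 0 ≤ 2 * (lam n * ∫ y, g n y) * q0 x := by positivity
      linarith
    · exact absurd h (not_lt.2 ENNReal.toReal_nonneg)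
  have hmeas : ∀ n, Measurable fun x => ENNReal.ofReal (u n x) := fun n =>
    ENNReal.measurable_ofReal.comp ((H.gcont n).add (continuous_const.mul P.q0cont)).measurable
  have hfatou : (∫⁻ x, liminf (fun n => ENNReal.ofReal (u n x)) atTop) ≤ liminf (fun n => ∫⁻ x, ENNReal.ofReal (u n x)) atTop := lintegral_liminf_le hmeas
  have hf1 : (∫⁻ x, ENNReal.ofReal (f x)) = 1 := by
    rw [← ofReal_integral_eq_lintegral_ofReal P.fInt (Eventually.of_forall P.f0), P.fint]; simp
  have h1 : 1 ≤ liminf (fun n => ∫⁻ x, ENNReal.ofReal (u n x)) atTop := by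
    rw [← hf1]
    exact (lintegral_mono hlim).trans hfatou
  have h2 : ENNReal.ofReal (1 - δ/2) < liminf (fun n => ∫⁻ x, ENNReal.ofReal (u n x)) atTop := by
    refine lt_of_lt_of_le ?_ h1
    rw [← ENNReal.ofReal_one]
    exact (ENNReal.ofReal_lt_ofReal_iff one_pos).2 (by linarith)
  have h3 := eventually_lt_of_lt_liminf h2
  filter_upwards [h3, eventually_ge_atTop n1, S4 H G one_pos,
    P.l0.eventually (gt_mem_nhds (show 0 < δ/8 by positivity))] with n h3 hn h4 h5
  have hI : Integrable (u n) := (H.gInt n).add (P.q0Int.const_mul _)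
  rw [← ofReal_integral_eq_lintegral_ofReal hI (Eventually.of_forall (hu0 n hn))] at h3
  have hm := G.mpos n hn
  have hl := P.lpos n
  have hIntEq : ∫ x, u n x = (∫ y, g n y) + 2 * (lam n * ∫ y, g n y) := by
    simp only [hu]
    rw [integral_add (H.gInt n) (P.q0Int.const_mul _), integral_const_mul, P.q0int, mul_one]
  rw [hIntEq] at h3
  have h6 := (ENNReal.ofReal_lt_ofReal_iff (by positivity)).1 h3
  nlinarith

end path
end Midas

namespace Midas
section path
variable {d : ℕ} {η : ℝ} {f q0 K : EE d → ℝ} {γ b lam : ℕ → ℝ}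
variable {P : Par d η f q0 K γ b lam} {X : ℕ → EE d} {g q : ℕ → EE d → ℝ}

lemma rseq_abs_le (P : Par d η f q0 K γ b lam) {a : ℕ → ℝ} {B : ℝ} (hB : 0 ≤ B) (n : ℕ)
    (h : ∀ k, P.N ≤ k → k < n → |a k| ≤ B) : |rseq P.N γ a n| ≤ B := by
  induction n with
  | zero => simpa [rseq] using hB
  | succ n ih =>
    by_cases hn : n < P.N
    · rw [rseq_le_N (by omega)]; simpa using hB
    · push Not at hn
      rw [rseq_succ hn]
      have h1 := abs_le.1 (ih (fun k h1 h2 => h k h1 (by omega)))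
      have h2 := abs_le.1 (h n hn (by omega))
      have h3 := P.g1 hn
      have h4 := P.γpos (n+1)
      rw [abs_le]; constructor <;> nlinarith

/-- bound for the increments -/
noncomputable def bb (P : Par d η f q0 K γ b lam) (n : ℕ) : ℝ := (2 / (P.c * lam n)) ^ η * (P.Km / b n ^ d)

lemma bb_pos (P : Par d η f q0 K γ b lam) (n : ℕ) : 0 < bb P n := by
  have := P.hc; have := P.lpos n; have := P.bpos n; have := P.Kmpos
  unfold bb; positivity

lemma bb_mono (P : Par d η f q0 K γ b lam) : Monotone (bb P) := by
  intro n m h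
  have := P.hc; have := P.lpos n; have := P.bpos n; have := P.Kmpos
  have := P.lpos m; have := P.bpos m; have := P.lanti h; have := P.banti h; have := P.hη
  unfold bb; gcongr

lemma inv_ev (P : Par d η f q0 K γ b lam) {τ : ℝ} (hτ : 0 < τ) :
    ∀ᶠ n : ℕ in atTop, 1 / (lam n * b n ^ d) ≤ τ * n := by
  have hC := P.Cgpos
  filter_upwards [P.rateB.eventually (gt_mem_nhds (show 0 < τ / P.Cg by positivity)),
    eventually_ge_atTop 3] with n hn h3
  have hl := P.lpos n
  have hb := P.bpos n
  have hg := P.γpos n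
  have hn0 : (0:ℝ) < n := by positivity
  have hlog : 1 ≤ Real.log n := by
    rw [Real.le_log_iff_exp_le hn0]
    have : (3:ℝ) ≤ n := by exact_mod_cast h3
    linarith [Real.exp_one_lt_d9]
  have h1 := P.hCg n (by omega)
  have h2 : γ n * 1 / (lam n * b n ^ d) ≤ τ / P.Cg := by
    refine le_trans ?_ hn.le
    gcongr
  rw [inv_le_iff_one_le_mul₀ hn0] at h1
  rw [mul_one, div_le_div_iff₀ (by positivity) hC] at h2
  rw [div_le_iff₀ (by positivity)]
  nlinarith

lemma bb_ev (P : Par d η f q0 K γ b lam) : ∀ᶠ n : ℕ in atTop, bb P n ≤ n := by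
  have := P.hc; have := P.Kmpos
  set A := (2 / P.c) ^ η * P.Km with hA
  have hAp : 0 < A := by positivity
  filter_upwards [inv_ev P (show 0 < 1 / A by positivity), eventually_ge_atTop P.N] with n h hn
  have hl := P.lpos n
  have hb := P.bpos n
  have h1 : (lam n)⁻¹ ^ η ≤ (lam n)⁻¹ := by
    conv_rhs => rw [← Real.rpow_one (lam n)⁻¹]
    apply Real.rpow_le_rpow_of_exponent_le _ P.hη1.le
    rw [one_le_inv₀ hl]
    linarith [P.lN n hn]
  calc bb P n = A * ((lam n)⁻¹ ^ η * (b n ^ d)⁻¹) := by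
        rw [bb, show 2 / (P.c * lam n) = (2 / P.c) * (lam n)⁻¹ by field_simp, Real.mul_rpow (by positivity) (by positivity)]
        rw [hA]; ring
    _ ≤ A * ((lam n)⁻¹ * (b n ^ d)⁻¹) := by gcongr
    _ = A * (1 / (lam n * b n ^ d)) := by field_simp
    _ ≤ A * (1 / A * n) := by gcongr
    _ = n := by field_simp

lemma GG_le_bb (H : Path P X g q) {k : ℕ} (hk : P.N ≤ k) (x : EE d) :
    GG η f (q k) (TT P k) (kx K b x k) ≤ bb P (k+1) := by
  have hT := TT_pos P k
  calc GG η f (q k) (TT P k) (kx K b x k) ≤ ∫ y, bb P (k+1) * q k y := by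
        apply integral_mono (GGk_Int P (H.qpos k hk) (H.qInt k hk) (TT_pos P k) (P.bpos _) x) ((H.qInt k hk).const_mul _)
        intro y
        have h1 := H.qpos k hk y
        have h2 := twp_le P (H.qpos k hk) hT y
        have h3 := kb_le P (P.bpos (k+1)) (x - y)
        have h4 := kb_nonneg P (P.bpos (k+1)) (x - y)
        have h5 : 0 ≤ TT P k ^ η := by positivity
        have h6 : tw f (q k) (TT P k) y ^ η * kb K (b (k+1)) (x - y) ≤ bb P (k+1) :=
          mul_le_mul h2 h3 h4 h5
        exact mul_le_mul_of_nonneg_right h6 h1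
    _ = bb P (k+1) := by rw [integral_const_mul, H.qint k hk, mul_one]

lemma zz_le_bb (H : Path P X g q) (n : ℕ) (x : EE d) : |zz P q X (kx K b x) n| ≤ bb P n := by
  apply rseq_abs_le P (bb_pos P n).le
  intro k hk hkn
  have h0 := bb_mono P (show k + 1 ≤ n by omega)
  have h1 := GG_le_bb H hk x
  have hT := TT_pos P k
  have h2 : 0 ≤ GG η f (q k) (TT P k) (kx K b x k) :=
    GG_nonneg P (H.qpos k hk) hT (fun y => kb_nonneg P (P.bpos (k+1)) (x - y))
  have h3 : tw f (q k) (TT P k) (X (k+1)) ^ η * kb K (b (k+1)) (x - X (k+1)) ≤ bb P (k+1) :=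
    mul_le_mul (twp_le P (H.qpos k hk) hT _) (kb_le P (P.bpos (k+1)) _) (kb_nonneg P (P.bpos (k+1)) _)
      (by positivity)
  have h4 : 0 ≤ tw f (q k) (TT P k) (X (k+1)) ^ η * kb K (b (k+1)) (x - X (k+1)) :=
    mul_nonneg (twp_nonneg P (H.qpos k hk) hT _) (kb_nonneg P (P.bpos (k+1)) _)
  simp only [kx] at *
  rw [abs_le]; constructor <;> linarith

lemma hh_le_bb (H : Path P X g q) (n : ℕ) (x : EE d) : hh P q (kx K b x) n ≤ bb P n := by
  refine (le_abs_self _).trans (rseq_abs_le P (bb_pos P n).le n ?_)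
  intro k hk hkn
  have h0 := bb_mono P (show k + 1 ≤ n by omega)
  have h1 := GG_le_bb H hk x
  have h2 : 0 ≤ GG η f (q k) (TT P k) (kx K b x k) :=
    GG_nonneg P (H.qpos k hk) (TT_pos P k) (fun y => kb_nonneg P (P.bpos (k+1)) (x - y))
  rw [abs_of_nonneg h2]; linarith

variable {n1 : ℕ} {C : ℝ}

lemma Par.Fpos (P : Par d η f q0 K γ b lam) : 0 ≤ P.F := (P.f0 0).trans (P.fF 0)
lemma Par.Qpos (P : Par d η f q0 K γ b lam) : 0 ≤ P.Q := (P.q00 0).trans (P.q0Q 0)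

lemma bigH {F Q CK η H0 : ℝ} (hF : 0 ≤ F) (hQ : 0 ≤ Q) (hη : 0 < η) :
    ∃ H, 0 < H ∧ H0 ≤ H ∧ F ^ η * (4 * (H + 2) + Q) ^ (1 - η) + CK ≤ H ∨ η ≥ 1 := by
  by_cases h1 : 1 ≤ η
  · exact ⟨0, Or.inr h1⟩
  push Not at h1
  set A := F ^ η * 5 ^ (1 - η) with hA
  have hA0 : 0 ≤ A := by positivity
  set H := 8 + Q + |H0| + 2 * |CK| + (2 * A) ^ (1 / η) with hH
  have h2 : 0 ≤ (2 * A) ^ (1 / η) := by positivity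
  have h3 := abs_nonneg H0
  have h4 := abs_nonneg CK
  have h5 := le_abs_self H0
  have h6 := le_abs_self CK
  have hHp : 0 < H := by linarith
  refine ⟨H, Or.inl ⟨hHp, by linarith, ?_⟩⟩
  have h7 : (4 * (H + 2) + Q) ^ (1 - η) ≤ (5 * H) ^ (1 - η) := by
    apply Real.rpow_le_rpow (by linarith) (by linarith) (by linarith)
  have h8 : 2 * A ≤ H ^ η := by
    calc 2 * A = ((2 * A) ^ (1 / η)) ^ η := by
          rw [← Real.rpow_mul (by positivity), one_div_mul_cancel hη.ne', Real.rpow_one]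
      _ ≤ H ^ η := Real.rpow_le_rpow h2 (by linarith) hη.le
  have h9 : H ^ η * H ^ (1 - η) = H := by rw [← Real.rpow_add hHp]; simp
  have h10 : 0 < H ^ (1 - η) := by positivity
  have h11 : F ^ η * (5 * H) ^ (1 - η) = A * H ^ (1 - η) := by
    rw [Real.mul_rpow (by norm_num) hHp.le, hA]; ring
  have h12 : F ^ η * (4 * (H + 2) + Q) ^ (1 - η) ≤ F ^ η * (5 * H) ^ (1 - η) := by gcongr
  nlinarith

lemma S8 (H : Path P X g q) (G : Good P X g q n1 C) :
    ∃ M, 0 < M ∧ ∀ᶠ n in atTop, ∀ x, g n x ≤ M * (1 + ‖x‖) := by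
  have hη := P.hη
  have hη1 := P.hη1
  have hQ := P.Qpos
  have hF := P.Fpos
  obtain ⟨n3, hn3⟩ := eventually_atTop.1 ((H.zsmall 1 one_pos).and ((bb_ev P).and
    ((ee_small' P C one_pos).and ((S7 H G (half_pos one_pos)).and (eventually_ge_atTop n1)))))
  have hn13 := (hn3 n3 le_rfl).2.2.2.2
  have hN := G.N1.trans hn13
  obtain ⟨M, hM | hM⟩ := bigH (H0 := bb P n3) (CK := P.CK) hF hQ hη
  swap
  · linarith
  obtain ⟨hM0, hMb, hMM⟩ := hM
  have hg : ∀ n, n3 ≤ n → ∀ x, g n x ≤ hh P q (kx K b x) n + 2 * (1 + ‖x‖) := by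
    intro n hn x
    obtain ⟨h1, h2, h3, -, h5⟩ := hn3 n hn
    have h6 : |zz P q X (kx K b x) n| ≤ 1 + ‖x‖ := by
      by_cases hx : ‖x‖ ≤ n
      · have := h1 x hx
        have := lam_rpow_le_one P (G.N1.trans h5)
        have := norm_nonneg x
        linarith
      · have := zz_le_bb H n x
        linarith
    have h7 := (abs_le.1 (G.gapp n h5 x)).2
    have h8 := (abs_le.1 h6).2
    have := norm_nonneg x
    linarith
  have key : ∀ n, n3 ≤ n → ∀ x, hh P q (kx K b x) n ≤ M * (1 + ‖x‖) := by
    intro n hn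
    induction n, hn using Nat.le_induction with
    | base =>
      intro x
      have := hh_le_bb H n3 x
      have := norm_nonneg x
      nlinarith
    | succ n hn ih =>
      intro x
      have hx0 := norm_nonneg x
      obtain ⟨-, -, -, h4, h5⟩ := hn3 n hn
      have hnN := G.N1.trans h5
      have hq : ∀ y ∈ ball x 1, q n y ≤ (4 * (M + 2) + P.Q) * (1 + ‖x‖) := by
        intro y hy
        have hy1 : ‖y‖ ≤ ‖x‖ + 1 := by
          rw [mem_ball, dist_eq_norm] at hy
          have := norm_add_le x (y - x)
          simp only [add_sub_cancel] at this
          linarith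
        have hgy : g n y ≤ (M + 2) * (1 + ‖y‖) := by have := hg n hn y; have := ih y; linarith
        have hgy2 : g n y ≤ 2 * (M + 2) * (1 + ‖x‖) := by nlinarith
        rw [H.qrec n hnN y]
        have hm := G.mpos n h5
        have h6 := P.lN n hnN
        have h7 := P.lpos n
        have h8 : g n y / (∫ y, g n y) ≤ 2 * (2 * (M + 2) * (1 + ‖x‖)) := by
          rw [div_le_iff₀ hm]
          have : 0 ≤ 2 * (M + 2) * (1 + ‖x‖) := by positivity
          nlinarith
        have h9 : (1 - lam n) * (g n y / (∫ y, g n y)) ≤ 2 * (2 * (M + 2) * (1 + ‖x‖)) := by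
          have : 0 ≤ 2 * (2 * (M + 2) * (1 + ‖x‖)) := by positivity
          nlinarith
        have h10 : lam n * q0 y ≤ P.Q := by
          have := P.q0Q y; have := P.q00 y; nlinarith
        nlinarith
      have hD := D_up P (H.qpos n hnN) (H.qInt n hnN) (H.qint n hnN) (TT_pos P n) (P.bpos (n+1)) one_pos x hq
        (fun y _ => P.fF y)
      have hb1 : b (n+1) ^ P.rK ≤ 1 := Real.rpow_le_one (P.bpos _).le (P.bN _ (by omega)) P.rKpos.le
      rw [Real.one_rpow, div_one, Real.mul_rpow (by positivity) (by positivity)] at hD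
      have h3 : (1 + ‖x‖) ^ (1 - η) ≤ 1 + ‖x‖ := by
        conv_rhs => rw [← Real.rpow_one (1 + ‖x‖)]
        exact Real.rpow_le_rpow_of_exponent_le (by linarith) (by linarith)
      have hCK := P.CKpos
      have hD2 : GG η f (q n) (TT P n) (kx K b x n) ≤ M * (1 + ‖x‖) := by
        calc _ ≤ P.F ^ η * ((4 * (M + 2) + P.Q) ^ (1 - η) * (1 + ‖x‖) ^ (1 - η)) + P.CK * b (n+1) ^ P.rK := hD
          _ ≤ P.F ^ η * ((4 * (M + 2) + P.Q) ^ (1 - η) * (1 + ‖x‖)) + P.CK * (1 + ‖x‖) := by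
            gcongr
            linarith
          _ = (P.F ^ η * (4 * (M + 2) + P.Q) ^ (1 - η) + P.CK) * (1 + ‖x‖) := by ring
          _ ≤ _ := by gcongr
      unfold hh
      rw [rseq_succ hnN]
      have h4 := ih x
      unfold hh at h4
      have := P.g1 hnN
      have := P.γpos (n+1)
      nlinarith
  refine ⟨M + 2, by linarith, ?_⟩
  filter_upwards [eventually_ge_atTop n3] with n hn x
  have := hg n hn x
  have := key n hn x
  linarith

lemma S9 (H : Path P X g q) (G : Good P X g q n1 C) {x0 : EE d} {ε ε' A M L : ℝ} (hA : 0 < A)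
    (hAf : ∀ y ∈ ball x0 ε, f y ≤ A) (hM : 0 < M) (hε : ε' < ε) (hL : A ^ η * M ^ (1 - η) < L)
    (hQ : ∀ᶠ n in atTop, ∀ y ∈ ball x0 ε, g n y ≤ M) :
    ∀ᶠ n in atTop, ∀ y ∈ ball x0 ε', g n y ≤ L := by
  have hη := P.hη
  have hη1 := P.hη1
  have hQp := P.Qpos
  set B := A ^ η * M ^ (1 - η) with hB
  have hBp : 0 < B := by positivity
  obtain ⟨σ, hσ1, hσ⟩ : ∃ σ, 1 < σ ∧ σ * B < L := by
    obtain ⟨L', h1, h2⟩ := exists_between hL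
    refine ⟨L' / B, (one_lt_div hBp).2 h1, by rwa [div_mul_cancel₀ _ hBp.ne']⟩
  obtain ⟨L2, hL2, hL2L⟩ := exists_between hσ
  have hσ0 : 0 < σ := by linarith
  have hqe : ∀ᶠ n in atTop, ∀ y ∈ ball x0 ε, q n y ≤ σ * M := by
    have hs : 0 < (σ - 1) / (σ + 1) := div_pos (by linarith) (by linarith)
    have hs2 : 0 < M * (σ - 1) / 2 / (P.Q + 1) := by
      have : 0 < σ - 1 := by linarith
      positivity
    filter_upwards [hQ, S7 H G hs, eventually_ge_atTop n1, P.l0.eventually (gt_mem_nhds hs2)] with n h1 h2 hn h3 y hy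
    rw [H.qrec n (G.N1.trans hn) y]
    have h4 := G.mpos n hn
    have h5 := h1 y hy
    have h6 := P.lN n (G.N1.trans hn)
    have h7 := P.lpos n
    have h8 : g n y / (∫ y, g n y) ≤ M * (σ + 1) / 2 := by
      rw [div_le_iff₀ h4]
      have e : 1 - (σ - 1) / (σ + 1) = 2 / (σ + 1) := by field_simp; ring
      rw [e, div_le_iff₀ (by linarith)] at h2
      nlinarith
    have h9 : (1 - lam n) * (g n y / (∫ y, g n y)) ≤ M * (σ + 1) / 2 := by
      have : 0 ≤ M * (σ + 1) / 2 := by positivity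
      nlinarith
    have h10 : lam n * q0 y ≤ M * (σ - 1) / 2 := by
      rw [lt_div_iff₀ (by linarith)] at h3
      have := P.q0Q y; have := P.q00 y; nlinarith
    linarith
  have hδ : 0 < ε - ε' := by linarith
  have htail : ∀ᶠ n in atTop, P.CK * b (n+1) ^ P.rK / (ε - ε') ^ ((d:ℝ) + P.rK) < L2 - σ * B := by
    have h1 : Tendsto (fun n => b (n+1)) atTop (𝓝 0) := (tendsto_add_atTop_iff_nat 1).2 P.b0
    have h2 : Tendsto (fun n => b (n+1) ^ P.rK) atTop (𝓝 (0 ^ P.rK)) := h1.rpow_const (Or.inr P.rKpos.le)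
    rw [Real.zero_rpow P.rKpos.ne'] at h2
    have h3 := (h2.const_mul P.CK).div_const ((ε - ε') ^ ((d:ℝ) + P.rK))
    rw [mul_zero, zero_div] at h3
    exact h3.eventually (gt_mem_nhds (by linarith))
  obtain ⟨n3, hn3⟩ := eventually_atTop.1 (hqe.and (htail.and (eventually_ge_atTop n1)))
  have hn13 := (hn3 n3 le_rfl).2.2
  have hL20 : 0 < L2 := by have : 0 < σ * B := by positivity
                           linarith
  have hlow : ∀ n, n3 ≤ n → ∀ x ∈ ball x0 ε', hh P q (kx K b x) n ≤ L2 + bb P n3 / ee P.N γ n3 * ee P.N γ n := by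
    intro n hn x hx
    have h := lin_le P (u := hh P q (kx K b x)) (A := L2) (G.N1.trans hn13) hn (fun k h1 _ => by
      obtain ⟨c1, c2, c3⟩ := hn3 k h1
      have hkN := G.N1.trans c3
      have hD := D_up P (H.qpos k hkN) (H.qInt k hkN) (H.qint k hkN) (TT_pos P k) (P.bpos (k+1)) hδ x
        (fun y hy => c1 y (ball_sub hx hy)) (fun y hy => hAf y (ball_sub hx hy))
      have h3 : (σ * M) ^ (1 - η) ≤ σ * M ^ (1 - η) := by
        rw [Real.mul_rpow hσ0.le hM.le]
        gcongr
        conv_rhs => rw [← Real.rpow_one σ]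
        exact Real.rpow_le_rpow_of_exponent_le hσ1.le (by linarith)
      have h4 : A ^ η * (σ * M) ^ (1 - η) ≤ σ * B := by
        calc _ ≤ A ^ η * (σ * M ^ (1 - η)) := by gcongr
          _ = _ := by rw [hB]; ring
      have hD2 : GG η f (q k) (TT P k) (kx K b x k) ≤ L2 := by
        refine le_trans hD ?_
        linarith
      unfold hh
      rw [rseq_succ hkN]
      have := P.γpos (k+1)
      gcongr)
    have h0 := hh_le_bb H n3 x
    have hr0 : 0 ≤ ee P.N γ n / ee P.N γ n3 := (div_pos (ee_pos P n) (ee_pos P n3)).le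
    have h7 : ee P.N γ n / ee P.N γ n3 * (hh P q (kx K b x) n3 - L2) ≤ ee P.N γ n / ee P.N γ n3 * bb P n3 := by
      apply mul_le_mul_of_nonneg_left _ hr0
      linarith
    have e : ee P.N γ n / ee P.N γ n3 * bb P n3 = bb P n3 / ee P.N γ n3 * ee P.N γ n := by ring
    linarith
  have hdel : 0 < (L - L2)/2 := by linarith
  filter_upwards [gz_ev H G x0 ε' hdel, ee_small' P (bb P n3 / ee P.N γ n3) hdel, eventually_ge_atTop n3]
    with n h1 h2 hn y hy
  have h3 := hlow n hn y hy
  have h4 := (abs_le.1 (h1 y hy)).2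
  linarith

lemma S9b (H : Path P X g q) (G : Good P X g q n1 C) {x0 : EE d} {r ε A A1 : ℝ} (hA : 0 < A)
    (hAf : ∀ y ∈ ball x0 r, f y ≤ A) (hε : ε < r) (hA1 : A < A1) :
    ∀ᶠ n in atTop, ∀ y ∈ ball x0 ε, g n y ≤ A1 := by
  have hη := P.hη
  have hη1 := P.hη1
  obtain ⟨A2, hA2, hA21⟩ := exists_between hA1
  have hA20 : 0 < A2 := by linarith
  obtain ⟨M0, hM0, hM⟩ := S8 H G
  set M := M0 * (1 + ‖x0‖ + |r|) with hMd
  have hMp : 0 < M := by positivity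
  have key : ∀ j : ℕ, ∀ ε, ε < r → ∀ᶠ n in atTop, ∀ y ∈ ball x0 ε, g n y ≤ A2 * (M / A2) ^ ((1 - η) ^ j) := by
    intro j
    induction j with
    | zero =>
      intro ε hε
      filter_upwards [hM] with n hn y hy
      rw [pow_zero, Real.rpow_one, mul_div_cancel₀ _ hA20.ne']
      refine (hn y).trans ?_
      rw [hMd]
      apply mul_le_mul_of_nonneg_left _ hM0.le
      rw [mem_ball, dist_eq_norm] at hy
      have := norm_add_le x0 (y - x0)
      simp only [add_sub_cancel] at this
      have := le_abs_self r
      linarith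
    | succ j ih =>
      intro ε hε
      have h1 := ih ((ε + r)/2) (by linarith)
      refine S9 H G hA (fun y hy => hAf y (ball_subset_ball (by linarith) hy))
        (M := A2 * (M / A2) ^ ((1 - η) ^ j)) (by positivity) (by linarith) ?_ h1
      rw [iter_eq hA20 hMp]
      have : A ^ η < A2 ^ η := Real.rpow_lt_rpow hA.le hA2 hη
      gcongr
  obtain ⟨j, hj⟩ := ((iter_tend hA20 hMp hη hη1).eventually (gt_mem_nhds hA21)).exists
  filter_upwards [key j ε hε] with n hn y hy
  exact (hn y hy).trans hj.le

theorem path_main (H : Path P X g q) (ε : ℝ) (hε : 0 < ε) (x : EE d) :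
    limsup (fun n : ℕ => ⨆ y ∈ ball x ε, g n y) atTop ≤ ⨆ y ∈ ball x ε, f y := by
  obtain ⟨n1, C, G⟩ := exists_good H
  set s := ⨆ y ∈ ball x ε, f y with hs
  have hF := P.Fpos
  have hin : ∀ y, (⨆ _ : y ∈ ball x ε, f y) ≤ P.F := fun y => Real.iSup_le (fun _ => P.fF y) hF
  have hfs : ∀ y ∈ ball x ε, f y ≤ s := by
    intro y hy
    have : (⨆ _ : y ∈ ball x ε, f y) = f y := ciSup_pos hy
    rw [← this]
    exact le_ciSup (f := fun y => ⨆ _ : y ∈ ball x ε, f y) ⟨P.F, by rintro _ ⟨y, rfl⟩; exact hin y⟩ y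
  have hs0 : 0 ≤ s := (P.f0 x).trans (hfs x (mem_ball_self hε))
  have hfc : ∀ y ∈ closedBall x ε, f y ≤ s := by
    intro y hy
    rw [← closure_ball x hε.ne'] at hy
    exact closure_minimal (fun z hz => hfs z hz) (isClosed_le P.fcont continuous_const) hy
  apply le_of_forall_pos_le_add
  intro δ hδ
  obtain ⟨ρ, hρ, hsub⟩ := (isCompact_closedBall x ε).exists_thickening_subset_open
    (isOpen_lt P.fcont continuous_const : IsOpen {y | f y < s + δ/2})
    (fun y hy => by have := hfc y hy; simp only [Set.mem_setOf_eq]; linarith)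
  rw [thickening_closedBall hρ hε.le] at hsub
  have hev := S9b H G (x0 := x) (r := ρ + ε) (ε := ε) (A := s + δ/2) (A1 := s + δ) (by linarith)
    (fun y hy => le_of_lt (hsub (by simpa [add_comm] using hy))) (by linarith) (by linarith)
  apply limsup_le_of_le
  · refine ⟨0, ?_⟩
    intro a ha
    obtain ⟨n, hn⟩ := (eventually_map.1 ha).exists
    refine le_trans ?_ hn
    obtain ⟨Cn, hCn⟩ := H.gbd n
    have hCn0 : 0 ≤ Cn := (abs_nonneg _).trans (hCn x)
    obtain ⟨z, hz⟩ : ∃ z : EE d, z ∉ ball x ε := by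
      have : Nonempty (Fin d) := ⟨⟨0, P.hd⟩⟩
      obtain ⟨v, hv⟩ := exists_norm_eq (EE d) hε.le
      refine ⟨x + v, ?_⟩
      simp [hv]
    have : (⨆ _ : z ∈ ball x ε, g n z) = 0 := by simp [hz]
    rw [← this]
    refine le_ciSup (f := fun y => ⨆ _ : y ∈ ball x ε, g n y) ⟨Cn, ?_⟩ z
    rintro _ ⟨y, rfl⟩
    exact Real.iSup_le (fun _ => (le_abs_self _).trans (hCn y)) hCn0
  · filter_upwards [hev] with n hn
    exact Real.iSup_le (fun y => Real.iSup_le (fun hy => hn y hy) (by linarith)) (by linarith)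

end path
end Midas

namespace Midas

lemma exists_par {d : ℕ} (hd : 1 ≤ d) {η : ℝ} (hη : 0 < η) (hη1 : η < 1)
    (f q0 K : EE d → ℝ) (γ b lam : ℕ → ℝ)
    (hf0 : ∀ x, 0 ≤ f x) (hfint1 : (∫ x, f x) = 1)
    (hK0 : ∀ x, 0 ≤ K x) (hKint1 : (∫ x, K x) = 1)
    (hγpos : ∀ n, 0 < γ n) (hbpos : ∀ n, 0 < b n) (hlampos : ∀ n, 0 < lam n)
    (hfbdd : ∃ C, ∀ x, f x ≤ C) (hfcont : Continuous f)
    (hfInt : Integrable f)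
    (hq00 : ∀ x, 0 ≤ q0 x) (hq0bdd : ∃ C, ∀ x, q0 x ≤ C) (hq0cont : Continuous q0)
    (hq0Int : Integrable q0) (hq0int1 : (∫ x, q0 x) = 1)
    (hfq0 : ∃ c > (0:ℝ), ∀ x, c * f x ≤ q0 x)
    (hKbdd : ∃ C, ∀ x, K x ≤ C) (hKlip : ∃ L : NNReal, LipschitzWith L K)
    (hKpos : 0 < K 0)
    (hKtail : ∃ rK > (0:ℝ), ∃ CK > (0:ℝ), ∀ x : EE d,
      (1 + ‖x‖ ^ ((d : ℝ) + rK)) * K x ≤ CK)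
    (hγanti : Antitone γ) (hγ0 : Tendsto γ atTop (nhds 0))
    (hbanti : Antitone b) (hb0 : Tendsto b atTop (nhds 0))
    (hlamanti : Antitone lam) (hlam0 : Tendsto lam atTop (nhds 0))
    (hγrate : ∃ Cγ > (0:ℝ), ∃ nγ : ℕ, 1 ≤ nγ ∧
      (∀ n : ℕ, 1 ≤ n → ((n : ℝ))⁻¹ ≤ Cγ * γ n) ∧
      (∀ n : ℕ, nγ ≤ n → γ n - γ (n+1) ≤ γ n * γ (n+1)))
    (hrate1 : 1/2 ≤ η → Tendsto
      (fun n : ℕ => (n : ℝ) * γ n ^ 2 * Real.log n / (lam n * b n ^ d))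
      atTop (nhds 0))
    (hrate2 : η < 1/2 → Tendsto
      (fun n : ℕ => (n : ℝ) * γ n ^ 2 * Real.log n
        / (lam n ^ (2 * (1 - η)) * b n ^ (2 * (d : ℝ) * (1 - η))))
      atTop (nhds 0)) : Nonempty (Par d η f q0 K γ b lam) := by
  obtain ⟨F, hF⟩ := hfbdd
  obtain ⟨Q, hQ⟩ := hq0bdd
  obtain ⟨Km, hKm⟩ := hKbdd
  obtain ⟨L, hL⟩ := hKlip
  obtain ⟨rK, hrK, CK, hCK, hKt⟩ := hKtail
  obtain ⟨Cγ, hCγ, nγ, hnγ, hγ1, hγ2⟩ := hγrate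
  obtain ⟨c, hc, hcf⟩ := hfq0
  obtain ⟨N0, hN0⟩ := eventually_atTop.1 ((hγ0.eventually (gt_mem_nhds (half_pos one_pos))).and
    ((hlam0.eventually (gt_mem_nhds (half_pos one_pos))).and (hb0.eventually (gt_mem_nhds one_pos))))
  have hγl : ∀ n : ℕ, 1 ≤ n → γ n ≤ Cγ * (n * γ n ^ 2) := by
    intro n hn
    have hn0 : (0:ℝ) < n := by exact_mod_cast hn
    have := hγ1 n hn
    rw [inv_le_iff_one_le_mul₀ hn0] at this
    have h2 := hγpos n
    nlinarith
  have hlog : ∀ n : ℕ, 1 ≤ n → 0 ≤ Real.log n := fun n hn => Real.log_nonneg (by exact_mod_cast hn)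
  have rateB : Tendsto (fun n : ℕ => γ n * Real.log n / (lam n * b n ^ d)) atTop (𝓝 0) := by
    by_cases hh : 1/2 ≤ η
    · have h1 := (hrate1 hh).const_mul Cγ
      rw [mul_zero] at h1
      refine tendsto_of_tendsto_of_tendsto_of_le_of_le' tendsto_const_nhds h1 ?_ ?_
      · filter_upwards [eventually_ge_atTop 1] with n hn
        have := hlog n hn; have := hγpos n; have := hbpos n; have := hlampos n
        positivity
      · filter_upwards [eventually_ge_atTop 1] with n hn
        have h3 := hlog n hn; have := hγpos n; have := hbpos n; have := hlampos n
        rw [← mul_div_assoc]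
        have h4 := hγl n hn
        have h5 := mul_le_mul_of_nonneg_right h4 h3
        apply div_le_div_of_nonneg_right _ (by positivity)
        linarith
    · push Not at hh
      have h1 := (hrate2 hh).const_mul Cγ
      rw [mul_zero] at h1
      refine tendsto_of_tendsto_of_tendsto_of_le_of_le' tendsto_const_nhds h1 ?_ ?_
      · filter_upwards [eventually_ge_atTop 1] with n hn
        have := hlog n hn; have := hγpos n; have := hbpos n; have := hlampos n
        positivity
      · filter_upwards [eventually_ge_atTop 1, eventually_ge_atTop N0] with n hn hnN
        have h3 := hlog n hn; have := hγpos n; have hb := hbpos n; have hl := hlampos n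
        obtain ⟨-, hl1, hb1⟩ := hN0 n hnN
        rw [← mul_div_assoc]
        have h4 := hγl n hn
        have h5 := mul_le_mul_of_nonneg_right h4 h3
        have h6 : lam n ^ (2 * (1 - η)) ≤ lam n := by
          conv_rhs => rw [← Real.rpow_one (lam n)]
          exact Real.rpow_le_rpow_of_exponent_ge hl (by linarith) (by linarith)
        have h7 : b n ^ (2 * (d:ℝ) * (1 - η)) ≤ b n ^ d := by
          rw [← Real.rpow_natCast]
          apply Real.rpow_le_rpow_of_exponent_ge hb hb1.le
          have : (1:ℝ) ≤ d := by exact_mod_cast hd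
          nlinarith
        have h8 : lam n ^ (2 * (1 - η)) * b n ^ (2 * (d:ℝ) * (1 - η)) ≤ lam n * b n ^ d := by gcongr
        apply div_le_div₀ (by positivity) (by linarith) (by positivity) h8
  have rateV : Tendsto (fun n : ℕ => (n:ℝ) * γ n ^ 2 * Real.log n * Vf η d lam b n
      / lam n ^ (2 * (1 - η))) atTop (𝓝 0) := by
    by_cases hh : 1/2 ≤ η
    · refine (hrate1 hh).congr fun n => ?_
      have hb := hbpos n; have hl := hlampos n
      rw [Vf, if_pos hh, div_eq_mul_inv, div_eq_mul_inv, ← Real.rpow_neg hl.le, mul_assoc (_ * Real.log _)]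
      congr 1
      rw [mul_right_comm, ← Real.rpow_add hl, show -(2 * η - 1) + -(2 * (1 - η)) = -1 by ring,
        Real.rpow_neg_one, mul_inv]
    · have hh' := hh
      push Not at hh'
      refine (hrate2 hh').congr fun n => ?_
      have hb := hbpos n; have hl := hlampos n
      rw [Vf, if_neg hh, Real.rpow_neg hb.le]
      field_simp
  refine ⟨⟨F, Q, Km, L, rK, CK, Cγ, c, max N0 (max nγ 1), hd, hη, hη1, hf0, hfint1, hfInt, hF, hfcont,
    hq00, hq0int1, hq0Int, hQ, hq0cont, hc, hcf, hK0, hKint1, hKm, L.2, ?_, hKpos, hrK, hCK,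
    hKt, hγpos, hbpos, hlampos, hγanti, hγ0, hbanti, hb0, hlamanti, hlam0, ?_, ?_, ?_, ?_, ?_,
    hCγ, hγ1, rateB, rateV⟩⟩
  · intro x y
    have := hL.dist_le_mul x y
    rwa [Real.dist_eq, dist_eq_norm] at this
  · omega
  · intro n hn; exact (hN0 n (by omega)).1.le
  · intro n hn; exact (hN0 n (by omega)).2.1.le
  · intro n hn; exact (hN0 n (by omega)).2.2.le
  · intro n hn
    have := hγ2 n (by omega)
    nlinarith
end Midas

namespace Midas

section disint
variable {Ω S : Type*} [MeasurableSpace Ω] [MeasurableSpace S] {d : ℕ}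

lemma disint (μ : Measure Ω) [IsProbabilityMeasure μ] (π : Ω → S) (hπ : Measurable π) (Y : Ω → EE d)
    (hY : Measurable Y) (p : S → EE d → ℝ) (hp : Measurable (Function.uncurry p))
    (hp0 : ∀ᵐ ω ∂μ, ∀ x, 0 ≤ p (π ω) x) (hpI : ∀ᵐ ω ∂μ, Integrable (p (π ω)))
    (hp1 : ∀ᵐ ω ∂μ, ∫ x, p (π ω) x = 1)
    (pol : ∀ φ : EE d → ℝ, Continuous φ → (∃ C, ∀ x, |φ x| ≤ C) → ∀ C : Set S, MeasurableSet C →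
      ∫ ω in π ⁻¹' C, φ (Y ω) ∂μ = ∫ ω in π ⁻¹' C, ∫ y, φ y * p (π ω) y ∂volume ∂μ)
    (Φ : S → EE d → ℝ≥0∞) (hΦ : Measurable (Function.uncurry Φ)) :
    ∫⁻ ω, Φ (π ω) (Y ω) ∂μ = ∫⁻ ω, ∫⁻ y, Φ (π ω) y * ENNReal.ofReal (p (π ω) y) ∂volume ∂μ := by
  have hpm : Measurable (fun z : S × EE d => ENNReal.ofReal (p z.1 z.2)) := ENNReal.measurable_ofReal.comp hp
  set J1 : Measure (S × EE d) := μ.map (fun ω => (π ω, Y ω)) with hJ1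
  set J2 : Measure (S × EE d) := ((μ.map π).prod volume).withDensity (fun z => ENNReal.ofReal (p z.1 z.2)) with hJ2
  have hpr : Measurable (fun ω => (π ω, Y ω)) := hπ.prodMk hY
  have e1 : ∀ Ψ : S × EE d → ℝ≥0∞, Measurable Ψ → ∫⁻ z, Ψ z ∂J1 = ∫⁻ ω, Ψ (π ω, Y ω) ∂μ :=
    fun Ψ hΨ => lintegral_map hΨ hpr
  have e2 : ∀ Ψ : S × EE d → ℝ≥0∞, Measurable Ψ → ∫⁻ z, Ψ z ∂J2 =
      ∫⁻ ω, ∫⁻ y, Ψ (π ω, y) * ENNReal.ofReal (p (π ω) y) ∂volume ∂μ := by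
    intro Ψ hΨ
    rw [hJ2, lintegral_withDensity_eq_lintegral_mul _ hpm hΨ, lintegral_prod _ (hpm.mul hΨ).aemeasurable,
      lintegral_map (Measurable.lintegral_prod_right (f := fun s y => ((fun z : S × EE d => ENNReal.ofReal (p z.1 z.2)) * Ψ) (s, y)) (hpm.mul hΨ)) hπ]
    simp only [Pi.mul_apply, mul_comm]
  have hfin : IsFiniteMeasure J1 := by
    have := Measure.isProbabilityMeasure_map (μ := μ) hpr.aemeasurable
    infer_instance
  have hJ : J1 = J2 := by
    apply Measure.ext_prod
    intro C B hC hB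
    -- fixed C
    set ν1 : Measure (EE d) := (J1.restrict (C ×ˢ Set.univ)).map Prod.snd with hν1
    set ν2 : Measure (EE d) := (J2.restrict (C ×ˢ Set.univ)).map Prod.snd with hν2
    have hν : ν1 = ν2 := by
      apply ext_of_forall_lintegral_eq_of_IsFiniteMeasure
      intro φ
      have hφb : ∀ y, |(φ y : ℝ)| ≤ (nndist φ 0 : ℝ) := fun y => by
        rw [abs_of_nonneg (by positivity)]
        exact_mod_cast BoundedContinuousFunction.NNReal.upper_bound φ y
      have hφm : Measurable (fun x : EE d => ((φ x : ℝ≥0) : ℝ≥0∞)) := (φ.continuous.measurable).coe_nnreal_ennreal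
      have hCu : MeasurableSet (C ×ˢ (Set.univ : Set (EE d))) := hC.prod MeasurableSet.univ
      have hind : Measurable ((C ×ˢ (Set.univ : Set (EE d))).indicator (fun z => ((φ z.2 : ℝ≥0) : ℝ≥0∞))) :=
        (hφm.comp measurable_snd).indicator hCu
      rw [lintegral_map hφm measurable_snd, lintegral_map hφm measurable_snd,
        ← lintegral_indicator hCu, ← lintegral_indicator hCu, e1 _ hind, e2 _ hind]
      have a1 : ∀ s y, (C ×ˢ (Set.univ : Set (EE d))).indicator (fun z : S × EE d => ((φ z.2 : ℝ≥0) : ℝ≥0∞)) (s, y) =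
          C.indicator (fun _ => ((φ y : ℝ≥0) : ℝ≥0∞)) s := by
        intro s y
        by_cases hs : s ∈ C <;> simp [Set.indicator, hs]
      simp only [a1]
      have hπC : MeasurableSet (π ⁻¹' C) := hπ hC
      have b1 : ∫⁻ ω, C.indicator (fun _ => ((φ (Y ω) : ℝ≥0) : ℝ≥0∞)) (π ω) ∂μ = ∫⁻ ω in π ⁻¹' C, ENNReal.ofReal (φ (Y ω)) ∂μ := by
        rw [← lintegral_indicator hπC]
        congr 1; ext ω
        by_cases hs : π ω ∈ C <;> simp [Set.indicator, hs]
      have b2 : ∫⁻ ω, ∫⁻ y, C.indicator (fun _ => ((φ y : ℝ≥0) : ℝ≥0∞)) (π ω) * ENNReal.ofReal (p (π ω) y) ∂volume ∂μ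
          = ∫⁻ ω in π ⁻¹' C, ENNReal.ofReal (∫ y, (φ y : ℝ) * p (π ω) y) ∂μ := by
        rw [← lintegral_indicator hπC]
        apply lintegral_congr_ae
        filter_upwards [hp0, hpI] with ω h0 hI
        by_cases hs : π ω ∈ C
        · simp only [Set.indicator, hs, if_true, Set.mem_preimage]
          rw [ofReal_integral_eq_lintegral_ofReal]
          · congr 1; ext y
            rw [ENNReal.ofReal_mul (by positivity), ENNReal.ofReal_coe_nnreal]
          · refine hI.bdd_mul (c := (nndist φ 0 : ℝ)) (NNReal.continuous_coe.comp φ.continuous).aestronglyMeasurable (Eventually.of_forall fun y => ?_)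
            exact hφb y
          · exact Eventually.of_forall fun y => mul_nonneg (by positivity) (h0 y)
        · simp [Set.indicator, hs]
      rw [b1, b2]
      have hpol := pol (fun y => (φ y : ℝ)) (NNReal.continuous_coe.comp φ.continuous) ⟨(nndist φ 0 : ℝ), hφb⟩ C hC
      have hIY : Integrable (fun ω => (φ (Y ω) : ℝ)) (μ.restrict (π ⁻¹' C)) :=
        Integrable.of_bound (((NNReal.continuous_coe.comp φ.continuous).measurable.comp hY).aestronglyMeasurable) (nndist φ 0 : ℝ)
          (Eventually.of_forall fun ω => hφb _)
      rw [← ofReal_integral_eq_lintegral_ofReal hIY (Eventually.of_forall fun ω => by positivity), hpol,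
        ofReal_integral_eq_lintegral_ofReal]
      · have hm1 : StronglyMeasurable (fun s => ∫ y, (φ y : ℝ) * p s y) :=
          StronglyMeasurable.integral_prod_right (f := fun s y => (φ y : ℝ) * p s y)
            ((((NNReal.continuous_coe.comp φ.continuous).measurable.comp measurable_snd).mul hp).stronglyMeasurable)
        refine Integrable.of_bound (hm1.measurable.comp hπ).aestronglyMeasurable (nndist φ 0 : ℝ) ?_
        apply ae_restrict_of_ae
        filter_upwards [hp0, hpI, hp1] with ω h0 hI h1
        calc ‖∫ y, (φ y : ℝ) * p (π ω) y‖ ≤ ∫ y, (nndist φ 0 : ℝ) * p (π ω) y := by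
              apply norm_integral_le_of_norm_le (hI.const_mul _)
              refine Eventually.of_forall fun y => ?_
              rw [norm_mul, Real.norm_eq_abs, Real.norm_eq_abs, abs_of_nonneg (h0 y)]
              exact mul_le_mul_of_nonneg_right (hφb y) (h0 y)
          _ = (nndist φ 0 : ℝ) := by rw [integral_const_mul, h1, mul_one]
      · apply ae_restrict_of_ae
        filter_upwards [hp0] with ω h0
        exact integral_nonneg fun y => mul_nonneg (by positivity) (h0 y)
    have := congrArg (fun m => m B) hν
    simp only [hν1, hν2] at this
    rw [Measure.map_apply measurable_snd hB, Measure.map_apply measurable_snd hB,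
      Measure.restrict_apply (measurable_snd hB), Measure.restrict_apply (measurable_snd hB)] at this
    have e : (Prod.snd ⁻¹' B : Set (S × EE d)) ∩ C ×ˢ Set.univ = C ×ˢ B := by ext z; simp [and_comm]
    rwa [e] at this
  have := e1 (Function.uncurry Φ) hΦ
  rw [hJ, e2 _ hΦ] at this
  exact this.symm

end disint

lemma nonneg_of_tests {d : ℕ} {p : EE d → ℝ} (hc : Continuous p) (hI : Integrable p)
    (h : ∀ (i j : ℕ), 0 ≤ ∫ y, max 0 (1 - j * ‖y - TopologicalSpace.denseSeq (EE d) i‖) * p y) (x : EE d) : 0 ≤ p x := by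
  by_contra hx
  push Not at hx
  obtain ⟨r, hr, hsub⟩ := Metric.isOpen_iff.1 (isOpen_lt hc continuous_const : IsOpen {y | p y < 0}) x hx
  obtain ⟨j, hj⟩ := exists_nat_gt (2 / r)
  obtain ⟨i, hi⟩ := (TopologicalSpace.denseRange_denseSeq (EE d)).exists_dist_lt x (half_pos hr)
  set z := TopologicalSpace.denseSeq (EE d) i with hz
  have hj0 : (0:ℝ) < j := lt_trans (by positivity) hj
  have hneg : ∀ y, max 0 (1 - j * ‖y - z‖) * p y ≤ 0 := by
    intro y
    by_cases hy : dist y z < r/2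
    · have h1 : p y < 0 := hsub (by
        rw [mem_ball]
        have := dist_triangle y z x
        rw [dist_comm z x] at this
        linarith)
      have : 0 ≤ max 0 (1 - j * ‖y - z‖) := le_max_left _ _
      nlinarith
    · push Not at hy
      rw [dist_eq_norm] at hy
      have : 1 - j * ‖y - z‖ ≤ 0 := by
        have : 1 < j * (r/2) := by
          rw [div_lt_iff₀ hr] at hj; linarith
        nlinarith
      rw [max_eq_left this]; simp
  have hcont : Continuous (fun y => max 0 (1 - j * ‖y - z‖) * p y) := by fun_prop
  have hIntEq : Integrable (fun y => max 0 (1 - j * ‖y - z‖) * p y) := by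
    refine hI.bdd_mul (c := 1) (Continuous.aestronglyMeasurable (by fun_prop)) (Eventually.of_forall fun y => ?_)
    rw [Real.norm_eq_abs, abs_of_nonneg (le_max_left _ _)]
    have : 0 ≤ j * ‖y - z‖ := by positivity
    exact max_le zero_le_one (by linarith)
  have h0 : ∫ y, -(max 0 (1 - j * ‖y - z‖) * p y) = 0 := by
    apply le_antisymm
    · rw [integral_neg]; linarith [h i j]
    · exact integral_nonneg fun y => by have := hneg y; simp only [Pi.zero_apply]; linarith
  have h0' := (integral_eq_zero_iff_of_nonneg (f := fun y => -(max 0 (1 - j * ‖y - z‖) * p y)) (fun y => by have := hneg y; simp only [Pi.zero_apply]; linarith) hIntEq.neg).1 h0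
  have h1 := (Continuous.ae_eq_iff_eq volume hcont.neg continuous_const).1 h0'
  have h2 : -(max 0 (1 - j * ‖z - z‖) * p z) = 0 := congrFun h1 z
  simp only [sub_self, norm_zero, mul_zero, sub_zero, zero_le_one, max_eq_right, one_mul, neg_eq_zero] at h2
  have h3 : p z < 0 := hsub (by rw [mem_ball, dist_comm]; linarith)
  linarith

end Midas

namespace Midas

section alg
variable {Ω : Type*} [MeasurableSpace Ω] {μ : Measure Ω} [IsProbabilityMeasure μ]
variable {d : ℕ} {η : ℝ} {f q0 K : EE d → ℝ} {γ b lam : ℕ → ℝ}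

structure Alg (μ : Measure Ω) (P : Par d η f q0 K γ b lam) (X : ℕ → Ω → EE d) (g q : ℕ → Ω → EE d → ℝ) : Prop where
  hX : ∀ n, Measurable (X n)
  hqm : ∀ n, Measurable (Function.uncurry (q n))
  g0 : ∀ ω x, g 0 ω x = 0
  grec : ∀ n ω x, g (n+1) ω x = (1 - γ (n+1)) * g n ω x
      + γ (n+1) * (f (X (n+1) ω) / q n ω (X (n+1) ω)) ^ η * kb K (b (n+1)) (x - X (n+1) ω)
  qrec : ∀ n ω x, q (n+1) ω x
      = (1 - lam (n+1)) * (g (n+1) ω x / (∫ y, g (n+1) ω y)) + lam (n+1) * q0 x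
  pol : ∀ n (φ : EE d → ℝ), Continuous φ → (∃ C, ∀ x, |φ x| ≤ C) →
      (μ[fun ω => φ (X (n+1) ω) | natFilt X n]) =ᵐ[μ] (fun ω => ∫ y, φ y * q n ω y)
  adapt : ∀ n x, Measurable[natFilt X n] fun ω => q n ω x

variable {P : Par d η f q0 K γ b lam} {X : ℕ → Ω → EE d} {g q : ℕ → Ω → EE d → ℝ}

lemma nf_le (A : Alg μ P X g q) (n : ℕ) : natFilt X n ≤ (inferInstance : MeasurableSpace Ω) := by
  apply iSup₂_le
  intro i _
  exact (A.hX i).comap_le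

lemma nf_mono {n m : ℕ} (h : n ≤ m) : natFilt X n ≤ natFilt X m := by
  apply iSup₂_le
  intro i hi
  rw [Finset.mem_Icc] at hi
  exact le_iSup₂_of_le (f := fun i _ => MeasurableSpace.comap (X i) inferInstance) i (Finset.mem_Icc.2 ⟨hi.1, hi.2.trans h⟩) le_rfl

lemma nf_X (n : ℕ) : Measurable[natFilt X (n+1)] (X (n+1)) := by
  have : MeasurableSpace.comap (X (n+1)) inferInstance ≤ natFilt X (n+1) :=
    le_iSup₂_of_le (f := fun i _ => MeasurableSpace.comap (X i) inferInstance) (n+1) (Finset.mem_Icc.2 ⟨by omega, le_rfl⟩) le_rfl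
  exact (comap_measurable _).mono this le_rfl

lemma gen_int {S : Type*} [MeasurableSpace S] {F : S → EE d → ℝ} (h : Measurable (Function.uncurry F)) :
    Measurable fun s => ∫ y, F s y :=
  (StronglyMeasurable.integral_prod_right (f := F) h.stronglyMeasurable).measurable

lemma gen_q {S : Type*} [MeasurableSpace S] {g : S → EE d → ℝ} {q0 : EE d → ℝ} (l : ℝ) (hq : Measurable q0)
    (h : Measurable (Function.uncurry g)) :
    Measurable (Function.uncurry fun s x => (1 - l) * (g s x / ∫ y, g s y) + l * q0 x) := by
  have h1 := gen_int h
  have h2 : Measurable fun z : S × EE d => ∫ y, g z.1 y := h1.comp measurable_fst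
  have h3 : Measurable fun z : S × EE d => g z.1 z.2 := h
  have h4 : Measurable fun z : S × EE d => q0 z.2 := hq.comp measurable_snd
  exact ((h3.div h2).const_mul _).add (h4.const_mul _)

lemma gen_g {S : Type*} [MeasurableSpace S] {g p : S → EE d → ℝ} {Y : S → EE d} {f k : EE d → ℝ} (c1 c2 η : ℝ)
    (hf : Measurable f) (hk : Measurable k)
    (h : Measurable (Function.uncurry g)) (hp : Measurable fun s => p s (Y s)) (hY : Measurable Y) :
    Measurable (Function.uncurry fun s x => c1 * g s x + c2 * (f (Y s) / p s (Y s)) ^ η * k (x - Y s)) := by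
  have h3 : Measurable fun z : S × EE d => g z.1 z.2 := h
  have h4 : Measurable fun s => (f (Y s) / p s (Y s)) ^ η := ((hf.comp hY).div hp).pow_const η
  have h5 : Measurable fun z : S × EE d => (f (Y z.1) / p z.1 (Y z.1)) ^ η := h4.comp measurable_fst
  have h6 : Measurable fun z : S × EE d => k (z.2 - Y z.1) := hk.comp (measurable_snd.sub (hY.comp measurable_fst))
  exact (h3.const_mul c1).add ((h5.const_mul c2).mul h6)

lemma gen_comp {S T : Type*} [MeasurableSpace S] [MeasurableSpace T] {p : T → EE d → ℝ} {π : S → T} {Y : S → EE d}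
    (hp : Measurable (Function.uncurry p)) (hπ : Measurable π) (hY : Measurable Y) : Measurable fun s => p (π s) (Y s) :=
  hp.comp (hπ.prodMk hY)

lemma gq_meas (A : Alg μ P X g q) (n : ℕ) :
    Measurable[(natFilt X n).prod inferInstance] (Function.uncurry (g n)) ∧
    Measurable[(natFilt X n).prod inferInstance] (Function.uncurry (q n)) := by
  induction n with
  | zero =>
    constructor
    · have : Function.uncurry (g 0) = fun _ => 0 := by ext z; simp [Function.uncurry, A.g0]
      rw [this]
      exact measurable_const
    · have hne : Nonempty Ω := μ.nonempty_of_neZero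
      obtain ⟨ω0⟩ := hne
      have hbot : natFilt X 0 = ⊥ := by
        simp [natFilt]
      have hconst : ∀ ω x, q 0 ω x = q 0 ω0 x := by
        intro ω x
        have h := A.adapt 0 x
        rw [hbot] at h
        have h2 := h (measurableSet_singleton (q 0 ω0 x))
        rw [MeasurableSpace.measurableSet_bot_iff] at h2
        rcases h2 with h2 | h2
        · have : ω0 ∈ (fun ω => q 0 ω x) ⁻¹' {q 0 ω0 x} := rfl
          rw [h2] at this; exact absurd this (Set.notMem_empty _)
        · have : ω ∈ (fun ω => q 0 ω x) ⁻¹' {q 0 ω0 x} := by rw [h2]; trivial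
          exact this
      have : Function.uncurry (q 0) = fun z => q 0 ω0 z.2 := by ext z; exact hconst z.1 z.2
      rw [this]
      have h3 : Measurable (q 0 ω0) := (A.hqm 0).of_uncurry_left
      exact h3.comp (@measurable_snd Ω (EE d) (natFilt X 0) _)
  | succ n ih =>
    have hg : Measurable[(natFilt X (n+1)).prod inferInstance] (Function.uncurry (g (n+1))) := by
      have hle : natFilt X n ≤ natFilt X (n+1) := nf_mono (Nat.le_succ n)
      have h1 : Measurable[(natFilt X (n+1)).prod inferInstance] (Function.uncurry (g n)) :=
        ih.1.mono (sup_le_sup (MeasurableSpace.comap_mono hle) le_rfl) le_rfl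
      have h2 : @Measurable Ω ℝ (natFilt X (n+1)) _ fun ω => q n ω (X (n+1) ω) :=
        @gen_comp d Ω Ω (natFilt X (n+1)) (natFilt X n) (q n) id (X (n+1)) ih.2 (measurable_id'' hle) (nf_X n)
      have := @gen_g d Ω (natFilt X (n+1)) (g n) (q n) (X (n+1)) f (kb K (b (n+1))) (1 - γ (n+1)) (γ (n+1)) η
        P.fcont.measurable (kb_cont P _).measurable h1 h2 (nf_X n)
      have e : Function.uncurry (g (n+1)) = Function.uncurry (fun ω x => (1 - γ (n+1)) * g n ω x
          + γ (n+1) * (f (X (n+1) ω) / q n ω (X (n+1) ω)) ^ η * kb K (b (n+1)) (x - X (n+1) ω)) := by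
        ext z; exact A.grec n z.1 z.2
      rw [e]; exact this
    refine ⟨hg, ?_⟩
    have := @gen_q d Ω (natFilt X (n+1)) (g (n+1)) q0 (lam (n+1)) P.q0cont.measurable hg
    have e : Function.uncurry (q (n+1)) = Function.uncurry (fun ω x =>
        (1 - lam (n+1)) * (g (n+1) ω x / (∫ y, g (n+1) ω y)) + lam (n+1) * q0 x) := by
      ext z; exact A.qrec n z.1 z.2
    rw [e]; exact this

lemma g_props (A : Alg μ P X g q) (n : ℕ) (ω : Ω) : Continuous (g n ω) ∧ Integrable (g n ω) ∧ ∃ C, ∀ x, |g n ω x| ≤ C := by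
  induction n with
  | zero =>
    have : g 0 ω = fun _ => 0 := funext (A.g0 ω)
    rw [this]
    exact ⟨continuous_const, integrable_zero _ _ _, 0, by simp⟩
  | succ n ih =>
    obtain ⟨h1, h2, C, h3⟩ := ih
    have : g (n+1) ω = fun x => (1 - γ (n+1)) * g n ω x
      + γ (n+1) * (f (X (n+1) ω) / q n ω (X (n+1) ω)) ^ η * kb K (b (n+1)) (x - X (n+1) ω) := funext (A.grec n ω)
    rw [this]
    set a := γ (n+1) * (f (X (n+1) ω) / q n ω (X (n+1) ω)) ^ η
    refine ⟨?_, (h2.const_mul _).add ((kb_Int_sub' P (P.bpos _) _).const_mul _), |1 - γ (n+1)| * C + |a| * (P.Km / b (n+1) ^ d), ?_⟩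
    · have := kb_cont P (b (n+1))
      fun_prop
    · intro x
      refine (abs_add_le _ _).trans ?_
      rw [abs_mul, abs_mul]
      have := h3 x
      have := kbx_abs P (P.bpos (n+1)) (x - X (n+1) ω)
      gcongr

lemma q_props (A : Alg μ P X g q) {n : ℕ} (hn : 1 ≤ n) (ω : Ω) : Continuous (q n ω) ∧ Integrable (q n ω) := by
  obtain ⟨n, rfl⟩ : ∃ m, n = m + 1 := ⟨n - 1, by omega⟩
  obtain ⟨h1, h2, -⟩ := g_props A (n+1) ω
  have : q (n+1) ω = fun x => (1 - lam (n+1)) * (g (n+1) ω x / (∫ y, g (n+1) ω y)) + lam (n+1) * q0 x := funext (A.qrec n ω)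
  rw [this]
  have := P.q0cont
  exact ⟨by fun_prop, ((h2.div_const _).const_mul _).add (P.q0Int.const_mul _)⟩

lemma q_int (A : Alg μ P X g q) (n : ℕ) : ∀ᵐ ω ∂μ, ∫ x, q n ω x = 1 := by
  have := A.pol n (fun _ => 1) continuous_const ⟨1, by simp⟩
  rw [condExp_const (nf_le A n)] at this
  filter_upwards [this] with ω h
  simpa using h.symm

lemma q_nonneg (A : Alg μ P X g q) {n : ℕ} (hn : 1 ≤ n) : ∀ᵐ ω ∂μ, ∀ x, 0 ≤ q n ω x := by
  have : ∀ᵐ ω ∂μ, ∀ (i j : ℕ), 0 ≤ ∫ y, max 0 (1 - j * ‖y - TopologicalSpace.denseSeq (EE d) i‖) * q n ω y := by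
    rw [ae_all_iff]; intro i
    rw [ae_all_iff]; intro j
    have hb : ∀ y : EE d, |max 0 (1 - (j:ℝ) * ‖y - TopologicalSpace.denseSeq (EE d) i‖)| ≤ 1 := by
      intro y
      rw [abs_of_nonneg (le_max_left _ _)]
      have : 0 ≤ (j:ℝ) * ‖y - TopologicalSpace.denseSeq (EE d) i‖ := by positivity
      exact max_le zero_le_one (by linarith)
    have h1 := A.pol n (fun y => max 0 (1 - j * ‖y - TopologicalSpace.denseSeq (EE d) i‖)) (by fun_prop) ⟨1, hb⟩
    have h2 : 0 ≤ᵐ[μ] μ[fun ω => max 0 (1 - j * ‖X (n+1) ω - TopologicalSpace.denseSeq (EE d) i‖) | natFilt X n] :=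
      condExp_nonneg (Eventually.of_forall fun ω => le_max_left _ _)
    filter_upwards [h1, h2] with ω a1 a2
    rw [← a1]; exact a2
  filter_upwards [this] with ω h
  exact nonneg_of_tests (q_props A hn ω).1 (q_props A hn ω).2 h

lemma alg_disint (A : Alg μ P X g q) {n : ℕ} (hn : 1 ≤ n) (Φ : Ω → EE d → ℝ≥0∞)
    (hΦ : Measurable[(natFilt X n).prod inferInstance] (Function.uncurry Φ)) :
    ∫⁻ ω, Φ ω (X (n+1) ω) ∂μ = ∫⁻ ω, ∫⁻ y, Φ ω y * ENNReal.ofReal (q n ω y) ∂volume ∂μ := by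
  refine @disint Ω Ω _ (natFilt X n) d μ _ id (measurable_id'' (nf_le A n)) (X (n+1)) (A.hX _) (q n) (gq_meas A n).2
    (q_nonneg A hn) (Eventually.of_forall fun ω => (q_props A hn ω).2) (q_int A n) ?_ Φ hΦ
  intro φ hφ hb C hC
  have h := A.pol n φ hφ hb
  obtain ⟨B, hB⟩ := hb
  have hI : Integrable (fun ω => φ (X (n+1) ω)) μ :=
    Integrable.of_bound (hφ.measurable.comp (A.hX _)).aestronglyMeasurable B (Eventually.of_forall fun ω => hB _)
  have h1 := setIntegral_condExp (nf_le A n) hI hC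
  simp only [Set.preimage_id, id]
  rw [← h1]
  exact setIntegral_congr_ae (nf_le A n _ hC) (h.mono fun ω h _ => h)

end alg
end Midas

namespace Midas

section chern
variable {d : ℕ} {η : ℝ} {f q0 K : EE d → ℝ} {γ b lam : ℕ → ℝ}
variable {P : Par d η f q0 K γ b lam}

/-- admissible kernel families -/
structure Adm (P : Par d η f q0 K γ b lam) (Ck : ℝ) (k : ℕ → EE d → ℝ) : Prop where
  Cpos : 0 < Ck
  meas : ∀ j, Measurable (k j)
  nonneg : ∀ j y, 0 ≤ k j y
  bd : ∀ j, P.N ≤ j → ∀ y, k j y ≤ Ck / b (j+1) ^ d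
  sq : ∀ j, P.N ≤ j → ∫ y, f y * k j y ^ 2 ≤ Ck / b (j+1) ^ d

lemma adm_k1 (P : Par d η f q0 K γ b lam) : Adm P 1 (k1 : ℕ → EE d → ℝ) := by
  have h : ∀ j, P.N ≤ j → 1 ≤ 1 / b (j+1) ^ d := by
    intro j hj
    have := P.bpos (j+1)
    rw [le_div_iff₀ (by positivity), one_mul]
    exact pow_le_one₀ this.le (P.bN _ (by omega))
  refine ⟨one_pos, fun j => measurable_const, fun j y => zero_le_one, fun j hj y => h j hj, fun j hj => ?_⟩
  simp only [k1, one_pow, mul_one, P.fint]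
  exact h j hj

lemma adm_kx (P : Par d η f q0 K γ b lam) (x : EE d) : Adm P (P.Km + P.F * P.Km) (kx K b x) := by
  have hK := P.Kmpos
  have hF := P.Fpos
  refine ⟨by positivity, fun j => ?_, fun j y => kb_nonneg P (P.bpos _) _, fun j hj y => ?_, fun j hj => ?_⟩
  · exact ((kb_cont P _).comp (continuous_const.sub continuous_id)).measurable
  · refine (kb_le P (P.bpos _) _).trans ?_
    have := P.bpos (j+1)
    apply div_le_div_of_nonneg_right _ (by positivity)
    nlinarith
  · have hb := P.bpos (j+1)
    calc ∫ y, f y * kx K b x j y ^ 2 ≤ ∫ y, (P.F * (P.Km / b (j+1) ^ d)) * kx K b x j y := by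
          apply integral_mono_of_nonneg
          · exact Eventually.of_forall fun y => mul_nonneg (P.f0 y) (sq_nonneg _)
          · exact (kb_Int_sub P hb x).const_mul _
          · refine Eventually.of_forall fun y => ?_
            have h1 : kx K b x j y ≤ P.Km / b (j+1) ^ d := kb_le P hb _
            have h0 : 0 ≤ kx K b x j y := kb_nonneg P hb _
            have h2 := P.fF y
            have h3 := P.f0 y
            show f y * kx K b x j y ^ 2 ≤ (P.F * (P.Km / b (j+1) ^ d)) * kx K b x j y
            calc f y * kx K b x j y ^ 2 = (f y * kx K b x j y) * kx K b x j y := by ring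
              _ ≤ _ := by gcongr
      _ = P.F * (P.Km / b (j+1) ^ d) := by
          rw [integral_const_mul]
          have : ∫ y, kx K b x j y = 1 := kb_int_sub P hb x
          rw [this, mul_one]
      _ ≤ _ := by
          rw [← mul_div_assoc]
          apply div_le_div_of_nonneg_right _ (by positivity)
          linarith

noncomputable def Cs (P : Par d η f q0 K γ b lam) (Ck : ℝ) : ℝ := (Ck + Ck ^ 2) * (1 + 2 / P.c)

noncomputable def Bk (P : Par d η f q0 K γ b lam) (Ck : ℝ) (n : ℕ) : ℝ :=
  (2 / (P.c * lam n)) ^ η * (Ck / b n ^ d)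

lemma Bk_pos (P : Par d η f q0 K γ b lam) {Ck : ℝ} (hC : 0 < Ck) (n : ℕ) : 0 < Bk P Ck n := by
  have := P.hc; have := P.lpos n; have := P.bpos n
  unfold Bk; positivity

lemma Bk_mono (P : Par d η f q0 K γ b lam) {Ck : ℝ} (hC : 0 < Ck) : Monotone (Bk P Ck) := by
  intro n m h
  have := P.hc; have := P.lpos n; have := P.bpos n
  have := P.lpos m; have := P.bpos m; have := P.lanti h; have := P.banti h; have := P.hη
  unfold Bk; gcongr

lemma Vf_pos (P : Par d η f q0 K γ b lam) (n : ℕ) : 0 < Vf η d lam b n := by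
  have := P.lpos n; have := P.bpos n
  unfold Vf; split_ifs <;> positivity

lemma Vf_mono (P : Par d η f q0 K γ b lam) : Monotone (Vf η d lam b) := by
  intro n m h
  have := P.lpos n; have := P.bpos n
  have := P.lpos m; have := P.bpos m; have := P.lanti h; have := P.banti h; have := P.hη; have := P.hη1
  unfold Vf
  split_ifs with hh
  · apply mul_le_mul _ _ (by positivity) (by positivity)
    · exact Real.rpow_le_rpow_of_nonpos (by assumption) (by assumption) (by linarith)
    · gcongr
  · apply Real.rpow_le_rpow_of_nonpos (by assumption) (by assumption)
    have : 0 ≤ 2 * (d:ℝ) * (1 - η) := by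
      have : 0 ≤ 1 - η := by linarith
      positivity
    linarith

lemma Cs_pos (P : Par d η f q0 K γ b lam) {Ck : ℝ} (hC : 0 < Ck) : 0 < Cs P Ck := by
  have := P.hc
  unfold Cs; positivity

variable {q : EE d → ℝ} {k : ℕ → EE d → ℝ} {Ck : ℝ}

lemma c_le (hk : Adm P Ck k) {n : ℕ} (hn : P.N ≤ n) (hq : ∀ x, 0 ≤ q x) (y : EE d) :
    tw f q (TT P n) y ^ η * k n y ≤ Bk P Ck (n+1) := by
  have h1 := twp_le P hq (TT_pos P n) y
  have h2 := hk.bd n hn y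
  have h3 := hk.nonneg n y
  have := TT_pos P n
  unfold Bk
  change _ ≤ TT P n ^ η * _
  gcongr

lemma cq_Int (hk : Adm P Ck k) {n : ℕ} (hn : P.N ≤ n) (hq : ∀ x, 0 ≤ q x) (hqi : Integrable q) :
    Integrable fun y => tw f q (TT P n) y ^ η * k n y * q y := by
  refine GG_Int P hq hqi (TT_pos P n) (hk.meas n).aestronglyMeasurable (C := Ck / b (n+1) ^ d) ?_
  intro y
  rw [abs_of_nonneg (hk.nonneg n y)]; exact hk.bd n hn y

lemma cqq_Int (hk : Adm P Ck k) {n : ℕ} (hn : P.N ≤ n) (hq : ∀ x, 0 ≤ q x) (hqi : Integrable q) :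
    Integrable fun y => (tw f q (TT P n) y ^ η * k n y) ^ 2 * q y := by
  refine ((cq_Int hk hn hq hqi).const_mul (Bk P Ck (n+1))).mono' ?_ (Eventually.of_forall fun y => ?_)
  · have h1 : AEMeasurable q := hqi.aestronglyMeasurable.aemeasurable
    have h2 : Measurable f := P.fcont.measurable
    have h3 := hk.meas n
    apply AEMeasurable.aestronglyMeasurable
    unfold tw
    fun_prop
  · have h0 := mul_nonneg (twp_nonneg P hq (TT_pos P n) y) (hk.nonneg n y)
    have h1 := c_le hk hn hq y
    have h2 := hq y
    rw [Real.norm_of_nonneg (by positivity)]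
    rw [sq, mul_assoc]
    exact mul_le_mul_of_nonneg_right h1 (mul_nonneg h0 h2)

lemma D_le (hk : Adm P Ck k) {n : ℕ} (hn : P.N ≤ n) (hq : ∀ x, 0 ≤ q x) (hqi : Integrable q) (hq1 : ∫ y, q y = 1) :
    GG η f q (TT P n) (k n) ≤ Bk P Ck (n+1) := by
  calc GG η f q (TT P n) (k n) ≤ ∫ y, Bk P Ck (n+1) * q y := by
        apply integral_mono (cq_Int hk hn hq hqi) (hqi.const_mul _)
        intro y
        exact mul_le_mul_of_nonneg_right (c_le hk hn hq y) (hq y)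
    _ = _ := by rw [integral_const_mul, hq1, mul_one]

lemma fk_Int (hk : Adm P Ck k) {n : ℕ} (hn : P.N ≤ n) : Integrable fun y => f y * k n y ^ 2 := by
  refine P.fInt.mul_bdd (c := (Ck / b (n+1) ^ d) ^ 2) ((hk.meas n).pow_const 2).aestronglyMeasurable (Eventually.of_forall fun y => ?_)
  have := hk.nonneg n y
  have := hk.bd n hn y
  rw [Real.norm_of_nonneg (by positivity)]
  gcongr

lemma var_bound (hk : Adm P Ck k) {n : ℕ} (hn : P.N ≤ n) (hq : ∀ x, 0 ≤ q x) (hqi : Integrable q) (hq1 : ∫ y, q y = 1) :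
    ∫ y, (tw f q (TT P n) y ^ η * k n y) ^ 2 * q y ≤ Cs P Ck * Vf η d lam b (n+1) := by
  have hT := TT_pos P n
  have hc := P.hc; have hl := P.lpos (n+1); have hb := P.bpos (n+1)
  have hη := P.hη; have hη1 := P.hη1; have hC := hk.Cpos
  have e2 : ∀ y, (tw f q (TT P n) y ^ η * k n y) ^ 2 * q y = (tw f q (TT P n) y ^ (2*η) * q y) * k n y ^ 2 := by
    intro y
    have : tw f q (TT P n) y ^ (2*η) = (tw f q (TT P n) y ^ η) ^ 2 := by
      rw [← Real.rpow_natCast, ← Real.rpow_mul (tw_nonneg P hq hT y)]; norm_num [mul_comm]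
    rw [this]; ring
  have hsq := hk.sq n hn
  by_cases hh : 1/2 ≤ η
  · have key : ∀ y, (tw f q (TT P n) y ^ η * k n y) ^ 2 * q y ≤ TT P n ^ (2*η-1) * (f y * k n y ^ 2) := by
      intro y
      rw [e2, ← mul_assoc]
      apply mul_le_mul_of_nonneg_right _ (sq_nonneg _)
      have h0 := tw_nonneg P hq hT y
      have h1 : tw f q (TT P n) y ^ (2*η) = tw f q (TT P n) y ^ (2*η-1) * tw f q (TT P n) y := by
        rcases h0.eq_or_lt with h | h
        · rw [← h, Real.zero_rpow (by linarith)]; simp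
        · rw [← Real.rpow_add_one h.ne']; congr 1; ring
      rw [h1, mul_assoc]
      have h2 : tw f q (TT P n) y * q y ≤ f y := by
        rcases (hq y).eq_or_lt with h | h
        · rw [← h]; simp [P.f0 y]
        · calc _ ≤ f y / q y * q y := mul_le_mul_of_nonneg_right (min_le_left _ _) h.le
            _ = f y := by field_simp
      have h3 : tw f q (TT P n) y ^ (2*η-1) ≤ TT P n ^ (2*η-1) :=
        Real.rpow_le_rpow h0 (tw_le_T y) (by linarith)
      exact mul_le_mul h3 h2 (mul_nonneg h0 (hq y)) (by positivity)
    calc _ ≤ ∫ y, TT P n ^ (2*η-1) * (f y * k n y ^ 2) := integral_mono (cqq_Int hk hn hq hqi) ((fk_Int hk hn).const_mul _) key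
      _ = TT P n ^ (2*η-1) * ∫ y, f y * k n y ^ 2 := integral_const_mul _ _
      _ ≤ TT P n ^ (2*η-1) * (Ck / b (n+1) ^ d) := by gcongr
      _ ≤ _ := by
        rw [Vf, if_pos hh, Cs]
        have t1 : TT P n ^ (2*η-1) = (2 / P.c) ^ (2*η-1) * lam (n+1) ^ (-(2*η-1)) := by
          rw [TT, ← div_div, Real.div_rpow (by positivity) hl.le, Real.rpow_neg hl.le]; rfl
        have t2 : (2 / P.c) ^ (2*η-1) ≤ 1 + 2 / P.c := by
          calc (2 / P.c) ^ (2*η-1) ≤ (1 + 2 / P.c) ^ (2*η-1) :=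
                Real.rpow_le_rpow (by positivity) (by linarith) (by linarith)
            _ ≤ (1 + 2 / P.c) ^ (1:ℝ) := Real.rpow_le_rpow_of_exponent_le (by linarith [div_pos two_pos hc]) (by linarith)
            _ = _ := Real.rpow_one _
        rw [t1]
        calc (2 / P.c) ^ (2*η-1) * lam (n+1) ^ (-(2*η-1)) * (Ck / b (n+1) ^ d)
            = (Ck * (2 / P.c) ^ (2*η-1)) * (lam (n+1) ^ (-(2*η-1)) * (b (n+1) ^ d)⁻¹) := by rw [div_eq_mul_inv]; ring
          _ ≤ _ := by
            apply mul_le_mul_of_nonneg_right _ (by positivity)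
            apply mul_le_mul _ t2 (by positivity) (by positivity)
            nlinarith
  · push Not at hh
    set B := b (n+1) with hB
    set t := B ^ (-((1-2*η)*d)) with ht
    set s := B ^ (2*η*d) with hs
    have htp : 0 < t := by positivity
    have hsp : 0 < s := by positivity
    have hts : t ^ (2*η) * s ^ (1-2*η) = 1 := by
      rw [ht, hs, ← Real.rpow_mul hb.le, ← Real.rpow_mul hb.le, ← Real.rpow_add hb]
      rw [show -((1-2*η)*d) * (2*η) + 2*η*d*(1-2*η) = 0 by ring, Real.rpow_zero]
    have key : ∀ y, (tw f q (TT P n) y ^ η * k n y) ^ 2 * q y ≤ t * (f y * k n y ^ 2) + s * (Ck / B ^ d) ^ 2 * q y := by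
      intro y
      rw [e2]
      have hf := P.f0 y
      have hqy := hq y
      have h1 : tw f q (TT P n) y ^ (2*η) * q y ≤ f y ^ (2*η) * q y ^ (1-2*η) := by
        rcases hqy.eq_or_lt with h | h
        · rw [← h, Real.zero_rpow (by linarith)]; simp
        · calc _ ≤ (f y / q y) ^ (2*η) * q y := by
                gcongr
                · exact tw_nonneg P hq hT y
                · exact min_le_left _ _
            _ = _ := by rw [Real.div_rpow hf h.le, Real.rpow_sub h, Real.rpow_one]; field_simp
      have h2 : f y ^ (2*η) * q y ^ (1-2*η) ≤ t * f y + s * q y := by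
        calc f y ^ (2*η) * q y ^ (1-2*η) = (t * f y) ^ (2*η) * (s * q y) ^ (1-2*η) := by
              rw [Real.mul_rpow htp.le hf, Real.mul_rpow hsp.le hqy]
              calc _ = (t ^ (2*η) * s ^ (1-2*η)) * (f y ^ (2*η) * q y ^ (1-2*η)) := by rw [hts, one_mul]
                _ = _ := by ring
          _ ≤ (2*η) * (t * f y) + (1-2*η) * (s * q y) :=
              Real.geom_mean_le_arith_mean2_weighted (by linarith) (by linarith) (by positivity) (by positivity) (by ring)
          _ ≤ 1 * (t * f y) + 1 * (s * q y) := by gcongr <;> linarith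
          _ = _ := by ring
      have h3 : k n y ^ 2 ≤ (Ck / B ^ d) ^ 2 := pow_le_pow_left₀ (hk.nonneg n y) (hk.bd n hn y) 2
      calc _ ≤ (t * f y + s * q y) * k n y ^ 2 := mul_le_mul_of_nonneg_right (h1.trans h2) (sq_nonneg _)
        _ = t * (f y * k n y ^ 2) + s * q y * k n y ^ 2 := by ring
        _ ≤ t * (f y * k n y ^ 2) + s * q y * (Ck / B ^ d) ^ 2 := by gcongr
        _ = _ := by ring
    calc _ ≤ ∫ y, (t * (f y * k n y ^ 2) + s * (Ck / B ^ d) ^ 2 * q y) :=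
          integral_mono (cqq_Int hk hn hq hqi) (((fk_Int hk hn).const_mul _).add (hqi.const_mul _)) key
      _ = t * (∫ y, f y * k n y ^ 2) + s * (Ck / B ^ d) ^ 2 := by
          rw [integral_add ((fk_Int hk hn).const_mul _) (hqi.const_mul _), integral_const_mul, integral_const_mul, hq1, mul_one]
      _ ≤ t * (Ck / B ^ d) + s * (Ck / B ^ d) ^ 2 := by gcongr
      _ = (Ck + Ck^2) * Vf η d lam b (n+1) := by
        rw [Vf, if_neg (not_le.2 hh), ← hB, ht, hs, div_pow, ← pow_mul, ← Real.rpow_natCast B d, ← Real.rpow_natCast B (d*2)]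
        have i1 : B ^ (-((1-2*η)*d)) * (Ck / B ^ (d:ℝ)) = Ck * B ^ (-(2*(d:ℝ)*(1-η))) := by
          rw [← mul_div_assoc, mul_comm, mul_div_assoc, ← Real.rpow_sub hb]; congr 2; ring
        have i2 : B ^ (2*η*d) * (Ck^2 / B ^ ((d*2:ℕ):ℝ)) = Ck^2 * B ^ (-(2*(d:ℝ)*(1-η))) := by
          rw [← mul_div_assoc, mul_comm, mul_div_assoc, ← Real.rpow_sub hb]; congr 2; push_cast; ring
        rw [i1, i2]; ring
      _ ≤ _ := by
        apply mul_le_mul_of_nonneg_right _ (Vf_pos P _).le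
        rw [Cs]
        have : 0 < 2 / P.c := by positivity
        have : 0 < Ck + Ck^2 := by positivity
        nlinarith

/-- one-step exponential bound -/
lemma one_step (hk : Adm P Ck k) {n : ℕ} (hn : P.N ≤ n) (hq : ∀ x, 0 ≤ q x) (hqi : Integrable q) (hq1 : ∫ y, q y = 1)
    {s : ℝ} (hs : |s| * Bk P Ck (n+1) ≤ 1) (a : ℝ) :
    ∫⁻ y, ENNReal.ofReal (Real.exp (a + s * (tw f q (TT P n) y ^ η * k n y - GG η f q (TT P n) (k n)))) * ENNReal.ofReal (q y)
      ≤ ENNReal.ofReal (Real.exp a) * ENNReal.ofReal (Real.exp (s^2 * (Cs P Ck * Vf η d lam b (n+1)))) := by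
  set D := GG η f q (TT P n) (k n) with hD
  set c : EE d → ℝ := fun y => tw f q (TT P n) y ^ η * k n y with hc
  have hc0 : ∀ y, 0 ≤ c y := fun y => mul_nonneg (twp_nonneg P hq (TT_pos P n) y) (hk.nonneg n y)
  have hcB : ∀ y, c y ≤ Bk P Ck (n+1) := fun y => c_le hk hn hq y
  have hD0 : 0 ≤ D := GG_nonneg P hq (TT_pos P n) (hk.nonneg n)
  have hDB : D ≤ Bk P Ck (n+1) := D_le hk hn hq hqi hq1
  have I1 : Integrable fun y => c y * q y := cq_Int hk hn hq hqi
  have I2 : Integrable fun y => c y ^ 2 * q y := cqq_Int hk hn hq hqi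
  have hu : ∀ y, |s * (c y - D)| ≤ 1 := by
    intro y
    rw [abs_mul]
    refine le_trans ?_ hs
    gcongr
    rw [abs_le]; constructor <;> linarith [hc0 y, hcB y]
  have hpt : ∀ y, Real.exp (a + s * (c y - D)) * q y ≤
      Real.exp a * ((1 - s * D + s^2*D^2) * q y + (s - 2*s^2*D) * (c y * q y) + s^2 * (c y ^ 2 * q y)) := by
    intro y
    have h1 := Real.abs_exp_sub_one_sub_id_le (hu y)
    have h2 : Real.exp (s * (c y - D)) ≤ 1 + s * (c y - D) + (s * (c y - D))^2 := by linarith [(abs_le.1 h1).2]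
    rw [Real.exp_add, mul_assoc]
    gcongr
    calc _ ≤ (1 + s * (c y - D) + (s * (c y - D))^2) * q y := mul_le_mul_of_nonneg_right h2 (hq y)
      _ = _ := by ring
  have I3 : Integrable fun y => Real.exp a * ((1 - s * D + s^2*D^2) * q y + (s - 2*s^2*D) * (c y * q y) + s^2 * (c y ^ 2 * q y)) :=
    (((hqi.const_mul _).add (I1.const_mul _)).add (I2.const_mul _)).const_mul _
  have hIntEq : ∫ y, Real.exp a * ((1 - s * D + s^2*D^2) * q y + (s - 2*s^2*D) * (c y * q y) + s^2 * (c y ^ 2 * q y)) =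
      Real.exp a * (1 - s^2*D^2 + s^2 * ∫ y, c y ^ 2 * q y) := by
    have I4 : Integrable fun y => (1 - s * D + s^2*D^2) * q y + (s - 2*s^2*D) * (c y * q y) :=
      (hqi.const_mul _).add (I1.const_mul _)
    rw [integral_const_mul, integral_add I4 (I2.const_mul _),
      integral_add (hqi.const_mul _) (I1.const_mul _), integral_const_mul, integral_const_mul, integral_const_mul, hq1]
    have : ∫ y, c y * q y = D := rfl
    rw [this]; ring
  calc _ ≤ ∫⁻ y, ENNReal.ofReal (Real.exp a * ((1 - s * D + s^2*D^2) * q y + (s - 2*s^2*D) * (c y * q y) + s^2 * (c y ^ 2 * q y))) := by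
        apply lintegral_mono
        intro y
        show ENNReal.ofReal _ * _ ≤ _
        rw [← ENNReal.ofReal_mul (Real.exp_pos _).le]
        exact ENNReal.ofReal_le_ofReal (hpt y)
    _ = ENNReal.ofReal (Real.exp a * (1 - s^2*D^2 + s^2 * ∫ y, c y ^ 2 * q y)) := by
        rw [← hIntEq, ofReal_integral_eq_lintegral_ofReal I3]
        refine Eventually.of_forall fun y => le_trans ?_ (hpt y)
        have := hq y
        show 0 ≤ Real.exp (a + s * (c y - D)) * q y
        positivity
    _ ≤ _ := by
        rw [← ENNReal.ofReal_mul (Real.exp_pos _).le]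
        apply ENNReal.ofReal_le_ofReal
        apply mul_le_mul_of_nonneg_left _ (Real.exp_pos _).le
        have hv : ∫ y, c y ^ 2 * q y ≤ Cs P Ck * Vf η d lam b (n+1) := var_bound hk hn hq hqi hq1
        have h3 := Real.add_one_le_exp (s^2 * (Cs P Ck * Vf η d lam b (n+1)))
        have h4 : 0 ≤ s^2*D^2 := by positivity
        have h5 := mul_le_mul_of_nonneg_left hv (sq_nonneg s)
        linarith

end chern
end Midas

namespace Midas

section conc
variable {Ω : Type*} [MeasurableSpace Ω] {μ : Measure Ω} [IsProbabilityMeasure μ]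
variable {d : ℕ} {η : ℝ} {f q0 K : EE d → ℝ} {γ b lam : ℕ → ℝ}
variable {P : Par d η f q0 K γ b lam} {X : ℕ → Ω → EE d} {g q : ℕ → Ω → EE d → ℝ}
variable {k : ℕ → EE d → ℝ} {Ck : ℝ}

lemma gen_c {S : Type*} [MeasurableSpace S] {p : S → EE d → ℝ} {f k : EE d → ℝ} (T η : ℝ) (hf : Measurable f)
    (hk : Measurable k) (hp : Measurable (Function.uncurry p)) :
    Measurable (Function.uncurry fun s y => tw f (p s) T y ^ η * k y) := by
  have h1 : Measurable fun z : S × EE d => p z.1 z.2 := hp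
  have h2 : Measurable fun z : S × EE d => f z.2 := hf.comp measurable_snd
  have h3 : Measurable fun z : S × EE d => k z.2 := hk.comp measurable_snd
  exact (((h2.div h1).min measurable_const).pow_const η).mul h3

lemma gen_GG {S : Type*} [MeasurableSpace S] {p : S → EE d → ℝ} {f k : EE d → ℝ} (T η : ℝ) (hf : Measurable f)
    (hk : Measurable k) (hp : Measurable (Function.uncurry p)) :
    Measurable fun s => GG η f (p s) T k := by
  have h1 := gen_c T η hf hk hp
  exact gen_int (F := fun s y => tw f (p s) T y ^ η * k y * p s y) (h1.mul hp)

lemma gen_diff {S : Type*} [MeasurableSpace S] {p : S → EE d → ℝ} {f k : EE d → ℝ} (T η : ℝ) (hf : Measurable f)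
    (hk : Measurable k) (hp : Measurable (Function.uncurry p)) :
    Measurable (Function.uncurry fun s y => tw f (p s) T y ^ η * k y - GG η f (p s) T k) := by
  have h1 := gen_c T η hf hk hp
  have h2 : Measurable fun z : S × EE d => GG η f (p z.1) T k := (gen_GG T η hf hk hp).comp measurable_fst
  exact h1.sub h2

lemma gen_lin {S : Type*} [MeasurableSpace S] {u v : S → ℝ} (a c : ℝ) (hu : Measurable u) (hv : Measurable v) :
    Measurable fun s => a * u s + c * v s := (hu.const_mul a).add (hv.const_mul c)

lemma gen_exp {S : Type*} [MeasurableSpace S] {u : S → ℝ} {v : S → EE d → ℝ} (a c : ℝ) (hu : Measurable u)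
    (hv : Measurable (Function.uncurry v)) :
    Measurable (Function.uncurry fun s y => ENNReal.ofReal (Real.exp (a * u s + c * v s y))) := by
  have h1 : Measurable fun z : S × EE d => u z.1 := hu.comp measurable_fst
  exact ((((h1.const_mul a).add (hv.const_mul c))).exp).ennreal_ofReal

lemma zz_meas (A : Alg μ P X g q) (hk : ∀ j, Measurable (k j)) (n : ℕ) :
    Measurable[natFilt X n] fun ω => zz P (fun j => q j ω) (fun j => X j ω) k n := by
  induction n with
  | zero => simp only [zz, rseq]; exact measurable_const
  | succ n ih =>
    rcases Nat.lt_or_ge n P.N with hn | hn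
    · have : (fun ω => zz P (fun j => q j ω) (fun j => X j ω) k (n+1)) = fun _ => 0 := by
        ext ω; exact rseq_le_N hn
      rw [this]; exact measurable_const
    · have e : (fun ω => zz P (fun j => q j ω) (fun j => X j ω) k (n+1)) = fun ω =>
          (1 - γ (n+1)) * zz P (fun j => q j ω) (fun j => X j ω) k n + γ (n+1) *
          (tw f (q n ω) (TT P n) (X (n+1) ω) ^ η * k n (X (n+1) ω) - GG η f (q n ω) (TT P n) (k n)) := by
        ext ω; exact rseq_succ hn
      rw [e]
      have hle : natFilt X n ≤ natFilt X (n+1) := nf_mono (Nat.le_succ n)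
      have h1 : Measurable[natFilt X (n+1)] fun ω => zz P (fun j => q j ω) (fun j => X j ω) k n := ih.mono hle le_rfl
      have h2 := @gen_diff d Ω (natFilt X n) (q n) f (k n) (TT P n) η P.fcont.measurable (hk n) (gq_meas A n).2
      have h3 := @gen_comp d Ω Ω (natFilt X (n+1)) (natFilt X n) _ id (X (n+1)) h2 (measurable_id'' hle) (nf_X n)
      exact @gen_lin Ω (natFilt X (n+1)) _ _ (1 - γ (n+1)) (γ (n+1)) h1 h3

lemma mgf_bound (A : Alg μ P X g q) (hk : Adm P Ck k) {n : ℕ} (hn : P.N ≤ n) : ∀ s : ℝ, |s| * γ n * Bk P Ck n ≤ 1 →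
    ∫⁻ ω, ENNReal.ofReal (Real.exp (s * zz P (fun j => q j ω) (fun j => X j ω) k n)) ∂μ
      ≤ ENNReal.ofReal (Real.exp (s^2 * (n * γ n ^ 2 * (Cs P Ck * Vf η d lam b n)))) := by
  induction n, hn using Nat.le_induction with
  | base =>
    intro s _
    have : ∀ ω, zz P (fun j => q j ω) (fun j => X j ω) k P.N = 0 := fun ω => rseq_le_N le_rfl
    simp only [this, mul_zero, Real.exp_zero, ENNReal.ofReal_one, lintegral_one, measure_univ]
    rw [← ENNReal.ofReal_one]
    apply ENNReal.ofReal_le_ofReal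
    apply Real.one_le_exp
    have := (Cs_pos P hk.Cpos); have := Vf_pos P P.N
    positivity
  | succ n hn ih =>
    intro s hs
    have hγ := P.γpos (n+1)
    have hγn := P.γpos n
    have h1 := P.g1 hn
    have hst := P.γstep n hn
    have hB := Bk_pos P hk.Cpos n
    have hBm := Bk_mono P hk.Cpos (Nat.le_succ n)
    have hV := Vf_pos P n
    have hVm := Vf_mono P (Nat.le_succ n)
    have hC := Cs_pos P hk.Cpos
    have e : ∀ ω, zz P (fun j => q j ω) (fun j => X j ω) k (n+1) =
          (1 - γ (n+1)) * zz P (fun j => q j ω) (fun j => X j ω) k n + γ (n+1) *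
          (tw f (q n ω) (TT P n) (X (n+1) ω) ^ η * k n (X (n+1) ω) - GG η f (q n ω) (TT P n) (k n)) :=
      fun ω => rseq_succ hn
    have e2 : ∀ ω, ENNReal.ofReal (Real.exp (s * zz P (fun j => q j ω) (fun j => X j ω) k (n+1))) =
        (fun ω y => ENNReal.ofReal (Real.exp ((s * (1 - γ (n+1))) * zz P (fun j => q j ω) (fun j => X j ω) k n +
          (s * γ (n+1)) * (tw f (q n ω) (TT P n) y ^ η * k n y - GG η f (q n ω) (TT P n) (k n))))) ω (X (n+1) ω) := by
      intro ω
      show _ = ENNReal.ofReal _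
      rw [e]; congr 2; ring
    rw [lintegral_congr e2, alg_disint A (P.N1.trans hn) (fun ω y => ENNReal.ofReal (Real.exp ((s * (1 - γ (n+1))) * zz P (fun j => q j ω) (fun j => X j ω) k n +
          (s * γ (n+1)) * (tw f (q n ω) (TT P n) y ^ η * k n y - GG η f (q n ω) (TT P n) (k n)))))]
    swap
    · exact @gen_exp d Ω (natFilt X n) _ _ _ _ (zz_meas A hk.meas n)
        (@gen_diff d Ω (natFilt X n) (q n) f (k n) (TT P n) η P.fcont.measurable (hk.meas n) (gq_meas A n).2)
    have hs1 : |s * γ (n+1)| * Bk P Ck (n+1) ≤ 1 := by rwa [abs_mul, abs_of_pos hγ]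
    have hs2 : |s * (1 - γ (n+1))| * γ n * Bk P Ck n ≤ 1 := by
      refine le_trans ?_ hs
      rw [abs_mul, abs_of_nonneg (by linarith : 0 ≤ 1 - γ (n+1)), mul_assoc |s|, mul_comm (1 - γ (n+1))]
      gcongr
    set V := Cs P Ck * Vf η d lam b (n+1) with hVd
    have hVp : 0 < V := mul_pos hC (Vf_pos P _)
    calc _ ≤ ∫⁻ ω, ENNReal.ofReal (Real.exp ((s * (1 - γ (n+1))) * zz P (fun j => q j ω) (fun j => X j ω) k n)) *
            ENNReal.ofReal (Real.exp ((s * γ (n+1))^2 * V)) ∂μ := by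
          apply lintegral_mono_ae
          filter_upwards [q_nonneg A (P.N1.trans hn), q_int A n] with ω a1 a2
          exact one_step hk hn a1 (q_props A (P.N1.trans hn) ω).2 a2 hs1 _
      _ = (∫⁻ ω, ENNReal.ofReal (Real.exp ((s * (1 - γ (n+1))) * zz P (fun j => q j ω) (fun j => X j ω) k n)) ∂μ) *
            ENNReal.ofReal (Real.exp ((s * γ (n+1))^2 * V)) := by
          rw [lintegral_mul_const']
          exact ENNReal.ofReal_ne_top
      _ ≤ ENNReal.ofReal (Real.exp ((s * (1 - γ (n+1)))^2 * (n * γ n ^ 2 * (Cs P Ck * Vf η d lam b n)))) *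
            ENNReal.ofReal (Real.exp ((s * γ (n+1))^2 * V)) := by
          gcongr
          exact ih _ hs2
      _ ≤ _ := by
          rw [← ENNReal.ofReal_mul (Real.exp_pos _).le, ← Real.exp_add]
          apply ENNReal.ofReal_le_ofReal
          apply Real.exp_le_exp.2
          have t1 : (γ n * (1 - γ (n+1))) ^ 2 ≤ γ (n+1) ^ 2 := pow_le_pow_left₀ (mul_nonneg hγn.le (by linarith)) hst 2
          have t2 : Cs P Ck * Vf η d lam b n ≤ V := mul_le_mul_of_nonneg_left hVm hC.le
          calc (s * (1 - γ (n+1)))^2 * (n * γ n ^ 2 * (Cs P Ck * Vf η d lam b n)) + (s * γ (n+1))^2 * V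
              = s^2 * (n * ((γ n * (1 - γ (n+1)))^2 * (Cs P Ck * Vf η d lam b n))) + s^2 * (γ (n+1)^2 * V) := by ring
            _ ≤ s^2 * (n * (γ (n+1)^2 * V)) + s^2 * (γ (n+1)^2 * V) := by
                have : (γ n * (1 - γ (n+1)))^2 * (Cs P Ck * Vf η d lam b n) ≤ γ (n+1)^2 * V :=
                  mul_le_mul t1 t2 (by positivity) (by positivity)
                gcongr
            _ = _ := by push_cast; ring

lemma conc (A : Alg μ P X g q) (hC : 0 < Ck) (p : ℕ) {τ : ℝ} (hτ : 0 < τ) :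
    ∀ᶠ n : ℕ in atTop, ∀ k, Adm P Ck k →
      μ {ω | τ * lam n ^ (1 - η) < |zz P (fun j => q j ω) (fun j => X j ω) k n|} ≤ ENNReal.ofReal (2 / (n:ℝ) ^ p) := by
  have hη := P.hη; have hη1 := P.hη1; have hc := P.hc
  have hCs := Cs_pos P hC
  -- constant M with s = M log n / lam^(1-η)
  set M : ℝ := (p + 1) / τ with hM
  have hMp : 0 < M := by positivity
  set Q : ℝ := (2 / P.c) ^ η * Ck with hQ
  have hQp : 0 < Q := by positivity
  filter_upwards [P.rateB.eventually (gt_mem_nhds (show 0 < 1 / (M * Q) by positivity)),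
    P.rateV.eventually (gt_mem_nhds (show 0 < 1 / (M^2 * Cs P Ck) by positivity)),
    eventually_ge_atTop P.N, eventually_ge_atTop 3] with n h1 h2 hn h3 k hk
  have hl := P.lpos n; have hb := P.bpos n; have hγ := P.γpos n
  have hn1 : (1:ℝ) < n := by exact_mod_cast (by omega : 1 < n)
  have hlog : 0 < Real.log n := Real.log_pos hn1
  set s : ℝ := M * Real.log n / lam n ^ (1 - η) with hs
  have hsp : 0 < s := by positivity
  have hsB : s * γ n * Bk P Ck n ≤ 1 := by
    have e1 : s * γ n * Bk P Ck n = M * Q * (γ n * Real.log n / (lam n * b n ^ d)) := by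
      rw [hs, Bk, hQ, ← div_div, Real.div_rpow (by positivity) hl.le]
      have : lam n = lam n ^ (1 - η) * lam n ^ η := by
        rw [← Real.rpow_add hl]; norm_num
      conv_rhs => rw [this]
      field_simp
    rw [e1]
    rw [lt_div_iff₀ (by positivity)] at h1
    linarith
  have hsV : s^2 * (n * γ n ^ 2 * (Cs P Ck * Vf η d lam b n)) ≤ Real.log n := by
    have e1 : s^2 * (n * γ n ^ 2 * (Cs P Ck * Vf η d lam b n)) =
        M^2 * Cs P Ck * (n * γ n ^ 2 * Real.log n * Vf η d lam b n / lam n ^ (2*(1-η))) * Real.log n := by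
      have : lam n ^ (2*(1-η)) = (lam n ^ (1-η))^2 := by
        rw [← Real.rpow_natCast, ← Real.rpow_mul hl.le]; congr 1; push_cast; ring
      rw [hs, this]; field_simp
    rw [e1]
    rw [lt_div_iff₀ (by positivity)] at h2
    have : M^2 * Cs P Ck * (n * γ n ^ 2 * Real.log n * Vf η d lam b n / lam n ^ (2*(1-η))) ≤ 1 := by linarith
    nlinarith
  have hexp : Real.exp (Real.log n) = n := Real.exp_log (by linarith)
  have hst : s * (τ * lam n ^ (1-η)) = (p+1) * Real.log n := by
    rw [hs, hM]; field_simp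
  have one : ∀ σ : ℝ, |σ| = 1 → μ {ω | τ * lam n ^ (1 - η) < σ * zz P (fun j => q j ω) (fun j => X j ω) k n} ≤
      ENNReal.ofReal (1 / (n:ℝ) ^ p) := by
    intro σ hσ
    have hm := mgf_bound A hk hn (s * σ) (by rw [abs_mul, hσ, mul_one, abs_of_pos hsp]; exact hsB)
    have hσ2 : (s*σ)^2 = s^2 := by rw [mul_pow, ← sq_abs σ, hσ]; ring
    rw [hσ2] at hm
    have hmark := mul_meas_ge_le_lintegral₀ (μ := μ)
      (f := fun ω => ENNReal.ofReal (Real.exp (s * σ * zz P (fun j => q j ω) (fun j => X j ω) k n)))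
      (((((zz_meas A hk.meas n).mono (nf_le A n) le_rfl).const_mul _).exp).ennreal_ofReal).aemeasurable
      (ENNReal.ofReal ((n:ℝ)^(p+1)))
    have hsub : {ω | τ * lam n ^ (1 - η) < σ * zz P (fun j => q j ω) (fun j => X j ω) k n} ⊆
        {ω | ENNReal.ofReal ((n:ℝ)^(p+1)) ≤ ENNReal.ofReal (Real.exp (s * σ * zz P (fun j => q j ω) (fun j => X j ω) k n))} := by
      intro ω hω
      simp only [Set.mem_setOf_eq] at hω ⊢
      apply ENNReal.ofReal_le_ofReal
      have : (n:ℝ)^(p+1) = Real.exp ((p+1) * Real.log n) := by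
        conv_lhs => rw [← hexp]
        rw [← Real.exp_nat_mul]; push_cast; rfl
      rw [this, ← hst]
      apply Real.exp_le_exp.2
      rw [mul_assoc]
      gcongr
    have hle : ENNReal.ofReal ((n:ℝ)^(p+1)) * μ {ω | τ * lam n ^ (1 - η) < σ * zz P (fun j => q j ω) (fun j => X j ω) k n} ≤
        ENNReal.ofReal n := by
      calc _ ≤ _ := mul_le_mul_right (measure_mono hsub) _
        _ ≤ _ := hmark
        _ ≤ _ := hm
        _ ≤ _ := by
          apply ENNReal.ofReal_le_ofReal
          conv_rhs => rw [← hexp]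
          exact Real.exp_le_exp.2 hsV
    have hpos : 0 < (n:ℝ)^(p+1) := by positivity
    have : ENNReal.ofReal (1 / (n:ℝ)^p) = ENNReal.ofReal n / ENNReal.ofReal ((n:ℝ)^(p+1)) := by
      rw [← ENNReal.ofReal_div_of_pos hpos]; congr 1
      rw [pow_succ]; field_simp
    rw [this, ENNReal.le_div_iff_mul_le (Or.inl (ENNReal.ofReal_pos.2 hpos).ne') (Or.inl ENNReal.ofReal_ne_top), mul_comm]
    exact hle
  calc _ ≤ μ ({ω | τ * lam n ^ (1 - η) < 1 * zz P (fun j => q j ω) (fun j => X j ω) k n} ∪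
        {ω | τ * lam n ^ (1 - η) < (-1) * zz P (fun j => q j ω) (fun j => X j ω) k n}) := by
        apply measure_mono
        intro ω hω
        simp only [Set.mem_setOf_eq, Set.mem_union] at hω ⊢
        rcases lt_abs.1 hω with h | h
        · left; linarith
        · right; linarith
    _ ≤ ENNReal.ofReal (1 / (n:ℝ) ^ p) + ENNReal.ofReal (1 / (n:ℝ) ^ p) :=
        (measure_union_le _ _).trans (add_le_add (one 1 (by simp)) (one (-1) (by simp)))
    _ = _ := by
        rw [← ENNReal.ofReal_add (by positivity) (by positivity)]; congr 1; ring

end conc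
end Midas

namespace Midas

section unif
variable {Ω : Type*} [MeasurableSpace Ω] {μ : Measure Ω} [IsProbabilityMeasure μ]
variable {d : ℕ} {η : ℝ} {f q0 K : EE d → ℝ} {γ b lam : ℕ → ℝ}
variable {P : Par d η f q0 K γ b lam} {X : ℕ → Ω → EE d} {g q : ℕ → Ω → EE d → ℝ}

lemma bc {C : ℝ} (s : ℕ → Set Ω) (h : ∀ᶠ n : ℕ in atTop, μ (s n) ≤ ENNReal.ofReal (C / (n:ℝ)^2)) :
    ∀ᵐ ω ∂μ, ∀ᶠ n in atTop, ω ∉ s n := by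
  obtain ⟨n0, h0⟩ := eventually_atTop.1 h
  have hsum : Summable fun n : ℕ => C / (n:ℝ)^2 := by
    have := (Real.summable_one_div_nat_pow (p := 2)).2 (by norm_num)
    simpa [div_eq_mul_inv] using this.mul_left C
  have hs : ∑' n, μ (if n0 ≤ n then s n else ∅) ≠ ∞ := by
    have h2 : ∑' n : ℕ, ENNReal.ofReal (C / (n:ℝ)^2) ≠ ∞ := hsum.tsum_ofReal_ne_top
    refine ne_top_of_le_ne_top h2 (ENNReal.tsum_le_tsum fun n => ?_)
    split_ifs with hn
    · exact h0 n hn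
    · simp
  filter_upwards [ae_eventually_notMem hs] with ω hω
  filter_upwards [hω, eventually_ge_atTop n0] with n h1 h2
  rwa [if_pos h2] at h1

lemma zz_lip {q : ℕ → EE d → ℝ} {X : ℕ → EE d} (hq : ∀ n, P.N ≤ n → ∀ x, 0 ≤ q n x) (hqi : ∀ n, P.N ≤ n → Integrable (q n))
    (hq1 : ∀ n, P.N ≤ n → ∫ x, q n x = 1) (n : ℕ) (x y : EE d) :
    |zz P q X (kx K b x) n - zz P q X (kx K b y) n| ≤ 2 * ((2 / (P.c * lam n)) ^ η * (P.L / b n ^ (d+1) * ‖x - y‖)) := by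
  have hc := P.hc; have hl := P.lpos n; have hb := P.bpos n; have hL := P.L0; have hη := P.hη
  unfold zz
  rw [← rseq_sub]
  apply rseq_abs_le P (by positivity)
  intro k hk hkn
  have hT := TT_pos P k
  have hbk := P.bpos (k+1)
  have hlk := P.lpos (k+1)
  have b1 := P.banti (show k + 1 ≤ n by omega)
  have l1 := P.lanti (show k + 1 ≤ n by omega)
  set R := (2 / (P.c * lam n)) ^ η * (P.L / b n ^ (d+1) * ‖x - y‖) with hR
  have hTle : TT P k ^ η ≤ (2 / (P.c * lam n)) ^ η := by unfold TT; gcongr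
  have hpt : ∀ z, |tw f (q k) (TT P k) z ^ η * (kx K b x k z - kx K b y k z)| ≤ R := by
    intro z
    have h1 := kb_lip P hbk (x - z) (y - z)
    rw [sub_sub_sub_cancel_right] at h1
    rw [abs_mul, abs_of_nonneg (twp_nonneg P (hq k hk) hT z)]
    apply mul_le_mul ((twp_le P (hq k hk) hT z).trans hTle) (h1.trans ?_) (abs_nonneg _) (by positivity)
    gcongr
  have I1 := GGk_Int P (hq k hk) (hqi k hk) hT hbk x
  have I2 := GGk_Int P (hq k hk) (hqi k hk) hT hbk y
  have hG : |GG η f (q k) (TT P k) (kx K b x k) - GG η f (q k) (TT P k) (kx K b y k)| ≤ R := by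
    have e : GG η f (q k) (TT P k) (kx K b x k) - GG η f (q k) (TT P k) (kx K b y k) =
        ∫ z, tw f (q k) (TT P k) z ^ η * (kx K b x k z - kx K b y k z) * q k z := by
      unfold GG
      rw [← integral_sub]
      · congr 1; ext z; ring
      · exact I1
      · exact I2
    rw [e, ← Real.norm_eq_abs]
    calc _ ≤ ∫ z, R * q k z := by
          apply norm_integral_le_of_norm_le ((hqi k hk).const_mul R)
          refine Eventually.of_forall fun z => ?_
          rw [norm_mul, Real.norm_of_nonneg (hq k hk z)]
          exact mul_le_mul_of_nonneg_right (hpt z) (hq k hk z)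
      _ = R := by rw [integral_const_mul, hq1 k hk, mul_one]
  have h2 := hpt (X (k+1))
  rw [mul_sub] at h2
  rw [abs_le] at h2 hG ⊢
  constructor <;> linarith [h2.1, h2.2, hG.1, hG.2]

lemma ae_all_tau {p : ℝ → ℕ → Ω → Prop} (hmono : ∀ τ τ', τ ≤ τ' → ∀ n ω, p τ n ω → p τ' n ω)
    (h : ∀ τ > 0, ∀ᵐ ω ∂μ, ∀ᶠ n in atTop, p τ n ω) : ∀ᵐ ω ∂μ, ∀ τ > 0, ∀ᶠ n in atTop, p τ n ω := by
  have : ∀ᵐ ω ∂μ, ∀ m : ℕ, ∀ᶠ n in atTop, p (1 / ((m:ℝ) + 1)) n ω := by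
    rw [ae_all_iff]; intro m; exact h _ (by positivity)
  filter_upwards [this] with ω hω τ hτ
  obtain ⟨m, hm⟩ := exists_nat_one_div_lt hτ
  filter_upwards [hω m] with n hn
  exact hmono _ _ hm.le n ω hn

lemma z1_ae (A : Alg μ P X g q) : ∀ᵐ ω ∂μ, ∀ τ > 0, ∀ᶠ n : ℕ in atTop,
    |zz P (fun j => q j ω) (fun j => X j ω) k1 n| ≤ τ * lam n ^ (1 - η) := by
  apply ae_all_tau
  · intro τ τ' h n ω h1
    have := P.lpos n
    exact h1.trans (by gcongr)
  · intro τ hτ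
    have h1 := conc A one_pos 2 hτ
    have h2 := bc (μ := μ) (C := 2) (fun n => {ω | τ * lam n ^ (1 - η) < |zz P (fun j => q j ω) (fun j => X j ω) k1 n|}) (h1.mono fun n h => h _ (adm_k1 P))
    filter_upwards [h2] with ω h
    filter_upwards [h] with n hn
    exact not_lt.1 hn

noncomputable def gpt (d n : ℕ) (z : Fin d → ℤ) : EE d := WithLp.toLp 2 fun i => (z i : ℝ) / (n:ℝ)^6

noncomputable def gset (d n : ℕ) : Finset (Fin d → ℤ) := Fintype.piFinset fun _ => Finset.Icc (-(n:ℤ)^7) ((n:ℤ)^7)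

lemma gset_card (d n : ℕ) (hn : 1 ≤ n) : ((gset d n).card : ℝ) ≤ 3^d * (n:ℝ)^(7*d) := by
  have h1 : (gset d n).card = (2 * n^7 + 1)^d := by
    rw [gset, Fintype.card_piFinset]
    simp only [Int.card_Icc, Finset.prod_const, Finset.card_univ, Fintype.card_fin]
    congr 1
    have : ((n:ℤ)^7 + 1 - -(n:ℤ)^7) = ((2 * n^7 + 1 : ℕ) : ℤ) := by push_cast; ring
    rw [this, Int.toNat_natCast]
  rw [h1]
  have h2 : 2 * n^7 + 1 ≤ 3 * n^7 := by
    have : 1 ≤ n^7 := Nat.one_le_pow _ _ hn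
    omega
  have h3 : (2 * n^7 + 1)^d ≤ (3 * n^7)^d := Nat.pow_le_pow_left h2 d
  calc (((2 * n^7 + 1)^d : ℕ) : ℝ) ≤ (((3 * n^7)^d : ℕ) : ℝ) := by exact_mod_cast h3
    _ = _ := by push_cast; rw [mul_pow, pow_mul]

lemma grid (d n : ℕ) (hn : 1 ≤ n) (x : EE d) (hx : ‖x‖ ≤ n) : ∃ z ∈ gset d n, ‖x - gpt d n z‖ ≤ d / (n:ℝ)^6 := by
  have hn0 : (0:ℝ) < n := by exact_mod_cast hn
  refine ⟨fun i => ⌊x i * (n:ℝ)^6⌋, ?_, ?_⟩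
  · rw [gset, Fintype.mem_piFinset]
    intro i
    have h1 : |x i| ≤ n := (PiLp.norm_apply_le x i).trans hx
    rw [abs_le] at h1
    have h6 : 0 < (n:ℝ)^6 := by positivity
    rw [Finset.mem_Icc]
    constructor
    · apply Int.le_floor.2
      push_cast
      nlinarith [h1.1]
    · have : (⌊x i * (n:ℝ)^6⌋ : ℝ) ≤ (n:ℝ)^7 := (Int.floor_le _).trans (by nlinarith [h1.2])
      exact_mod_cast this
  · rw [EuclideanSpace.norm_eq]
    apply Real.sqrt_le_iff.2
    refine ⟨by positivity, ?_⟩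
    have : ∀ i : Fin d, ‖(x - gpt d n fun i => ⌊x i * (n:ℝ)^6⌋) i‖ ^ 2 ≤ (1 / (n:ℝ)^6)^2 := by
      intro i
      apply pow_le_pow_left₀ (norm_nonneg _)
      rw [Real.norm_eq_abs]
      have e : (x - gpt d n fun i => ⌊x i * (n:ℝ)^6⌋) i = (x i * (n:ℝ)^6 - ⌊x i * (n:ℝ)^6⌋) / (n:ℝ)^6 := by
        simp only [gpt, PiLp.sub_apply]
        field_simp
      have h6 : 0 < (n:ℝ)^6 := by positivity
      rw [e, abs_div, abs_of_pos h6]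
      have h1 := Int.floor_le (x i * (n:ℝ)^6)
      have h2 := Int.lt_floor_add_one (x i * (n:ℝ)^6)
      apply div_le_div_of_nonneg_right _ h6.le
      rw [abs_le]; constructor <;> linarith
    calc _ ≤ ∑ i : Fin d, (1 / (n:ℝ)^6)^2 := Finset.sum_le_sum fun i _ => this i
      _ = d * (1 / (n:ℝ)^6)^2 := by simp
      _ ≤ (d:ℝ)^2 * (1 / (n:ℝ)^6)^2 := by
        gcongr
        exact_mod_cast Nat.le_self_pow (by norm_num) d
      _ = _ := by ring

lemma lip_ev (P : Par d η f q0 K γ b lam) {τ : ℝ} (hτ : 0 < τ) :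
    ∀ᶠ n : ℕ in atTop, 2 * ((2 / (P.c * lam n)) ^ η * (P.L / b n ^ (d+1) * (d / (n:ℝ)^6))) ≤ τ * lam n ^ (1 - η) := by
  have hc := P.hc; have hη := P.hη; have hη1 := P.hη1; have hL := P.L0
  set C := 2 * ((1 + 2 / P.c) * (P.L * d)) with hC
  have hC0 : 0 ≤ C := by positivity
  filter_upwards [inv_ev P one_pos, eventually_ge_atTop P.N, eventually_ge_atTop 1,
    tendsto_natCast_atTop_atTop.eventually (eventually_ge_atTop (C / τ))] with n h1 hn hn1 h2
  have hl := P.lpos n; have hb := P.bpos n; have hl1 := P.lN n hn; have hb1 := P.bN n hn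
  have hn0 : (1:ℝ) ≤ n := by exact_mod_cast hn1
  have hbd : b n ^ d ≤ b n := by
    calc b n ^ d ≤ b n ^ 1 := pow_le_pow_of_le_one hb.le hb1 P.hd
      _ = _ := pow_one _
  rw [one_mul, div_le_iff₀ (by positivity)] at h1
  have hbd1 : b n ^ d ≤ 1 := pow_le_one₀ hb.le hb1
  have hlb : lam n * b n ^ d ≤ lam n := mul_le_of_le_one_right hl.le hbd1
  have hlb2 : lam n * b n ^ d ≤ b n := by
    calc lam n * b n ^ d ≤ 1 * b n ^ d := by gcongr; linarith
      _ ≤ _ := by linarith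
  have hinvb : 1 / b n ≤ n := by
    rw [div_le_iff₀ hb]; nlinarith
  have hinvl : 1 / n ≤ lam n := by
    rw [div_le_iff₀ (by linarith)]; nlinarith
  have hT : (2 / (P.c * lam n)) ^ η ≤ (1 + 2 / P.c) * (1 / lam n) := by
    have hp : 0 < 2 / P.c := by positivity
    calc (2 / (P.c * lam n)) ^ η ≤ ((1 + 2 / P.c) * (1 / lam n)) ^ η := by
          apply Real.rpow_le_rpow (by positivity) _ hη.le
          rw [← div_div, div_eq_mul_one_div (2 / P.c)]
          gcongr; linarith
      _ ≤ ((1 + 2 / P.c) * (1 / lam n)) ^ (1:ℝ) := by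
          apply Real.rpow_le_rpow_of_exponent_le _ hη1.le
          have : 1 ≤ 1 / lam n := by rw [le_div_iff₀ hl]; linarith
          nlinarith
      _ = _ := Real.rpow_one _
  calc 2 * ((2 / (P.c * lam n)) ^ η * (P.L / b n ^ (d+1) * (d / (n:ℝ)^6)))
      ≤ 2 * ((1 + 2 / P.c) * (1 / lam n) * (P.L / b n ^ (d+1) * (d / (n:ℝ)^6))) := by
        apply mul_le_mul_of_nonneg_left _ (by norm_num)
        exact mul_le_mul_of_nonneg_right hT (by positivity)
    _ = C * (1 / (lam n * b n ^ d) * (1 / b n)) / (n:ℝ)^6 := by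
        rw [hC, pow_succ]; field_simp
    _ ≤ C * (n * n) / (n:ℝ)^6 := by
        apply div_le_div_of_nonneg_right _ (by positivity)
        apply mul_le_mul_of_nonneg_left _ hC0
        apply mul_le_mul _ hinvb (by positivity) (by positivity)
        rw [div_le_iff₀ (by positivity)]; exact h1
    _ ≤ τ * (1 / n) := by
        rw [div_le_iff₀ hτ] at h2
        rw [div_le_iff₀ (by positivity)]
        have e : τ * (1 / n) * (n:ℝ)^6 = τ * n * (n * n) * n^2 := by field_simp
        rw [e]
        have : 1 ≤ (n:ℝ)^2 := one_le_pow₀ hn0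
        calc C * (n * n) ≤ (n * τ) * (n * n) := by gcongr
          _ = (τ * n * (n * n)) * 1 := by ring
          _ ≤ _ := by gcongr
    _ ≤ τ * lam n ^ (1 - η) := by
        gcongr
        exact hinvl.trans (lam_rpow_le P hn)

lemma zx_ae (A : Alg μ P X g q) : ∀ᵐ ω ∂μ, ∀ τ > 0, ∀ᶠ n : ℕ in atTop, ∀ x : EE d, ‖x‖ ≤ n →
    |zz P (fun j => q j ω) (fun j => X j ω) (kx K b x) n| ≤ τ * lam n ^ (1 - η) := by
  apply ae_all_tau
  · intro τ τ' h n ω h1 x hx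
    have := P.lpos n
    exact (h1 x hx).trans (by gcongr)
  · intro τ hτ
    have h1 := conc A (adm_kx P 0).Cpos (7*d+2) (half_pos hτ)
    have h2 := bc (μ := μ) (C := 2 * 3^d) (fun n => ⋃ z ∈ gset d n,
      {ω | τ / 2 * lam n ^ (1 - η) < |zz P (fun j => q j ω) (fun j => X j ω) (kx K b (gpt d n z)) n|}) (by
        filter_upwards [h1, eventually_ge_atTop 1] with n h hn
        have hn0 : (0:ℝ) < n := by exact_mod_cast hn
        calc _ ≤ ∑ z ∈ gset d n, ENNReal.ofReal (2 / (n:ℝ)^(7*d+2)) :=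
              (measure_biUnion_finset_le _ _).trans (Finset.sum_le_sum fun z _ => h _ (adm_kx P _))
          _ = ENNReal.ofReal ((gset d n).card * (2 / (n:ℝ)^(7*d+2))) := by
              rw [Finset.sum_const, nsmul_eq_mul, ENNReal.ofReal_mul (by positivity), ENNReal.ofReal_natCast]
          _ ≤ _ := by
              apply ENNReal.ofReal_le_ofReal
              calc _ ≤ 3^d * (n:ℝ)^(7*d) * (2 / (n:ℝ)^(7*d+2)) := by
                    apply mul_le_mul_of_nonneg_right (gset_card d n hn) (by positivity)
                _ = _ := by rw [pow_add]; field_simp)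
    have h3 : ∀ᵐ ω ∂μ, ∀ n, P.N ≤ n → ∀ x, 0 ≤ q n ω x := by
      rw [ae_all_iff]; intro n
      by_cases hn : P.N ≤ n
      · filter_upwards [q_nonneg A (P.N1.trans hn)] with ω h _ using h
      · exact Eventually.of_forall fun ω h => absurd h hn
    have h4 : ∀ᵐ ω ∂μ, ∀ n, ∫ x, q n ω x = 1 := by
      rw [ae_all_iff]; intro n; exact q_int A n
    filter_upwards [h2, h3, h4] with ω h h3 h4
    filter_upwards [h, lip_ev P (half_pos hτ), eventually_ge_atTop 1] with n hn hl hn1 x hx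
    obtain ⟨z, hz, hxz⟩ := grid d n hn1 x hx
    simp only [Set.mem_iUnion, not_exists, Set.mem_setOf_eq, not_lt] at hn
    have a1 := hn z hz
    have a2 := zz_lip (P := P) (q := fun j => q j ω) (X := fun j => X j ω) h3 (fun n hn => (q_props A (P.N1.trans hn) ω).2)
      (fun n _ => h4 n) n x (gpt d n z)
    have a3 : 2 * ((2 / (P.c * lam n)) ^ η * (P.L / b n ^ (d+1) * ‖x - gpt d n z‖)) ≤
        2 * ((2 / (P.c * lam n)) ^ η * (P.L / b n ^ (d+1) * (d / (n:ℝ)^6))) := by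
      have hc := P.hc; have := P.lpos n; have := P.bpos n; have hL := P.L0
      gcongr
    rw [abs_le] at a1 a2 ⊢
    constructor <;> linarith [a1.1, a1.2, a2.1, a2.2]

end unif
end Midas

namespace Midas

section forced
variable {Ω : Type*} [MeasurableSpace Ω] {μ : Measure Ω} [IsProbabilityMeasure μ]
variable {d : ℕ} {η : ℝ} {f q0 K : EE d → ℝ} {γ b lam : ℕ → ℝ}
variable {P : Par d η f q0 K γ b lam} {X : ℕ → Ω → EE d} {g q : ℕ → Ω → EE d → ℝ}

def WW (f : EE d → ℝ) (X : ℕ → Ω → EE d) (n k : ℕ) : Set Ω := {ω | ∀ j, n < j → j ≤ k → f (X j ω) = 0}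

def CC (f q0 : EE d → ℝ) (g : Ω → EE d → ℝ) (l : ℝ) (x : EE d) : Set Ω :=
  {ω | 0 < ∫ y, g ω y} ∩ {ω | 0 < volume {y | 0 < g ω y ∧ f y = 0}} ∩
    {ω | (1 - l) * (g ω x / ∫ y, g ω y) + l * q0 x < 0}

lemma gen_CC {S : Type*} [MeasurableSpace S] {f q0 : EE d → ℝ} {g : S → EE d → ℝ} (hf : Measurable f)
    (hg : Measurable (Function.uncurry g)) (l : ℝ) (x : EE d) : MeasurableSet (CC f q0 g l x) := by
  have h1 := gen_int hg
  have h2 : Measurable fun s => g s x := hg.of_uncurry_right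
  have h3 : MeasurableSet {z : S × EE d | 0 < g z.1 z.2 ∧ f z.2 = 0} :=
    (measurableSet_lt measurable_const hg).inter ((hf.comp measurable_snd) (measurableSet_singleton 0))
  have h4 : Measurable fun s => volume {y | 0 < g s y ∧ f y = 0} := measurable_measure_prodMk_left (ν := (volume : Measure (EE d))) h3
  exact ((measurableSet_lt measurable_const h1).inter (measurableSet_lt measurable_const h4)).inter
    (measurableSet_lt (((h2.div h1).const_mul _).add_const _) measurable_const)

lemma WW_succ (f : EE d → ℝ) (X : ℕ → Ω → EE d) {n k : ℕ} (h : n ≤ k) (ω : Ω) :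
    ω ∈ WW f X n (k+1) ↔ ω ∈ WW f X n k ∧ f (X (k+1) ω) = 0 := by
  constructor
  · intro hω
    exact ⟨fun j h1 h2 => hω j h1 (by omega), hω (k+1) (by omega) le_rfl⟩
  · rintro ⟨h1, h2⟩ j hj1 hj2
    rcases Nat.lt_or_ge k j with hh | hh
    · have : j = k + 1 := by omega
      rw [this]; exact h2
    · exact h1 j hj1 hh

lemma WW_meas (hf : Measurable f) (n k : ℕ) (hnk : n ≤ k) : MeasurableSet[natFilt X k] (WW f X n k) := by
  induction k, hnk using Nat.le_induction with
  | base =>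
    have : WW f X n n = Set.univ := by
      ext ω; simp only [WW, Set.mem_setOf_eq, Set.mem_univ, iff_true]
      intro j h1 h2; omega
    rw [this]; exact MeasurableSet.univ
  | succ k hk ih =>
    have : WW f X n (k+1) = WW f X n k ∩ (fun ω => f (X (k+1) ω)) ⁻¹' {0} := by
      ext ω; rw [WW_succ f X hk]; rfl
    rw [this]
    exact MeasurableSet.inter (nf_mono (Nat.le_succ k) _ ih) ((hf.comp (nf_X k)) (measurableSet_singleton 0))

lemma WW_g (A : Alg μ P X g q) {n k : ℕ} (hn : P.N ≤ n) (hnk : n ≤ k) {ω : Ω} (hω : ω ∈ WW f X n k) :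
    ∃ ρ > 0, ∀ x, g k ω x = ρ * g n ω x := by
  induction k, hnk using Nat.le_induction with
  | base => exact ⟨1, one_pos, fun x => (one_mul _).symm⟩
  | succ k hk ih =>
    rw [WW_succ f X hk] at hω
    obtain ⟨ρ, hρ, h⟩ := ih hω.1
    have := P.g1 (hn.trans hk)
    refine ⟨(1 - γ (k+1)) * ρ, mul_pos (by linarith) hρ, fun x => ?_⟩
    rw [A.grec, hω.2, h, zero_div, Real.zero_rpow P.hη.ne']; ring

lemma WW_q (A : Alg μ P X g q) {n k : ℕ} (hn : P.N ≤ n) (hnk : n ≤ k) {ω : Ω} (hω : ω ∈ WW f X n k) (x : EE d) :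
    q k ω x = (1 - lam k) * (g n ω x / ∫ y, g n ω y) + lam k * q0 x := by
  obtain ⟨ρ, hρ, h⟩ := WW_g A hn hnk hω
  have hN := P.N1
  obtain ⟨m, rfl⟩ : ∃ m, k = m + 1 := ⟨k - 1, by omega⟩
  rw [A.qrec]
  simp only [h, integral_const_mul]
  rw [mul_div_mul_left _ _ hρ.ne']

lemma gen_phi {S : Type*} [MeasurableSpace S] {C : Set S} {f : EE d → ℝ} (hC : MeasurableSet C) (hf : Measurable f) :
    Measurable (Function.uncurry fun s y => (C ×ˢ (f ⁻¹' {0})).indicator (fun _ : S × EE d => (1:ℝ≥0∞)) (s, y)) :=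
  measurable_const.indicator (hC.prod (hf (measurableSet_singleton 0)))

lemma CC_null (A : Alg μ P X g q) {n n' : ℕ} (hn : P.N ≤ n) (hnn : n ≤ n') (x : EE d) :
    μ (CC f q0 (g n) (lam n') x) = 0 := by
  set C := CC f q0 (g n) (lam n') x with hC
  have hfm := P.fcont.measurable
  have hCm : MeasurableSet[natFilt X n] C := @gen_CC d Ω (natFilt X n) f q0 (g n) hfm (gq_meas A n).1 _ _
  have key : ∀ k, n ≤ k → k ≤ n' → μ (C ∩ WW f X n k) = 0 := by
    intro k hk hkn
    induction hkn using Nat.decreasingInduction with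
    | self =>
      have := q_nonneg A (P.N1.trans (hn.trans hnn))
      refine measure_mono_null ?_ (ae_iff.1 this)
      rintro ω ⟨h1, h2⟩
      simp only [Set.mem_setOf_eq, not_forall, not_le]
      refine ⟨x, ?_⟩
      rw [WW_q A hn hnn h2]
      exact h1.2
    | of_succ k hkn ih =>
      have ih := ih (by omega)
      have hCk : MeasurableSet[natFilt X k] (C ∩ WW f X n k) :=
        MeasurableSet.inter (nf_mono hk _ hCm) (WW_meas hfm n k hk)
      have hCk' : MeasurableSet (C ∩ WW f X n k) := nf_le A k _ hCk
      have hk1 : 1 ≤ k := P.N1.trans (hn.trans hk)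
      have hd := alg_disint A hk1 (fun ω y => ((C ∩ WW f X n k) ×ˢ (f ⁻¹' {0})).indicator (fun _ : Ω × EE d => (1:ℝ≥0∞)) (ω, y))
        (@gen_phi d Ω (natFilt X k) _ f hCk hfm)
      have hz : ∫⁻ ω, ((C ∩ WW f X n k) ×ˢ (f ⁻¹' {0})).indicator (fun _ : Ω × EE d => (1:ℝ≥0∞)) (ω, X (k+1) ω) ∂μ = 0 := by
        rw [lintegral_eq_zero_iff' ?_]
        · rw [← compl_mem_ae_iff] at ih
          filter_upwards [ih] with ω hω
          simp only [Pi.zero_apply, Set.indicator_apply_eq_zero, one_ne_zero, imp_false]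
          rintro ⟨⟨a1, a2⟩, a3⟩
          exact hω ⟨a1, (WW_succ f X hk ω).2 ⟨a2, a3⟩⟩
        · have hm : MeasurableSet ((C ∩ WW f X n k) ×ˢ (f ⁻¹' {0})) := hCk'.prod (hfm (measurableSet_singleton 0))
          have : Measurable fun ω => (ω, X (k+1) ω) := measurable_id.prodMk (A.hX (k+1))
          exact ((measurable_const.indicator hm).comp this).aemeasurable
      rw [hz] at hd
      have hpm : Measurable (Function.uncurry fun ω y => ((C ∩ WW f X n k) ×ˢ (f ⁻¹' {0})).indicator (fun _ : Ω × EE d => (1:ℝ≥0∞)) (ω, y) * ENNReal.ofReal (q k ω y)) :=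
        (gen_phi hCk' hfm).mul (A.hqm k).ennreal_ofReal
      have hz2 := (lintegral_eq_zero_iff (Measurable.lintegral_prod_right hpm)).1 hd.symm
      rw [← compl_mem_ae_iff]
      filter_upwards [hz2] with ω hω hmem
      obtain ⟨⟨⟨c1, c2⟩, c3⟩, c4⟩ := hmem
      have hmem : ω ∈ C ∩ WW f X n k := ⟨⟨⟨c1, c2⟩, c3⟩, c4⟩
      rw [Pi.zero_apply, lintegral_eq_zero_iff (hpm.of_uncurry_left)] at hω
      have hnull : volume {y | 0 < g n ω y ∧ f y = 0} = 0 := by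
        refine measure_mono_null ?_ (ae_iff.1 hω)
        rintro y ⟨y1, y2⟩
        simp only [Set.mem_setOf_eq, Pi.zero_apply]
        have : (ω, y) ∈ (C ∩ WW f X n k) ×ˢ (f ⁻¹' {0}) := ⟨hmem, y2⟩
        rw [Set.indicator_of_mem this, one_mul]
        have hqp : 0 < q k ω y := by
          rw [WW_q A hn hk c4]
          have h1 := P.lN k (hn.trans hk)
          have h2 := (P.lpos k)
          have h3 := P.q00 y
          have h4 : 0 < g n ω y / ∫ y, g n ω y := div_pos y1 c1
          have : 0 < (1 - lam k) * (g n ω y / ∫ y, g n ω y) := mul_pos (by linarith) h4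
          positivity
        exact (ENNReal.ofReal_pos.2 hqp).ne'
      have c2' : 0 < volume {y | 0 < g n ω y ∧ f y = 0} := c2
      rw [hnull] at c2'
      exact lt_irrefl _ c2'
  have h := key n le_rfl hnn
  refine measure_mono_null ?_ h
  intro ω hω
  exact ⟨hω, fun j h1 h2 => by omega⟩

lemma forced_ae (A : Alg μ P X g q) {n : ℕ} (hn : P.N ≤ n) : ∀ᵐ ω ∂μ, 0 < ∫ y, g n ω y →
    0 < volume {x | 0 < g n ω x ∧ f x = 0} → ∀ x, 0 ≤ g n ω x := by
  have h1 : ∀ᵐ ω ∂μ, ∀ (m i : ℕ), ω ∉ CC f q0 (g n) (lam (n + m)) (TopologicalSpace.denseSeq (EE d) i) := by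
    rw [ae_all_iff]; intro m
    rw [ae_all_iff]; intro i
    have := CC_null A hn (Nat.le_add_right n m) (TopologicalSpace.denseSeq (EE d) i)
    rwa [← compl_mem_ae_iff] at this
  filter_upwards [h1] with ω hω hm hv
  have hd : ∀ i, 0 ≤ g n ω (TopologicalSpace.denseSeq (EE d) i) := by
    intro i
    set x := TopologicalSpace.denseSeq (EE d) i
    have h2 : ∀ m, 0 ≤ (1 - lam (n + m)) * (g n ω x / ∫ y, g n ω y) + lam (n + m) * q0 x := by
      intro m
      by_contra h
      exact hω m i ⟨⟨hm, hv⟩, not_le.1 h⟩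
    have hl : Tendsto (fun m => lam (n + m)) atTop (𝓝 0) := P.l0.comp (tendsto_add_atTop_nat n |>.congr fun m => by omega)
    have h3 : Tendsto (fun m => (1 - lam (n + m)) * (g n ω x / ∫ y, g n ω y) + lam (n + m) * q0 x) atTop
        (𝓝 ((1 - 0) * (g n ω x / ∫ y, g n ω y) + 0 * q0 x)) :=
      ((tendsto_const_nhds.sub hl).mul_const _).add (hl.mul_const _)
    have h4 := ge_of_tendsto' h3 h2
    simp only [sub_zero, one_mul, zero_mul, add_zero] at h4
    by_contra h
    exact absurd (div_neg_of_neg_of_pos (not_le.1 h) hm) (not_lt.2 h4)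
  have hcl : IsClosed {x | 0 ≤ g n ω x} := isClosed_le continuous_const (g_props A n ω).1
  have hden := TopologicalSpace.denseRange_denseSeq (EE d)
  intro x
  have : closure (Set.range (TopologicalSpace.denseSeq (EE d))) ⊆ {x | 0 ≤ g n ω x} :=
    closure_minimal (by rintro _ ⟨i, rfl⟩; exact hd i) hcl
  exact this (hden x)

lemma path_ae (A : Alg μ P X g q) : ∀ᵐ ω ∂μ, Path P (fun j => X j ω) (fun j => g j ω) (fun j => q j ω) := by
  have h3 : ∀ᵐ ω ∂μ, ∀ n, P.N ≤ n → ∀ x, 0 ≤ q n ω x := by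
    rw [ae_all_iff]; intro n
    by_cases hn : P.N ≤ n
    · filter_upwards [q_nonneg A (P.N1.trans hn)] with ω h _ using h
    · exact Eventually.of_forall fun ω h => absurd h hn
  have h4 : ∀ᵐ ω ∂μ, ∀ n, ∫ x, q n ω x = 1 := by
    rw [ae_all_iff]; intro n; exact q_int A n
  have h5 : ∀ᵐ ω ∂μ, ∀ n, P.N ≤ n → 0 < ∫ y, g n ω y →
    0 < volume {x | 0 < g n ω x ∧ f x = 0} → ∀ x, 0 ≤ g n ω x := by
    rw [ae_all_iff]; intro n
    by_cases hn : P.N ≤ n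
    · filter_upwards [forced_ae A hn] with ω h _ using h
    · exact Eventually.of_forall fun ω h => absurd h hn
  filter_upwards [h3, h4, h5, z1_ae A, zx_ae A] with ω a3 a4 a5 a1 ax
  have hN := P.N1
  refine ⟨a3, fun n hn => (q_props A (hN.trans hn) ω).2, fun n _ => a4 n, fun n _ x => A.grec n ω x, ?_,
    fun n => (g_props A n ω).2.2, fun n => (g_props A n ω).2.1, fun n => (g_props A n ω).1, ax, a1, a5⟩
  intro n hn x
  obtain ⟨m, rfl⟩ : ∃ m, n = m + 1 := ⟨n - 1, by omega⟩
  exact A.qrec m ω x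

end forced
end Midas

theorem midas_g_limsup_ball
    {Ω : Type*} [MeasurableSpace Ω] (μ : Measure Ω) [IsProbabilityMeasure μ]
    {d : ℕ} (hd : 1 ≤ d) {η : ℝ} (hη : 0 < η) (hη1 : η < 1)
    (f q0 K : EuclideanSpace ℝ (Fin d) → ℝ)
    (γ b lam : ℕ → ℝ)
    (X : ℕ → Ω → EuclideanSpace ℝ (Fin d))
    (w : ℕ → Ω → ℝ)
    (g q : ℕ → Ω → EuclideanSpace ℝ (Fin d) → ℝ)
    (hf0 : ∀ x, 0 ≤ f x) (hfint1 : (∫ x, f x) = 1)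
    (hK0 : ∀ x, 0 ≤ K x) (hKint1 : (∫ x, K x) = 1)
    (hγpos : ∀ n, 0 < γ n) (hbpos : ∀ n, 0 < b n) (hlampos : ∀ n, 0 < lam n)
    (hX : ∀ n, Measurable (X n))
    (hqmeas : ∀ n, Measurable (Function.uncurry (q n)))
    (hg0 : ∀ (ω : Ω) x, g 0 ω x = 0)
    (hw : ∀ n (ω : Ω), w (n+1) ω = f (X (n+1) ω) / q n ω (X (n+1) ω))
    (hgrec : ∀ n (ω : Ω) x, g (n+1) ω x
      = (1 - γ (n+1)) * g n ω x
        + γ (n+1) * w (n+1) ω ^ η * kb K (b (n+1)) (x - X (n+1) ω))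
    (hqrec : ∀ n (ω : Ω) x, q (n+1) ω x
      = (1 - lam (n+1)) * (g (n+1) ω x / (∫ y, g (n+1) ω y)) + lam (n+1) * q0 x)
    (hpolicy : ∀ n (φ : EuclideanSpace ℝ (Fin d) → ℝ), Continuous φ →
      (∃ C, ∀ x, |φ x| ≤ C) →
      (μ[fun ω => φ (X (n+1) ω) | natFilt X n]) =ᵐ[μ] (fun ω => ∫ y, φ y * q n ω y))
    (hadapt : ∀ n x, Measurable[natFilt X n] fun ω => q n ω x)
    (hfbdd : ∃ C, ∀ x, f x ≤ C) (hfcont : Continuous f)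
    (hfInt : Integrable f)
    (hq00 : ∀ x, 0 ≤ q0 x) (hq0bdd : ∃ C, ∀ x, q0 x ≤ C) (hq0cont : Continuous q0)
    (hq0Int : Integrable q0) (hq0int1 : (∫ x, q0 x) = 1)
    (hftail : ∃ r > (0:ℝ), ∃ Cf > (0:ℝ), ∀ t : ℝ, 0 < t →
      (∫ x in {x : EuclideanSpace ℝ (Fin d) | t < ‖x‖}, f x) ≤ Cf * t ^ (-r))
    (hfq0 : ∃ c > (0:ℝ), ∀ x, c * f x ≤ q0 x)
    (hKbdd : ∃ C, ∀ x, K x ≤ C) (hKlip : ∃ L : NNReal, LipschitzWith L K)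
    (hKpos : 0 < K 0)
    (hKtail : ∃ rK > (0:ℝ), ∃ CK > (0:ℝ), ∀ x,
      (1 + ‖x‖ ^ ((d : ℝ) + rK)) * K x ≤ CK)
    (hγanti : Antitone γ) (hγ0 : Tendsto γ atTop (nhds 0))
    (hbanti : Antitone b) (hb0 : Tendsto b atTop (nhds 0))
    (hlamanti : Antitone lam) (hlam0 : Tendsto lam atTop (nhds 0))
    (hγrate : ∃ Cγ > (0:ℝ), ∃ nγ : ℕ, 1 ≤ nγ ∧
      (∀ n : ℕ, 1 ≤ n → ((n : ℝ))⁻¹ ≤ Cγ * γ n) ∧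
      (∀ n : ℕ, nγ ≤ n → γ n - γ (n+1) ≤ γ n * γ (n+1)))
    (hγsq : Summable fun n => γ n ^ 2)
    (hrate1 : 1/2 ≤ η → Tendsto
      (fun n : ℕ => (n : ℝ) * γ n ^ 2 * Real.log n / (lam n * b n ^ d))
      atTop (nhds 0))
    (hrate2 : η < 1/2 → Tendsto
      (fun n : ℕ => (n : ℝ) * γ n ^ 2 * Real.log n
        / (lam n ^ (2 * (1 - η)) * b n ^ (2 * (d : ℝ) * (1 - η))))
      atTop (nhds 0))
    :
    ∀ᵐ ω ∂μ, ∀ ε : ℝ, 0 < ε → ∀ x : EuclideanSpace ℝ (Fin d),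
      Filter.limsup (fun n : ℕ => ⨆ y ∈ Metric.ball x ε, g n ω y) atTop
        ≤ ⨆ y ∈ Metric.ball x ε, f y := by
  have A : Nonempty (Midas.Par d η f q0 K γ b lam) :=
    Midas.exists_par hd hη hη1 f q0 K γ b lam hf0 hfint1 hK0 hKint1 hγpos hbpos hlampos hfbdd hfcont hfInt hq00
      hq0bdd hq0cont hq0Int hq0int1 hfq0 hKbdd hKlip hKpos hKtail hγanti hγ0 hbanti hb0 hlamanti hlam0 hγrate hrate1 hrate2
  obtain ⟨P⟩ := A
  have A : Midas.Alg μ P X g q := by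
    refine ⟨hX, hqmeas, hg0, ?_, hqrec, hpolicy, hadapt⟩
    intro n ω x
    rw [hgrec, hw]
  filter_upwards [Midas.path_ae A] with ω H ε hε x
  exact Midas.path_main H ε hε x
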